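/- Let d ∈ {1,2,3} and ν > 0. Let h₀ : ℝ^d → ℝ be 2π-periodic in each coordinate with ∫_{[−π,π]^d} h₀ dx = 0 and Σ_{k ∈ ℤ^d} (1+|k|^d)|ĥ₀(k)|² < ∞ (i.e. h₀ ∈ H^{d/2}(𝕋^d) with mean zero). Then there exists h : [0,∞) × ℝ^d → ℝ, 2π-periodic in each spatial coordinate, such that h(t,·) is C^∞ for every t > 0, h is a classical solution of ∂_t h = ∇·((|∇h|² − 1)∇h) − νΔ²h on (0,∞) × ℝ^d, ‖h(t,·) − h₀‖_{H^{d/2}} → 0 as t → 0⁺, and ∫_{[−π,π]^d} h(t,·) dx = 0 for every t > 0. -/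

import Mathlib

open Real MeasureTheory Set Filter
open scoped ENNReal

noncomputable section

/-- `ℝ^d` with the Euclidean norm. -/
abbrev Ed (d : ℕ) := EuclideanSpace ℝ (Fin d)

/-- The fundamental domain `[-π,π]^d` of the torus `𝕋^d = ℝ^d/2πℤ^d`. -/
def Qd (d : ℕ) : Set (Ed d) := {x | ∀ i, |x i| ≤ Real.pi}

/-- The partial derivative `∂_{x_j} f` of `f : ℝ^d → ℝ`. -/
noncomputable def pd {d : ℕ} (f : Ed d → ℝ) (j : Fin d) (x : Ed d) : ℝ :=
  fderiv ℝ f x (EuclideanSpace.single j 1)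

/-- `|∇f|²`, the squared Euclidean norm of the spatial gradient. -/
noncomputable def gradSq {d : ℕ} (f : Ed d → ℝ) (x : Ed d) : ℝ := ∑ j, pd f j x ^ 2

/-- `|∇f|`, the Euclidean norm of the spatial gradient. -/
noncomputable def gradNorm {d : ℕ} (f : Ed d → ℝ) (x : Ed d) : ℝ := Real.sqrt (gradSq f x)

/-- The Laplacian `Δf = Σ_j ∂_{x_j}∂_{x_j} f`. -/
noncomputable def lapl {d : ℕ} (f : Ed d → ℝ) (x : Ed d) : ℝ := ∑ j, pd (pd f j) j x

/-- The slope-selection divergence term `∇·((|∇f|²−1)∇f) = Σ_j ∂_{x_j}((|∇f|²−1)∂_{x_j}f)`. -/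
noncomputable def slopeDiv {d : ℕ} (f : Ed d → ℝ) (x : Ed d) : ℝ :=
  ∑ j, pd (fun y => (gradSq f y - 1) * pd f j y) j x

/-- `f` is `2π`-periodic in each coordinate. -/
def PeriodicSpace {d : ℕ} (f : Ed d → ℝ) : Prop :=
  ∀ (j : Fin d) (x : Ed d), f (x + (2 * Real.pi) • EuclideanSpace.single j 1) = f x

/-- The Fourier coefficient `f̂(k) = ∫_{[−π,π]^d} f(x) e^{−i k·x} dx` of a
`2π`-periodic function `f : ℝ^d → ℝ`, for `k ∈ ℤ^d`. -/
noncomputable def fcoefR {d : ℕ} (f : Ed d → ℝ) (k : Fin d → ℤ) : ℂ :=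
  ∫ x in Qd d, (f x : ℂ) * Complex.exp (-(Complex.I * ∑ i, (k i : ℂ) * (x i : ℂ)))

/-- The Sobolev weight `1 + |k|^d` (with `|k|` the Euclidean norm of `k ∈ ℤ^d`). -/
noncomputable def sobWeight {d : ℕ} (k : Fin d → ℤ) : ℝ :=
  1 + Real.sqrt (∑ i, ((k i : ℝ)) ^ 2) ^ d

/-- The `H^{d/2}(𝕋^d)` norm `(Σ_k (1+|k|^d)|f̂(k)|²)^{1/2}`. -/
noncomputable def hnormR {d : ℕ} (f : Ed d → ℝ) : ℝ :=
  Real.sqrt (∑' k : Fin d → ℤ, sobWeight k * ‖fcoefR f k‖ ^ 2)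

/-!
In Fourier variables the equation is the `L²` gradient flow of the convex functional
`ν/2 ‖Δh‖² + ¼ ‖∇h‖₄⁴` perturbed by the quadratic term `-½ ‖∇h‖²`. We truncate it to finite
symmetric sets of nonzero frequencies (which keeps `h` real with mean zero). Convexity gives, with
constants independent of the truncation, global existence, Lipschitz dependence on the data in `L²`
and a bound on the energy at every positive time. Since `d ≤ 3`, the energy controls
`∑ |k|^{1/4} |ĥ(k)|`, so the cubic term costs only one derivative in the Duhamel formula, which
bootstraps to uniform bounds on all derivatives; weighted with powers of `|k|^{1/4}` these are the
estimates that let an ultrafilter limit of the truncations be differentiated term by term.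

For the initial datum, `H^{d/2}` is scaling critical. At the dyadic frequency `λ` one compares a
solution with the solution `z` whose datum is cut off at `λ`: the difference is bounded in `L²` by
the tail of the datum, and the energy of `z` bounds its own high frequencies by the same tail. Both
bounds being proportional to a weighted tail of the datum, they may be summed over `λ`, which makes
the `H^{d/2}` mass at high frequencies small uniformly in time and in the truncation.
-/

open scoped ComplexConjugate

/-- Frequencies `k ∈ ℤ^d`, the dual lattice of the torus `𝕋^d`. -/
abbrev Freq (d : ℕ) := Fin d → ℤ

/-- The frequency `k ∈ ℤ^d` as a vector of Euclidean space. -/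
def freqVec {d : ℕ} (k : Freq d) : Ed d := WithLp.toLp 2 fun i => (k i : ℝ)

/-- The Euclidean length `|k|` of a frequency; the norm of `Fin d → ℤ` is the sup norm. -/
def freqNorm {d : ℕ} (k : Freq d) : ℝ := ‖freqVec k‖

/-- The Euclidean scalar product `k · l` of two frequencies. -/
def freqDot {d : ℕ} (k l : Freq d) : ℝ := ∑ i, (k i : ℝ) * (l i : ℝ)

/-- `|k|^{1/4}`. All the fractional powers of `|k|` that occur below are natural powers of it:
the summability exponent `7/2` is `14 / 4`, and `|k|^d` is its power `4 * d`. -/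
def quarterNorm {d : ℕ} (k : Freq d) : ℝ := √√(freqNorm k)

/-- The Fourier mode `x ↦ e^{i k·x}`. -/
def fourierMode {d : ℕ} (k : Freq d) (x : Ed d) : ℂ :=
  Complex.exp (Complex.I * ∑ i, (k i : ℂ) * (x i : ℂ))

/-! ### Frequencies -/

section Frequencies

variable {d : ℕ}

lemma freqVec_add (k l : Freq d) : freqVec (k + l) = freqVec k + freqVec l := by
  ext i; simp [freqVec]

lemma freqVec_neg (k : Freq d) : freqVec (-k) = -freqVec k := by
  ext i; simp [freqVec]

lemma freqNorm_nonneg (k : Freq d) : 0 ≤ freqNorm k := norm_nonneg _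

lemma freqNorm_add_le (k l : Freq d) : freqNorm (k + l) ≤ freqNorm k + freqNorm l := by
  simpa only [freqNorm, freqVec_add] using norm_add_le (freqVec k) (freqVec l)

lemma freqNorm_neg (k : Freq d) : freqNorm (-k) = freqNorm k := by
  rw [freqNorm, freqVec_neg, norm_neg, freqNorm]

lemma freqNorm_sub_le (k l : Freq d) : freqNorm (k - l) ≤ freqNorm k + freqNorm l := by
  simpa only [sub_eq_add_neg, freqNorm_neg] using freqNorm_add_le k (-l)

lemma freqNorm_eq_sqrt (k : Freq d) : freqNorm k = √(∑ i, (k i : ℝ) ^ 2) := by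
  simp [freqNorm, freqVec, EuclideanSpace.norm_eq]

lemma freqNorm_sq (k : Freq d) : freqNorm k ^ 2 = ∑ i, (k i : ℝ) ^ 2 := by
  rw [freqNorm_eq_sqrt, Real.sq_sqrt (by positivity)]

lemma freqNorm_zero : freqNorm (0 : Freq d) = 0 := by
  simp [freqNorm_eq_sqrt]

lemma abs_le_freqNorm (k : Freq d) (i : Fin d) : |(k i : ℝ)| ≤ freqNorm k := by
  simpa [freqVec, freqNorm] using PiLp.norm_apply_le (freqVec k) i

lemma one_le_freqNorm {k : Freq d} (hk : k ≠ 0) : 1 ≤ freqNorm k := by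
  obtain ⟨i, hi⟩ := Function.ne_iff.mp hk
  have hki : (1 : ℝ) ≤ |(k i : ℝ)| := mod_cast Int.one_le_abs hi
  exact hki.trans (abs_le_freqNorm k i)

lemma freqNorm_le_sq (k : Freq d) : freqNorm k ≤ freqNorm k ^ 2 := by
  rcases eq_or_ne k 0 with rfl | hk
  · simp [freqNorm_zero]
  · exact le_self_pow₀ (one_le_freqNorm hk) two_ne_zero

lemma sobWeight_eq (k : Freq d) : sobWeight k = 1 + freqNorm k ^ d := by
  rw [freqNorm_eq_sqrt]; rfl

lemma freqDot_neg_neg (k l : Freq d) : freqDot (-k) (-l) = freqDot k l := by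
  simp [freqDot]

lemma ofReal_freqDot (k l : Freq d) : ((freqDot k l : ℝ) : ℂ) = ∑ i, (k i : ℂ) * (l i : ℂ) := by
  simp [freqDot]

lemma abs_freqDot_le (k l : Freq d) : |freqDot k l| ≤ freqNorm k * freqNorm l := by
  have hinner : inner ℝ (freqVec k) (freqVec l) = freqDot k l := by
    simp [freqVec, freqDot, PiLp.inner_apply, mul_comm]
  simpa only [← hinner, freqNorm] using abs_real_inner_le_norm (freqVec k) (freqVec l)

lemma quarterNorm_nonneg (k : Freq d) : 0 ≤ quarterNorm k := Real.sqrt_nonneg _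

lemma quarterNorm_pow_four (k : Freq d) : quarterNorm k ^ 4 = freqNorm k := by
  rw [quarterNorm, show 4 = 2 * 2 from rfl, pow_mul, Real.sq_sqrt (Real.sqrt_nonneg _),
    Real.sq_sqrt (freqNorm_nonneg k)]

lemma freqNorm_pow (k : Freq d) (n : ℕ) : freqNorm k ^ n = quarterNorm k ^ (4 * n) := by
  rw [pow_mul, quarterNorm_pow_four]

lemma quarterNorm_zero : quarterNorm (0 : Freq d) = 0 := by
  simp [quarterNorm, freqNorm_zero]

lemma one_le_quarterNorm {k : Freq d} (hk : k ≠ 0) : 1 ≤ quarterNorm k :=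
  Real.one_le_sqrt.mpr (Real.one_le_sqrt.mpr (one_le_freqNorm hk))

lemma quarterNorm_pos {k : Freq d} (hk : k ≠ 0) : 0 < quarterNorm k :=
  zero_lt_one.trans_le (one_le_quarterNorm hk)

lemma quarterNorm_le_of_freqNorm_le {k : Freq d} {r : ℝ} (hr : 0 ≤ r) (h : freqNorm k ≤ r ^ 4) :
    quarterNorm k ≤ r := by
  rw [← quarterNorm_pow_four] at h
  exact le_of_pow_le_pow_left₀ four_ne_zero hr h

end Frequencies

/-! ### Fourier modes -/

section FourierModes

variable {d : ℕ}

lemma norm_fourierMode (k : Freq d) (x : Ed d) : ‖fourierMode k x‖ = 1 := by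
  have hreal : (∑ i, (k i : ℂ) * (x i : ℂ)) = ((∑ i, (k i : ℝ) * x i : ℝ) : ℂ) := by
    push_cast; rfl
  rw [fourierMode, hreal, mul_comm, Complex.norm_exp_ofReal_mul_I]

lemma fourierMode_zero (x : Ed d) : fourierMode (0 : Freq d) x = 1 := by simp [fourierMode]

lemma fourierMode_add (k l : Freq d) (x : Ed d) :
    fourierMode (k + l) x = fourierMode k x * fourierMode l x := by
  simp only [fourierMode, ← Complex.exp_add, ← mul_add, ← Finset.sum_add_distrib, Pi.add_apply,
    Int.cast_add, add_mul]

lemma fourierMode_neg (k : Freq d) (x : Ed d) : fourierMode (-k) x = conj (fourierMode k x) := by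
  simp [fourierMode, ← Complex.exp_conj]

lemma fourierMode_sub (k l : Freq d) (x : Ed d) :
    fourierMode (k - l) x = fourierMode k x * conj (fourierMode l x) := by
  rw [sub_eq_add_neg, fourierMode_add, fourierMode_neg]

lemma continuous_fourierMode (k : Freq d) : Continuous (fourierMode k) := by
  unfold fourierMode; fun_prop

lemma fourierMode_add_two_pi (k : Freq d) (j : Fin d) (x : Ed d) :
    fourierMode k (x + (2 * π) • EuclideanSpace.single j 1) = fourierMode k x := by
  have hphase : Complex.I * ∑ i, (k i : ℂ) *
      (((x + (2 * π) • EuclideanSpace.single j (1 : ℝ) : Ed d) i : ℝ) : ℂ) =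
      Complex.I * ∑ i, (k i : ℂ) * (x i : ℂ) + k j * (2 * π * Complex.I) := by
    have hterm (i : Fin d) :
        (((x + (2 * π) • EuclideanSpace.single j (1 : ℝ) : Ed d) i : ℝ) : ℂ) =
          x i + if i = j then 2 * (π : ℂ) else 0 := by
      by_cases hij : i = j <;> simp [hij]
    simp only [hterm, mul_add, Finset.sum_add_distrib, mul_ite, mul_zero, Finset.sum_ite_eq',
      Finset.mem_univ, if_true]
    ring
  rw [fourierMode, hphase, Complex.exp_add, Complex.exp_int_mul_two_pi_mul_I, mul_one, fourierMode]

lemma Qd_eq_preimage :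
    Qd d = WithLp.ofLp ⁻¹' (Set.univ.pi fun _ => Set.Icc (-π) π) := by
  ext x; simp [Qd, abs_le, Pi.le_def, forall_and]

lemma isCompact_Qd : IsCompact (Qd d) := by
  rw [Qd_eq_preimage]
  exact (EuclideanSpace.equiv (Fin d) ℝ).toHomeomorph.isCompact_preimage.mpr
    (isCompact_univ_pi fun _ => isCompact_Icc)

lemma integrableOn_Qd_of_continuous {E : Type*} [NormedAddCommGroup E] {f : Ed d → E}
    (hf : Continuous f) : IntegrableOn f (Qd d) :=
  hf.continuousOn.integrableOn_compact isCompact_Qd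

lemma integral_exp_int_mul (n : ℤ) :
    ∫ x in Set.Icc (-π) π, Complex.exp (Complex.I * ((n : ℂ) * (x : ℂ))) =
      if n = 0 then ((2 * π : ℝ) : ℂ) else 0 := by
  rw [integral_Icc_eq_integral_Ioc, ← intervalIntegral.integral_of_le (by linarith [Real.pi_pos])]
  split_ifs with h
  · subst h; simp; ring
  · have hc : Complex.I * (n : ℂ) ≠ 0 := by simp [h]
    simp only [← mul_assoc]
    rw [integral_exp_mul_complex hc, div_eq_zero_iff, sub_eq_zero,
      Complex.exp_eq_exp_iff_exists_int]
    exact .inl ⟨n, by push_cast; ring⟩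

lemma integral_fourierMode (k : Freq d) :
    ∫ x in Qd d, fourierMode k x = if k = 0 then (((2 * π) ^ d : ℝ) : ℂ) else 0 := by
  have hprod : ∫ x in Qd d, fourierMode k x =
      ∫ y in (Set.univ.pi fun _ : Fin d => Set.Icc (-π) π),
        ∏ i, Complex.exp (Complex.I * ((k i : ℂ) * (y i : ℂ))) := by
    rw [Qd_eq_preimage, ← (PiLp.volume_preserving_ofLp (Fin d)).setIntegral_preimage_emb
      (MeasurableEquiv.toLp 2 _).symm.measurableEmbedding]
    simp only [fourierMode, Finset.mul_sum, Complex.exp_sum]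
  rw [hprod, volume_pi, Measure.restrict_pi_pi, integral_fintype_prod_eq_prod
    (fun i (y : ℝ) => Complex.exp (Complex.I * ((k i : ℂ) * (y : ℂ))))]
  simp_rw [integral_exp_int_mul]
  split_ifs with h
  · subst h; simp
  · obtain ⟨i, hi⟩ := Function.ne_iff.mp h
    exact Finset.prod_eq_zero (Finset.mem_univ i) (by simpa using hi)

end FourierModes

/-! ### Dyadic shells and lattice sums -/

/-- The index `i` of the shell `2^i ≤ |k|^{1/4} < 2^{i+1}` containing the frequency `k ≠ 0`. -/
def dyadicShell {d : ℕ} (k : Freq d) : ℕ := Nat.log 2 ⌊quarterNorm k⌋₊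

/-- A bound for `∑_{k ≠ 0} |k|^{-7/2}` over `ℤ^d`, valid in all dimensions `d ≤ 3`. -/
def latticeSumBound : ℝ := 2 * 48 ^ 3

section LatticeSums

variable {d : ℕ}

lemma latticeSumBound_pos : 0 < latticeSumBound := by unfold latticeSumBound; positivity

lemma two_pow_dyadicShell_le {k : Freq d} (hk : k ≠ 0) :
    (2 : ℝ) ^ dyadicShell k ≤ quarterNorm k := by
  have hfloor : ⌊quarterNorm k⌋₊ ≠ 0 := (Nat.floor_pos.mpr (one_le_quarterNorm hk)).ne'
  calc (2 : ℝ) ^ dyadicShell k = ((2 ^ dyadicShell k : ℕ) : ℝ) := by push_cast; rfl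
    _ ≤ ⌊quarterNorm k⌋₊ := mod_cast Nat.pow_log_le_self 2 hfloor
    _ ≤ quarterNorm k := Nat.floor_le (quarterNorm_nonneg k)

lemma quarterNorm_lt_two_pow (k : Freq d) : quarterNorm k < 2 ^ (dyadicShell k + 1) := by
  have hlog := Nat.lt_pow_succ_log_self one_lt_two ⌊quarterNorm k⌋₊
  calc quarterNorm k < ⌊quarterNorm k⌋₊ + 1 := Nat.lt_floor_add_one _
    _ ≤ ((2 ^ (dyadicShell k + 1) : ℕ) : ℝ) := mod_cast hlog
    _ = _ := by push_cast; rfl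

lemma abs_apply_le_of_dyadicShell_eq {k : Freq d} {i : ℕ} (hk : dyadicShell k = i) (j : Fin d) :
    |k j| ≤ 16 ^ (i + 1) := by
  have hnorm : freqNorm k ≤ (16 : ℝ) ^ (i + 1) :=
    calc freqNorm k = quarterNorm k ^ 4 := (quarterNorm_pow_four k).symm
      _ ≤ (2 ^ (i + 1)) ^ 4 := by
          gcongr
          · exact quarterNorm_nonneg k
          · exact hk ▸ (quarterNorm_lt_two_pow k).le
      _ = 16 ^ (i + 1) := by rw [← pow_mul, mul_comm, pow_mul]; norm_num
  exact_mod_cast (abs_le_freqNorm k j).trans hnorm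

lemma card_filter_dyadicShell_le (F : Finset (Freq d)) (i : ℕ) :
    ((F.filter fun k => dyadicShell k = i).card : ℝ) ≤ 48 ^ d * 2 ^ (4 * d * i) := by
  have hsub : (F.filter fun k => dyadicShell k = i) ⊆
      Fintype.piFinset fun _ : Fin d => Finset.Icc (-(16 ^ (i + 1) : ℤ)) (16 ^ (i + 1)) := by
    intro k hk
    rw [Fintype.mem_piFinset]
    exact fun j => Finset.mem_Icc.mpr
      (abs_le.mp (abs_apply_le_of_dyadicShell_eq (Finset.mem_filter.mp hk).2 j))
  have hwidth : ((16 : ℤ) ^ (i + 1) + 1 - -16 ^ (i + 1)).toNat = 2 * 16 ^ (i + 1) + 1 := by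
    rw [show (16 : ℤ) ^ (i + 1) + 1 - -16 ^ (i + 1) = ((2 * 16 ^ (i + 1) + 1 : ℕ) : ℤ) by
      push_cast; ring, Int.toNat_natCast]
  have hcard := Finset.card_le_card hsub
  simp only [Fintype.card_piFinset, Int.card_Icc, Finset.prod_const, Finset.card_univ,
    Fintype.card_fin, hwidth] at hcard
  have hone : (1 : ℝ) ≤ 16 ^ i := one_le_pow₀ (by norm_num)
  calc ((F.filter fun k => dyadicShell k = i).card : ℝ)
      ≤ ((2 * 16 ^ (i + 1) + 1 : ℕ) : ℝ) ^ d := mod_cast hcard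
    _ ≤ (48 * 16 ^ i) ^ d := by
        gcongr
        push_cast
        rw [pow_succ]
        linarith
    _ = 48 ^ d * 2 ^ (4 * d * i) := by
        rw [mul_pow, ← pow_mul, show (16 : ℝ) = 2 ^ 4 by norm_num, ← pow_mul]
        ring_nf

lemma sum_le_sum_dyadicShell (F : Finset (Freq d)) (f : Freq d → ℝ) (A : ℕ → ℝ) (I : ℕ)
    (hA : ∀ i, 0 ≤ A i) (hI : ∀ k ∈ F, dyadicShell k < I)
    (hf : ∀ k ∈ F, f k ≤ A (dyadicShell k)) :
    ∑ k ∈ F, f k ≤ ∑ i ∈ Finset.range I, 48 ^ d * 2 ^ (4 * d * i) * A i := by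
  rw [← Finset.sum_fiberwise_of_maps_to (g := dyadicShell) (t := Finset.range I)
    fun k hk => Finset.mem_range.mpr (hI k hk)]
  refine Finset.sum_le_sum fun i _ => ?_
  calc ∑ k ∈ F with dyadicShell k = i, f k
      ≤ ∑ k ∈ F with dyadicShell k = i, A i := Finset.sum_le_sum fun k hk => by
        rw [Finset.mem_filter] at hk
        exact hk.2 ▸ hf k hk.1
    _ = ((F.filter fun k => dyadicShell k = i).card : ℝ) * A i := by simp
    _ ≤ _ := mul_le_mul_of_nonneg_right (card_filter_dyadicShell_le F i) (hA i)

lemma sum_inv_quarterNorm_pow_le (hd : d ≤ 3) (F : Finset (Freq d)) (h0 : (0 : Freq d) ∉ F) :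
    ∑ k ∈ F, (quarterNorm k ^ 14)⁻¹ ≤ latticeSumBound := by
  have hterm (I : ℕ) : ∀ i ∈ Finset.range I,
      (48 : ℝ) ^ d * 2 ^ (4 * d * i) * ((2 ^ i) ^ 14)⁻¹ ≤ 48 ^ 3 * (1 / 2) ^ i := by
    intro i _
    rw [mul_assoc]
    gcongr
    · norm_num
    · rw [← div_eq_mul_inv, div_le_iff₀ (by positivity), one_div, inv_pow,
        inv_mul_eq_div, le_div_iff₀ (by positivity), ← pow_add, ← pow_mul]
      exact pow_le_pow_right₀ one_le_two (by nlinarith)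
  calc ∑ k ∈ F, (quarterNorm k ^ 14)⁻¹
      ≤ ∑ i ∈ Finset.range (F.sup dyadicShell + 1),
          (48 : ℝ) ^ d * 2 ^ (4 * d * i) * ((2 ^ i) ^ 14)⁻¹ := by
        refine sum_le_sum_dyadicShell F _ _ _ (fun i => by positivity)
          (fun k hk => Nat.lt_succ_of_le (Finset.le_sup hk)) fun k hk => ?_
        gcongr
        exact two_pow_dyadicShell_le fun h => h0 (h ▸ hk)
    _ ≤ ∑ i ∈ Finset.range (F.sup dyadicShell + 1), (48 : ℝ) ^ 3 * (1 / 2) ^ i :=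
        Finset.sum_le_sum (hterm _)
    _ ≤ latticeSumBound := by
        rw [← Finset.mul_sum, mul_comm, latticeSumBound]
        gcongr
        exact sum_geometric_two_le _

lemma sum_pow_le_two_mul_pow {q : ℝ} (hq : 2 ≤ q) (j : ℕ) :
    ∑ i ∈ Finset.range (j + 1), q ^ i ≤ 2 * q ^ j := by
  induction j with
  | zero => simp
  | succ n ih =>
    rw [Finset.sum_range_succ, pow_succ]
    nlinarith [pow_nonneg (zero_le_two.trans hq) n]

lemma sum_quarterNorm_pow_div_le (hd : d ≤ 3) (F : Finset (Freq d)) (h0 : (0 : Freq d) ∉ F) (j : ℕ)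
    (hF : ∀ k ∈ F, quarterNorm k < 2 ^ (j + 1)) :
    ∑ k ∈ F, quarterNorm k ^ 14 / quarterNorm k ^ (8 * d) ≤
      latticeSumBound * 2 ^ 14 * 2 ^ (j * (14 - 4 * d)) := by
  have hne : ∀ k ∈ F, k ≠ 0 := fun k hk h => h0 (h ▸ hk)
  have hshell : ∀ k ∈ F, dyadicShell k < j + 1 := fun k hk =>
    (pow_lt_pow_iff_right₀ one_lt_two).mp
      ((two_pow_dyadicShell_le (hne k hk)).trans_lt (hF k hk))
  have hterm : ∀ i ∈ Finset.range (j + 1),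
      (48 : ℝ) ^ d * 2 ^ (4 * d * i) * ((2 ^ (i + 1)) ^ 14 / (2 ^ i) ^ (8 * d)) ≤
        48 ^ 3 * 2 ^ 14 * (2 ^ (14 - 4 * d)) ^ i := by
    intro i _
    have hpow : (2 : ℝ) ^ (4 * d * i) * ((2 ^ (i + 1)) ^ 14 / (2 ^ i) ^ (8 * d)) =
        2 ^ 14 * (2 ^ (14 - 4 * d)) ^ i := by
      rw [← pow_mul, ← pow_mul, ← pow_mul, mul_div_assoc', div_eq_iff (by positivity), ← pow_add,
        ← pow_add, ← pow_add]
      congr 1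
      interval_cases d <;> omega
    rw [mul_assoc, hpow, mul_assoc]
    gcongr
    norm_num
  have hratio : (2 : ℝ) ≤ 2 ^ (14 - 4 * d) := le_self_pow₀ one_le_two (by omega)
  calc ∑ k ∈ F, quarterNorm k ^ 14 / quarterNorm k ^ (8 * d)
      ≤ ∑ i ∈ Finset.range (j + 1),
          (48 : ℝ) ^ d * 2 ^ (4 * d * i) * ((2 ^ (i + 1)) ^ 14 / (2 ^ i) ^ (8 * d)) := by
        refine sum_le_sum_dyadicShell F _ (fun i => (2 ^ (i + 1)) ^ 14 / (2 ^ i) ^ (8 * d)) _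
          (fun i => by positivity) hshell fun k hk => ?_
        have hlow := two_pow_dyadicShell_le (hne k hk)
        have hupp := (quarterNorm_lt_two_pow k).le
        have := quarterNorm_nonneg k
        gcongr
    _ ≤ ∑ i ∈ Finset.range (j + 1), 48 ^ 3 * 2 ^ 14 * ((2 : ℝ) ^ (14 - 4 * d)) ^ i :=
        Finset.sum_le_sum hterm
    _ ≤ 48 ^ 3 * 2 ^ 14 * (2 * (2 ^ (14 - 4 * d)) ^ j) := by
        rw [← Finset.mul_sum]
        gcongr
        exact sum_pow_le_two_mul_pow hratio j
    _ = latticeSumBound * 2 ^ 14 * 2 ^ (j * (14 - 4 * d)) := by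
        rw [← pow_mul, mul_comm j, latticeSumBound]; ring

end LatticeSums

/-! ### The cubic term and the quartic energy -/

/-- The Fourier coefficient at `k` of `-∇·(|∇u|²∇u)` for `u = ∑_{a ∈ S} c a e^{i a·x}`. -/
def cubicTerm {d : ℕ} (S : Finset (Freq d)) (c : Freq d → ℂ) (k : Freq d) : ℂ :=
  ∑ a ∈ S, ∑ b ∈ S, ∑ m ∈ S, if a - b + m = k then
    ((freqDot a b * freqDot m k : ℝ) : ℂ) * c a * conj (c b) * c m else 0

/-- The partial derivative `∂_j u` of `u = ∑_{a ∈ S} c a e^{i a·x}`. -/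
def trigGrad {d : ℕ} (S : Finset (Freq d)) (c : Freq d → ℂ) (j : Fin d) (x : Ed d) : ℂ :=
  ∑ a ∈ S, Complex.I * (a j : ℂ) * c a * fourierMode a x

/-- `|∇u|²` for `u = ∑_{a ∈ S} c a e^{i a·x}`. -/
def trigGradSq {d : ℕ} (S : Finset (Freq d)) (c : Freq d → ℂ) (x : Ed d) : ℝ :=
  ∑ j, ‖trigGrad S c j x‖ ^ 2

/-- The Hermitian product `∇u · conj ∇v` of the gradients of two trigonometric polynomials. -/
def gradDot {d : ℕ} (S : Finset (Freq d)) (c z : Freq d → ℂ) (x : Ed d) : ℂ :=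
  ∑ j, trigGrad S c j x * conj (trigGrad S z j x)

/-- The real `ℓ²` pairing of two families of coefficients over `S`. -/
def rePairing {d : ℕ} (S : Finset (Freq d)) (u v : Freq d → ℂ) : ℝ :=
  (∑ k ∈ S, u k * conj (v k)).re

/-- The mean over the torus of `¼|∇u|⁴` for `u = ∑_{a ∈ S} c a e^{i a·x}`, see
`quarticEnergy_eq_integral`; it is written through its gradient `cubicTerm`. -/
def quarticEnergy {d : ℕ} (S : Finset (Freq d)) (c : Freq d → ℂ) : ℝ :=
  (1 / 4) * rePairing S (cubicTerm S c) c

/-- The squared `ℓ²` norm of the coefficients over `S`. -/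
def l2Sq {d : ℕ} (S : Finset (Freq d)) (c : Freq d → ℂ) : ℝ := ∑ k ∈ S, ‖c k‖ ^ 2

/-- The squared homogeneous Sobolev norm of order `p / 2` of the coefficients over `S`. -/
def weightedSq {d : ℕ} (S : Finset (Freq d)) (p : ℕ) (c : Freq d → ℂ) : ℝ :=
  ∑ k ∈ S, freqNorm k ^ p * ‖c k‖ ^ 2

section QuarticEnergy

variable {d : ℕ} (S : Finset (Freq d))

lemma continuous_trigGrad (c : Freq d → ℂ) (j : Fin d) : Continuous (trigGrad S c j) :=
  continuous_finsetSum _ fun a _ => continuous_const.mul (continuous_fourierMode a)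

lemma continuous_trigGradSq (c : Freq d → ℂ) : Continuous (trigGradSq S c) :=
  continuous_finsetSum _ fun j _ => (continuous_trigGrad S c j).norm.pow 2

lemma continuous_gradDot (c z : Freq d → ℂ) : Continuous (gradDot S c z) :=
  continuous_finsetSum _ fun j _ =>
    (continuous_trigGrad S c j).mul (Complex.continuous_conj.comp (continuous_trigGrad S z j))

lemma trigGradSq_nonneg (c : Freq d → ℂ) (x : Ed d) : 0 ≤ trigGradSq S c x := by
  unfold trigGradSq; positivity

lemma trigGrad_sub (c z : Freq d → ℂ) (j : Fin d) (x : Ed d) :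
    trigGrad S (fun k => c k - z k) j x = trigGrad S c j x - trigGrad S z j x := by
  simp only [trigGrad, mul_sub, sub_mul, Finset.sum_sub_distrib]

lemma gradDot_eq_sum (c z : Freq d → ℂ) (x : Ed d) :
    gradDot S c z x =
      ∑ m ∈ S, ∑ k ∈ S, (freqDot m k : ℂ) * c m * conj (z k) * fourierMode (m - k) x := by
  simp_rw [gradDot, trigGrad, map_sum, Finset.sum_mul_sum]
  rw [Finset.sum_comm]
  refine Finset.sum_congr rfl fun m _ => ?_
  rw [Finset.sum_comm]
  refine Finset.sum_congr rfl fun k _ => ?_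
  rw [ofReal_freqDot, fourierMode_sub, Finset.sum_mul, Finset.sum_mul, Finset.sum_mul]
  refine Finset.sum_congr rfl fun j _ => ?_
  simp only [map_mul, Complex.conj_I, map_intCast]
  linear_combination (-(m j : ℂ) * c m * fourierMode m x * (k j : ℂ) * conj (z k) *
    conj (fourierMode k x)) * Complex.I_sq

lemma gradDot_self (c : Freq d → ℂ) (x : Ed d) : gradDot S c c x = (trigGradSq S c x : ℂ) := by
  simp [gradDot, trigGradSq, Complex.mul_conj, Complex.normSq_eq_norm_sq]

lemma trigGradSq_mul_gradDot_eq_sum (c z : Freq d → ℂ) (x : Ed d) :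
    (trigGradSq S c x : ℂ) * gradDot S c z x =
      ∑ k ∈ S, ∑ a ∈ S, ∑ b ∈ S, ∑ m ∈ S, (((freqDot a b * freqDot m k : ℝ) : ℂ) *
        c a * conj (c b) * c m * conj (z k)) * fourierMode (a - b + m - k) x := by
  have hterm (a b m k : Freq d) : (freqDot a b : ℂ) * c a * conj (c b) * fourierMode (a - b) x *
      ((freqDot m k : ℂ) * c m * conj (z k) * fourierMode (m - k) x) =
      (((freqDot a b * freqDot m k : ℝ) : ℂ) * c a * conj (c b) * c m * conj (z k)) *
        fourierMode (a - b + m - k) x := by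
    rw [show a - b + m - k = (a - b) + (m - k) by abel, fourierMode_add]
    push_cast; ring
  rw [← gradDot_self, gradDot_eq_sum, gradDot_eq_sum,
    Finset.sum_comm (f := fun m k => (freqDot m k : ℂ) * c m * conj (z k) * fourierMode (m - k) x),
    Finset.mul_sum]
  simp_rw [Finset.sum_mul, Finset.mul_sum, hterm]

lemma integral_trigGradSq_mul_gradDot (c z : Freq d → ℂ) :
    ∫ x in Qd d, (trigGradSq S c x : ℂ) * gradDot S c z x =
      (((2 * π) ^ d : ℝ) : ℂ) * ∑ k ∈ S, cubicTerm S c k * conj (z k) := by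
  have hinteg (C : ℂ) (k : Freq d) : IntegrableOn (fun x => C * fourierMode k x) (Qd d) :=
    integrableOn_Qd_of_continuous (continuous_const.mul (continuous_fourierMode k))
  simp_rw [trigGradSq_mul_gradDot_eq_sum, cubicTerm, Finset.sum_mul, Finset.mul_sum]
  rw [integral_finsetSum _ fun k _ => integrable_finsetSum _ fun a _ => integrable_finsetSum _
    fun b _ => integrable_finsetSum _ fun m _ => hinteg _ _]
  refine Finset.sum_congr rfl fun k _ => ?_
  rw [integral_finsetSum _ fun a _ => integrable_finsetSum _ fun b _ => integrable_finsetSum _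
    fun m _ => hinteg _ _]
  refine Finset.sum_congr rfl fun a _ => ?_
  rw [integral_finsetSum _ fun b _ => integrable_finsetSum _ fun m _ => hinteg _ _]
  refine Finset.sum_congr rfl fun b _ => ?_
  rw [integral_finsetSum _ fun m _ => hinteg _ _]
  refine Finset.sum_congr rfl fun m _ => ?_
  rw [integral_const_mul, integral_fourierMode]
  simp only [sub_eq_zero]
  split_ifs <;> ring

lemma integral_trigGradSq_mul_re_gradDot (c z : Freq d → ℂ) :
    ∫ x in Qd d, trigGradSq S c x * (gradDot S c z x).re =
      (2 * π) ^ d * rePairing S (cubicTerm S c) z := by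
  have hinteg : IntegrableOn (fun x => (trigGradSq S c x : ℂ) * gradDot S c z x) (Qd d) :=
    integrableOn_Qd_of_continuous
      ((Complex.continuous_ofReal.comp (continuous_trigGradSq S c)).mul (continuous_gradDot S c z))
  have hre := integral_re hinteg
  simp only [RCLike.re_eq_complex_re, Complex.re_ofReal_mul] at hre
  rw [hre, integral_trigGradSq_mul_gradDot, Complex.re_ofReal_mul, rePairing]

lemma quarticEnergy_eq_integral (c : Freq d → ℂ) :
    quarticEnergy S c = (1 / 4) * ((2 * π) ^ d)⁻¹ * ∫ x in Qd d, trigGradSq S c x ^ 2 := by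
  have hsq : ∫ x in Qd d, trigGradSq S c x ^ 2 = (2 * π) ^ d * rePairing S (cubicTerm S c) c := by
    simp_rw [← integral_trigGradSq_mul_re_gradDot, gradDot_self, Complex.ofReal_re, sq]
  rw [hsq, quarticEnergy]
  field_simp

lemma quarticEnergy_nonneg (c : Freq d → ℂ) : 0 ≤ quarticEnergy S c := by
  rw [quarticEnergy_eq_integral]
  have : 0 ≤ ∫ x in Qd d, trigGradSq S c x ^ 2 := integral_nonneg fun x => sq_nonneg _
  positivity

lemma re_mul_conj_sub_le (p q : ℂ) : (p * conj (q - p)).re ≤ (‖q‖ ^ 2 - ‖p‖ ^ 2) / 2 := by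
  simp only [← Complex.normSq_eq_norm_sq, Complex.normSq_apply, Complex.mul_re, Complex.conj_re,
    Complex.conj_im, Complex.sub_re, Complex.sub_im]
  nlinarith [sq_nonneg (p.re - q.re), sq_nonneg (p.im - q.im)]

lemma re_gradDot_sub_le (a b : Freq d → ℂ) (x : Ed d) :
    (gradDot S a (fun k => b k - a k) x).re ≤ (trigGradSq S b x - trigGradSq S a x) / 2 := by
  rw [gradDot, Complex.re_sum, trigGradSq, trigGradSq, ← Finset.sum_sub_distrib, Finset.sum_div]
  refine Finset.sum_le_sum fun j _ => ?_
  rw [trigGrad_sub]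
  exact re_mul_conj_sub_le _ _

lemma quarticEnergy_add_rePairing_le (a b : Freq d → ℂ) :
    quarticEnergy S a + rePairing S (cubicTerm S a) (fun k => b k - a k) ≤ quarticEnergy S b := by
  have hpairing : rePairing S (cubicTerm S a) (fun k => b k - a k) = ((2 * π) ^ d)⁻¹ *
      ∫ x in Qd d, trigGradSq S a x * (gradDot S a (fun k => b k - a k) x).re := by
    rw [integral_trigGradSq_mul_re_gradDot]; field_simp
  have hinteg (c : Freq d → ℂ) : IntegrableOn (fun x => trigGradSq S c x ^ 2) (Qd d) :=
    integrableOn_Qd_of_continuous ((continuous_trigGradSq S c).pow 2)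
  have hinteg_dot : IntegrableOn
      (fun x => trigGradSq S a x * (gradDot S a (fun k => b k - a k) x).re) (Qd d) :=
    integrableOn_Qd_of_continuous
      ((continuous_trigGradSq S a).mul (Complex.continuous_re.comp (continuous_gradDot S _ _)))
  have hmono : ∫ x in Qd d, ((1 / 4) * trigGradSq S a x ^ 2 +
      trigGradSq S a x * (gradDot S a (fun k => b k - a k) x).re) ≤
      ∫ x in Qd d, (1 / 4) * trigGradSq S b x ^ 2 := by
    refine integral_mono (((hinteg a).const_mul _).add hinteg_dot) ((hinteg b).const_mul _)
      fun x => ?_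
    have := mul_le_mul_of_nonneg_left (re_gradDot_sub_le S a b x) (trigGradSq_nonneg S a x)
    dsimp only
    nlinarith [sq_nonneg (trigGradSq S a x - trigGradSq S b x)]
  rw [integral_add ((hinteg a).const_mul _) hinteg_dot, integral_const_mul,
    integral_const_mul] at hmono
  rw [quarticEnergy_eq_integral S a, quarticEnergy_eq_integral S b, hpairing]
  have := mul_le_mul_of_nonneg_left hmono (a := ((2 * π) ^ d)⁻¹) (by positivity)
  linarith

lemma integral_Qd_one : ∫ _ in Qd d, (1 : ℝ) = (2 * π) ^ d := by
  have hone := integral_fourierMode (d := d) 0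
  simp only [fourierMode_zero, if_true] at hone
  have hcast := integral_ofReal (f := fun _ : Ed d => (1 : ℝ)) (𝕜 := ℂ)
    (μ := volume.restrict (Qd d))
  simp only [RCLike.ofReal_one, hone] at hcast
  exact Complex.ofReal_injective hcast.symm

lemma trigGrad_single {k : Freq d} (hk : k ∈ S) (j : Fin d) (x : Ed d) :
    trigGrad S (Pi.single k 1) j x = Complex.I * (k j : ℂ) * fourierMode k x := by
  rw [trigGrad, Finset.sum_eq_single_of_mem k hk fun a _ hak => by simp [hak]]
  simp

lemma norm_gradDot_single_le (c : Freq d → ℂ) {k : Freq d} (hk : k ∈ S) (x : Ed d) :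
    ‖gradDot S c (Pi.single k 1) x‖ ≤ √(trigGradSq S c x) * freqNorm k := by
  have hnorm (j : Fin d) : ‖trigGrad S c j x * conj (trigGrad S (Pi.single k 1) j x)‖ =
      ‖trigGrad S c j x‖ * |(k j : ℝ)| := by
    simp [trigGrad_single S hk, norm_fourierMode]
  refine (norm_sum_le _ _).trans ?_
  simp_rw [hnorm]
  simpa [freqNorm_eq_sqrt, trigGradSq] using Real.sum_mul_le_sqrt_mul_sqrt Finset.univ
    (fun j => ‖trigGrad S c j x‖) (fun j => |(k j : ℝ)|)

lemma norm_trigGradSq_mul_gradDot_single_le (c : Freq d → ℂ) {k : Freq d} (hk : k ∈ S)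
    (x : Ed d) : ‖(trigGradSq S c x : ℂ) * gradDot S c (Pi.single k 1) x‖ ≤
      freqNorm k * (1 + trigGradSq S c x ^ 2) := by
  have hsq_nonneg := trigGradSq_nonneg S c x
  have hnorm_nonneg := freqNorm_nonneg k
  have hsqrt : √(trigGradSq S c x) ^ 2 = trigGradSq S c x := Real.sq_sqrt hsq_nonneg
  rw [norm_mul, Complex.norm_real, Real.norm_of_nonneg hsq_nonneg]
  calc trigGradSq S c x * ‖gradDot S c (Pi.single k 1) x‖
      ≤ trigGradSq S c x * (√(trigGradSq S c x) * freqNorm k) := by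
        gcongr
        exact norm_gradDot_single_le S c hk x
    _ = freqNorm k * √(trigGradSq S c x) ^ 3 := by
        linear_combination -(√(trigGradSq S c x) * freqNorm k) * hsqrt
    _ ≤ freqNorm k * (1 + √(trigGradSq S c x) ^ 4) := by
        gcongr
        nlinarith [sq_nonneg (√(trigGradSq S c x) ^ 2 - √(trigGradSq S c x)),
          sq_nonneg (√(trigGradSq S c x) - 1), sq_nonneg (√(trigGradSq S c x) ^ 2 - 1)]
    _ = freqNorm k * (1 + trigGradSq S c x ^ 2) := by
        rw [show √(trigGradSq S c x) ^ 4 = (√(trigGradSq S c x) ^ 2) ^ 2 by ring, hsqrt]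

lemma norm_cubicTerm_le_quarticEnergy (c : Freq d → ℂ) {k : Freq d} (hk : k ∈ S) :
    ‖cubicTerm S c k‖ ≤ freqNorm k * (1 + 4 * quarticEnergy S c) := by
  have htest : ∑ l ∈ S, cubicTerm S c l * conj ((Pi.single k 1 : Freq d → ℂ) l) =
      cubicTerm S c k := by
    rw [Finset.sum_eq_single_of_mem k hk fun l _ hlk => by simp [hlk]]
    simp
  have hcont := continuous_trigGradSq S c
  have hbound := norm_integral_le_of_norm_le
    (integrableOn_Qd_of_continuous (f := fun x => freqNorm k * (1 + trigGradSq S c x ^ 2))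
      (by fun_prop))
    (Eventually.of_forall (norm_trigGradSq_mul_gradDot_single_le S c hk))
  rw [integral_trigGradSq_mul_gradDot, htest, norm_mul, Complex.norm_real,
    Real.norm_of_nonneg (by positivity), integral_const_mul,
    integral_add (integrableOn_Qd_of_continuous continuous_const)
      (integrableOn_Qd_of_continuous (f := fun x => trigGradSq S c x ^ 2) (hcont.pow 2)),
    integral_Qd_one] at hbound
  refine le_of_mul_le_mul_left (hbound.trans_eq ?_) (show (0 : ℝ) < (2 * π) ^ d by positivity)
  rw [quarticEnergy_eq_integral]
  field_simp

lemma norm_cubicTerm_le_sum (c : Freq d → ℂ) (k : Freq d) :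
    ‖cubicTerm S c k‖ ≤ ∑ a ∈ S, ∑ b ∈ S, ∑ m ∈ S, if a - b + m = k then
      (freqNorm a * ‖c a‖) * (freqNorm b * ‖c b‖) * (freqNorm m * ‖c m‖) * freqNorm k else 0 := by
  refine (norm_sum_le _ _).trans (Finset.sum_le_sum fun a _ => ?_)
  refine (norm_sum_le _ _).trans (Finset.sum_le_sum fun b _ => ?_)
  refine (norm_sum_le _ _).trans (Finset.sum_le_sum fun m _ => ?_)
  split_ifs
  · simp only [norm_mul, Complex.norm_real, Real.norm_eq_abs, RCLike.norm_conj]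
    calc |freqDot a b| * |freqDot m k| * ‖c a‖ * ‖c b‖ * ‖c m‖
        ≤ (freqNorm a * freqNorm b) * (freqNorm m * freqNorm k) * ‖c a‖ * ‖c b‖ * ‖c m‖ := by
          have := freqNorm_nonneg a
          have := freqNorm_nonneg b
          gcongr <;> exact abs_freqDot_le _ _
      _ = _ := by ring
  · simp

end QuarticEnergy

section Resonances

lemma sum_ite_eq_le {ι : Type*} [DecidableEq ι] (S : Finset ι) {f : ι → ℝ} (hf : ∀ k, 0 ≤ f k)
    (l : ι) :
    (∑ k ∈ S, if l = k then f k else 0) ≤ f l := by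
  rw [Finset.sum_ite_eq]
  split_ifs
  exacts [le_rfl, hf l]

lemma le_add_div_two_of_sq_le_mul {s p q : ℝ} (hp : 0 ≤ p) (hq : 0 ≤ q) (h : s ^ 2 ≤ p * q) :
    s ≤ (p + q) / 2 :=
  (le_abs_self s).trans (abs_le_of_sq_le_sq (by nlinarith [sq_nonneg (p - q)]) (by positivity))

lemma mul_mul_mul_le_of_sq_le {ι : Type*} {S : Finset ι} {u α γ : ι → ℝ}
    (hα : ∀ k ∈ S, 0 ≤ α k) (hγ : ∀ k ∈ S, 0 ≤ γ k)
    (h : ∀ k ∈ S, u k ^ 2 ≤ α k * γ k) {a m b k : ι} (ha : a ∈ S) (hm : m ∈ S) (hb : b ∈ S)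
    (hk : k ∈ S) :
    u a * u m * (u b * u k) ≤ (α a * α m * (γ b * γ k) + α b * α k * (γ a * γ m)) / 2 := by
  have := hα _ ha; have := hα _ hm; have := hα _ hb; have := hα _ hk
  have := hγ _ ha; have := hγ _ hm; have := hγ _ hb; have := hγ _ hk
  refine le_add_div_two_of_sq_le_mul (by positivity) (by positivity) ?_
  calc (u a * u m * (u b * u k)) ^ 2 = (u a ^ 2 * u m ^ 2) * (u b ^ 2 * u k ^ 2) := by ring
    _ ≤ ((α a * γ a) * (α m * γ m)) * ((α b * γ b) * (α k * γ k)) := by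
        gcongr <;> exact h _ ‹_›
    _ = _ := by ring

variable {G : Type*} [AddCommGroup G] [DecidableEq G] {S : Finset G}

lemma sum_ite_add_eq_mul_le (S : Finset G) (γ : G → ℝ) (l : G) :
    (∑ b ∈ S, ∑ k ∈ S, if l = b + k then γ b * γ k else 0) ≤ ∑ k ∈ S, γ k ^ 2 := by
  have hfirst : (∑ b ∈ S, ∑ k ∈ S, if l = b + k then γ b ^ 2 else 0) ≤ ∑ b ∈ S, γ b ^ 2 := by
    refine Finset.sum_le_sum fun b _ => ?_
    simp_rw [← sub_eq_iff_eq_add']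
    exact sum_ite_eq_le S (f := fun _ => γ b ^ 2) (fun _ => sq_nonneg _) (l - b)
  have hsecond : (∑ b ∈ S, ∑ k ∈ S, if l = b + k then γ k ^ 2 else 0) =
      ∑ b ∈ S, ∑ k ∈ S, if l = b + k then γ b ^ 2 else 0 := by
    rw [Finset.sum_comm]
    simp_rw [add_comm]
  have hamgm : (∑ b ∈ S, ∑ k ∈ S, if l = b + k then γ b * γ k else 0) ≤
      ∑ b ∈ S, ∑ k ∈ S, ((if l = b + k then γ b ^ 2 else 0) / 2 +
        (if l = b + k then γ k ^ 2 else 0) / 2) := by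
    refine Finset.sum_le_sum fun b _ => Finset.sum_le_sum fun k _ => ?_
    split_ifs
    · nlinarith [sq_nonneg (γ b - γ k)]
    · simp
  simp_rw [Finset.sum_add_distrib, ← Finset.sum_div] at hamgm
  linarith

lemma sum_resonant_le {u α γ : G → ℝ} (hα : ∀ k ∈ S, 0 ≤ α k) (hγ : ∀ k ∈ S, 0 ≤ γ k)
    (h : ∀ k ∈ S, u k ^ 2 ≤ α k * γ k) :
    (∑ a ∈ S, ∑ m ∈ S, ∑ b ∈ S, ∑ k ∈ S, if a + m = b + k then u a * u m * (u b * u k) else 0) ≤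
      (∑ k ∈ S, γ k ^ 2) * (∑ k ∈ S, α k) ^ 2 := by
  have hhalf : (∑ a ∈ S, ∑ m ∈ S, ∑ b ∈ S, ∑ k ∈ S,
      if a + m = b + k then α a * α m * (γ b * γ k) else 0) ≤
      (∑ k ∈ S, γ k ^ 2) * (∑ k ∈ S, α k) ^ 2 := by
    rw [mul_comm, sq, Finset.sum_mul_sum, Finset.sum_mul]
    refine Finset.sum_le_sum fun a ha => ?_
    rw [Finset.sum_mul]
    refine Finset.sum_le_sum fun m hm => ?_
    have hfactor : (∑ b ∈ S, ∑ k ∈ S, if a + m = b + k then α a * α m * (γ b * γ k) else 0) =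
        α a * α m * ∑ b ∈ S, ∑ k ∈ S, if a + m = b + k then γ b * γ k else 0 := by
      simp_rw [Finset.mul_sum, mul_ite_zero]
    rw [hfactor]
    exact mul_le_mul_of_nonneg_left (sum_ite_add_eq_mul_le S γ _) (mul_nonneg (hα a ha) (hα m hm))
  have hswap : (∑ a ∈ S, ∑ m ∈ S, ∑ b ∈ S, ∑ k ∈ S,
      if a + m = b + k then α b * α k * (γ a * γ m) else 0) =
      ∑ a ∈ S, ∑ m ∈ S, ∑ b ∈ S, ∑ k ∈ S,
        if a + m = b + k then α a * α m * (γ b * γ k) else 0 := by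
    simp_rw [← Finset.sum_product' S S]
    rw [Finset.sum_comm]
    simp_rw [eq_comm]
  have hamgm : (∑ a ∈ S, ∑ m ∈ S, ∑ b ∈ S, ∑ k ∈ S,
      if a + m = b + k then u a * u m * (u b * u k) else 0) ≤
      ∑ a ∈ S, ∑ m ∈ S, ∑ b ∈ S, ∑ k ∈ S,
        ((if a + m = b + k then α a * α m * (γ b * γ k) else 0) / 2 +
          (if a + m = b + k then α b * α k * (γ a * γ m) else 0) / 2) := by
    refine Finset.sum_le_sum fun a ha => Finset.sum_le_sum fun m hm =>
      Finset.sum_le_sum fun b hb => Finset.sum_le_sum fun k hk => ?_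
    split_ifs
    · rw [← add_div]
      exact mul_mul_mul_le_of_sq_le hα hγ h ha hm hb hk
    · simp
  simp_rw [Finset.sum_add_distrib, ← Finset.sum_div] at hamgm
  linarith

lemma sum_sum_sum_sum_ite_sub_add_eq (f : G → G → G → G → ℝ) :
    (∑ k ∈ S, ∑ a ∈ S, ∑ b ∈ S, ∑ m ∈ S, if a - b + m = k then f a m b k else 0) =
      ∑ a ∈ S, ∑ m ∈ S, ∑ b ∈ S, ∑ k ∈ S, if a + m = b + k then f a m b k else 0 := by
  have hiff (a b m k : G) : a - b + m = k ↔ a + m = b + k := by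
    rw [sub_add_eq_add_sub, sub_eq_iff_eq_add']
  simp_rw [hiff]
  rw [Finset.sum_comm]
  refine Finset.sum_congr rfl fun a _ => ?_
  calc _ = ∑ b ∈ S, ∑ k ∈ S, ∑ m ∈ S, _ := Finset.sum_comm
    _ = ∑ b ∈ S, ∑ m ∈ S, ∑ k ∈ S, _ := Finset.sum_congr rfl fun _ _ => Finset.sum_comm
    _ = _ := Finset.sum_comm

end Resonances

lemma quarticEnergy_le {d : ℕ} (S : Finset (Freq d)) (c : Freq d → ℂ) (w : Freq d → ℝ)
    (hw : ∀ k ∈ S, 0 < w k) :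
    quarticEnergy S c ≤ (1 / 4) *
      ((∑ k ∈ S, (w k)⁻¹ ^ 2) * (∑ k ∈ S, freqNorm k ^ 2 * ‖c k‖ ^ 2 * w k) ^ 2) := by
  have hresonant := sum_resonant_le (S := S) (u := fun k => freqNorm k * ‖c k‖)
    (α := fun k => freqNorm k ^ 2 * ‖c k‖ ^ 2 * w k) (γ := fun k => (w k)⁻¹)
    (fun k hk => mul_nonneg (by positivity) (hw k hk).le) (fun k hk => inv_nonneg.mpr (hw k hk).le)
    (fun k hk => by
      have := (hw k hk).ne'
      field_simp
      exact le_rfl)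
  refine mul_le_mul_of_nonneg_left (le_trans ?_ hresonant) (by norm_num)
  rw [← sum_sum_sum_sum_ite_sub_add_eq]
  refine (Complex.re_le_norm _).trans ((norm_sum_le _ _).trans (Finset.sum_le_sum fun k _ => ?_))
  rw [norm_mul, RCLike.norm_conj]
  refine (mul_le_mul_of_nonneg_right (norm_cubicTerm_le_sum S c k) (norm_nonneg _)).trans_eq ?_
  simp_rw [Finset.sum_mul, ite_mul, zero_mul]
  refine Finset.sum_congr rfl fun a _ => Finset.sum_congr rfl fun b _ =>
    Finset.sum_congr rfl fun m _ => if_congr Iff.rfl (by ring) rfl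

/-! ### Galerkin truncations -/

/-- The Galerkin vector field on the frequencies `S`: the Fourier coefficients over `S` of
`∇·((|∇u|² - 1)∇u) - νΔ²u` for `u = ∑_{a ∈ S} c a e^{i a·x}`. -/
def galerkinField {d : ℕ} (S : Finset (Freq d)) (ν : ℝ) (c : Freq d → ℂ) (k : Freq d) : ℂ :=
  ((-(ν * freqNorm k ^ 4) + freqNorm k ^ 2 : ℝ) : ℂ) * c k - cubicTerm S c k

/-- `c` solves the Galerkin system over `S` on the time interval `[0, T]`. The derivatives are
two-sided, also at the endpoints. -/
structure IsGalerkinSol {d : ℕ} (S : Finset (Freq d)) (ν T : ℝ) (c : ℝ → Freq d → ℂ) : Prop where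
  eq_zero_of_notMem : ∀ t, ∀ k, k ∉ S → c t k = 0
  hasDerivAt : ∀ t ∈ Set.Icc 0 T, ∀ k ∈ S,
    HasDerivAt (fun s => c s k) (galerkinField S ν (c t) k) t

section OrdinaryDifferentialEquations

lemma exists_forall_hasDerivAt_of_hasCompactSupport {E : Type*} [NormedAddCommGroup E]
    [NormedSpace ℝ E] [CompleteSpace E] {g : E → E} (hg : ContDiff ℝ 1 g)
    (hsupp : HasCompactSupport g) (x₀ : E) {T : ℝ} (hT : 0 ≤ T) :
    ∃ α : ℝ → E, α 0 = x₀ ∧ ∀ t ∈ Set.Icc 0 T, HasDerivAt α (g (α t)) t := by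
  obtain ⟨C, hC⟩ := hg.lipschitzWith_of_hasCompactSupport hsupp one_ne_zero
  obtain ⟨L, hL⟩ := hsupp.exists_bound_of_continuous hg.continuous
  lift L to NNReal using (norm_nonneg _).trans (hL 0)
  lift T to NNReal using hT
  let t₀ : Set.Icc (-1 : ℝ) (T + 1) := ⟨0, by constructor <;> linarith [T.coe_nonneg]⟩
  have hPicard : IsPicardLindelof (fun _ : ℝ => g) t₀ x₀ (L * (T + 1)) 0 L C := by
    refine ⟨fun t _ => hC.lipschitzOnWith, fun x _ => continuousOn_const, fun t _ x _ => hL x, ?_⟩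
    simp [t₀]
  obtain ⟨α, hα₀, hα⟩ := hPicard.exists_eq_forall_mem_Icc_hasDerivWithinAt₀
  refine ⟨α, hα₀, fun t ht => ?_⟩
  exact (hα t ⟨by linarith [ht.1], by linarith [ht.2]⟩).hasDerivAt
    (Icc_mem_nhds (by linarith [ht.1]) (by linarith [ht.2]))

lemma le_exp_mul_of_hasDerivAt_le {f f' : ℝ → ℝ} {T A B : ℝ} (hA : 0 ≤ A) (hB : 0 ≤ B)
    (hf : ∀ t ∈ Set.Icc 0 T, HasDerivAt f (f' t) t)
    (hf' : ∀ t ∈ Set.Icc 0 T, f' t ≤ A * f t + B) :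
    ∀ t ∈ Set.Icc 0 T, f t ≤ Real.exp (A * t) * (f 0 + B * t) := by
  intro t ht
  have hderiv : ∀ s ∈ Set.Icc 0 T, HasDerivAt (fun s => Real.exp (-A * s) * f s - B * s)
      (Real.exp (-A * s) * (-A) * f s + Real.exp (-A * s) * f' s - B) s := by
    intro s hs
    have hexp : HasDerivAt (fun s => Real.exp (-A * s)) (Real.exp (-A * s) * (-A)) s := by
      simpa using ((hasDerivAt_id s).const_mul (-A)).exp
    exact (hexp.mul (hf s hs)).sub (by simpa using (hasDerivAt_id s).const_mul B)
  have hanti : AntitoneOn (fun s => Real.exp (-A * s) * f s - B * s) (Set.Icc 0 T) := by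
    refine antitoneOn_of_deriv_nonpos (convex_Icc 0 T)
      (fun s hs => (hderiv s hs).continuousAt.continuousWithinAt)
      (fun s hs => (hderiv s (interior_subset hs)).differentiableAt.differentiableWithinAt)
      fun s hs => ?_
    have hs' := interior_subset hs
    rw [(hderiv s hs').deriv]
    have hle_one : Real.exp (-A * s) ≤ 1 := Real.exp_le_one_iff.mpr (by nlinarith [hs'.1])
    nlinarith [mul_le_mul_of_nonneg_left (hf' s hs') (Real.exp_pos (-A * s)).le,
      mul_le_mul_of_nonneg_right hle_one hB]
  have hle := hanti ⟨le_rfl, ht.1.trans ht.2⟩ ht ht.1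
  simp only [mul_zero, Real.exp_zero, one_mul, sub_zero] at hle
  calc f t = Real.exp (A * t) * (Real.exp (-A * t) * f t) := by
        rw [← mul_assoc, ← Real.exp_add]; simp
    _ ≤ _ := mul_le_mul_of_nonneg_left (by linarith) (Real.exp_pos _).le

end OrdinaryDifferentialEquations

section GalerkinExistence

variable {d : ℕ} (S : Finset (Freq d))

lemma rePairing_eq_sum (u v : Freq d → ℂ) : rePairing S u v = ∑ k ∈ S, (u k * conj (v k)).re :=
  Complex.re_sum _ _

lemma rePairing_ofReal_mul (r : ℝ) (u v : Freq d → ℂ) :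
    rePairing S (fun k => (r : ℂ) * u k) v = r * rePairing S u v := by
  simp only [rePairing_eq_sum, mul_assoc, Complex.re_ofReal_mul, Finset.mul_sum]

lemma l2Sq_nonneg (c : Freq d → ℂ) : 0 ≤ l2Sq S c := by unfold l2Sq; positivity

lemma weightedSq_nonneg (p : ℕ) (c : Freq d → ℂ) : 0 ≤ weightedSq S p c :=
  Finset.sum_nonneg fun k _ => mul_nonneg (pow_nonneg (freqNorm_nonneg k) _) (sq_nonneg _)

lemma norm_sq_le_l2Sq (c : Freq d → ℂ) {k : Freq d} (hk : k ∈ S) : ‖c k‖ ^ 2 ≤ l2Sq S c :=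
  Finset.single_le_sum (f := fun k => ‖c k‖ ^ 2) (fun _ _ => sq_nonneg _) hk

variable {S} in
lemma hasDerivAt_l2Sq_sub {c : ℝ → Freq d → ℂ} {c' : Freq d → ℂ} {t : ℝ}
    (hc : ∀ k ∈ S, HasDerivAt (fun s => c s k) (c' k) t) (b : Freq d → ℂ) :
    HasDerivAt (fun s => l2Sq S (fun k => c s k - b k))
      (2 * rePairing S c' (fun k => c t k - b k)) t := by
  rw [rePairing_eq_sum, Finset.mul_sum]
  exact HasDerivAt.fun_sum fun k hk => ((hc k hk).sub_const (b k)).norm_sq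

variable {S} in
lemma hasDerivAt_l2Sq {c : ℝ → Freq d → ℂ} {c' : Freq d → ℂ} {t : ℝ}
    (hc : ∀ k ∈ S, HasDerivAt (fun s => c s k) (c' k) t) :
    HasDerivAt (fun s => l2Sq S (c s)) (2 * rePairing S c' (c t)) t := by
  simpa only [Pi.zero_apply, sub_zero] using hasDerivAt_l2Sq_sub hc 0

lemma re_mul_conj_self (z : ℂ) : (z * conj z).re = ‖z‖ ^ 2 := by
  rw [Complex.mul_conj, Complex.ofReal_re, Complex.normSq_eq_norm_sq]

lemma rePairing_galerkinField (ν : ℝ) (c v : Freq d → ℂ) :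
    rePairing S (galerkinField S ν c) v =
      (∑ k ∈ S, (-(ν * freqNorm k ^ 4) + freqNorm k ^ 2) * (c k * conj (v k)).re) -
        rePairing S (cubicTerm S c) v := by
  simp only [rePairing_eq_sum, galerkinField, sub_mul, Complex.sub_re, mul_assoc,
    Complex.re_ofReal_mul, Finset.sum_sub_distrib]

lemma symbol_le {ν : ℝ} (hν : 0 < ν) (x : ℝ) : -(ν * x ^ 4) + x ^ 2 ≤ 1 / (4 * ν) := by
  rw [le_div_iff₀ (by positivity)]
  nlinarith [sq_nonneg (2 * ν * x ^ 2 - 1)]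

lemma rePairing_galerkinField_self_le {ν : ℝ} (hν : 0 < ν) (c : Freq d → ℂ) :
    rePairing S (galerkinField S ν c) c ≤ 1 / (4 * ν) * l2Sq S c := by
  have hquartic : 0 ≤ (1 / 4) * rePairing S (cubicTerm S c) c := quarticEnergy_nonneg S c
  have hlinear : (∑ k ∈ S, (-(ν * freqNorm k ^ 4) + freqNorm k ^ 2) * (c k * conj (c k)).re) ≤
      1 / (4 * ν) * l2Sq S c := by
    rw [l2Sq, Finset.mul_sum]
    refine Finset.sum_le_sum fun k _ => ?_
    rw [re_mul_conj_self]
    exact mul_le_mul_of_nonneg_right (symbol_le hν _) (sq_nonneg _)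
  rw [rePairing_galerkinField]
  linarith

variable {S} in
lemma l2Sq_le_exp_of_hasDerivAt_smul_galerkinField {ν T : ℝ} (hν : 0 < ν)
    {c : ℝ → Freq d → ℂ} {χ : ℝ → ℝ} (hχ₀ : ∀ t, 0 ≤ χ t) (hχ₁ : ∀ t, χ t ≤ 1)
    (hc : ∀ t ∈ Set.Icc 0 T, ∀ k ∈ S,
      HasDerivAt (fun s => c s k) ((χ t : ℂ) * galerkinField S ν (c t) k) t) :
    ∀ t ∈ Set.Icc 0 T, l2Sq S (c t) ≤ Real.exp (1 / (2 * ν) * t) * l2Sq S (c 0) := by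
  intro t ht
  have hgronwall := le_exp_mul_of_hasDerivAt_le (A := 1 / (2 * ν)) (B := 0) (by positivity) le_rfl
    (fun s hs => hasDerivAt_l2Sq (hc s hs)) (fun s _ => ?_) t ht
  · simpa using hgronwall
  have hbound : 0 ≤ 1 / (4 * ν) * l2Sq S (c s) := mul_nonneg (by positivity) (l2Sq_nonneg S _)
  calc 2 * rePairing S (fun k => (χ s : ℂ) * galerkinField S ν (c s) k) (c s)
      = 2 * (χ s * rePairing S (galerkinField S ν (c s)) (c s)) := by rw [rePairing_ofReal_mul]
    _ ≤ 2 * (1 / (4 * ν) * l2Sq S (c s)) := by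
        nlinarith [mul_le_mul_of_nonneg_left (rePairing_galerkinField_self_le S hν (c s)) (hχ₀ s),
          mul_le_mul_of_nonneg_right (hχ₁ s) hbound]
    _ = 1 / (2 * ν) * l2Sq S (c s) + 0 := by field_simp; ring

open Classical in
/-- The extension by zero of coefficients over `S` to all frequencies. -/
def extendByZero (v : S → ℂ) (k : Freq d) : ℂ := if h : k ∈ S then v ⟨k, h⟩ else 0

lemma extendByZero_of_mem (v : S → ℂ) {k : Freq d} (hk : k ∈ S) :
    extendByZero S v k = v ⟨k, hk⟩ := dif_pos hk

lemma extendByZero_of_notMem (v : S → ℂ) {k : Freq d} (hk : k ∉ S) :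
    extendByZero S v k = 0 := dif_neg hk

lemma contDiff_extendByZero (k : Freq d) : ContDiff ℝ 1 fun v : S → ℂ => extendByZero S v k := by
  unfold extendByZero
  split_ifs with h
  · exact contDiff_apply ℝ ℂ _
  · exact contDiff_const

lemma contDiff_cubicTerm_extendByZero (k : Freq d) :
    ContDiff ℝ 1 fun v : S → ℂ => cubicTerm S (extendByZero S v) k := by
  unfold cubicTerm
  refine ContDiff.sum fun a _ => ContDiff.sum fun b _ => ContDiff.sum fun m _ => ?_
  split_ifs
  · exact ((contDiff_const.mul (contDiff_extendByZero S a)).mul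
      (Complex.conjCLE.contDiff.comp (contDiff_extendByZero S b))).mul (contDiff_extendByZero S m)
  · exact contDiff_const

lemma contDiff_galerkinField_extendByZero (ν : ℝ) :
    ContDiff ℝ 1 fun (v : S → ℂ) (k : S) => galerkinField S ν (extendByZero S v) k :=
  contDiff_pi.mpr fun k =>
    (contDiff_const.mul (contDiff_extendByZero S k)).sub (contDiff_cubicTerm_extendByZero S k)

lemma norm_le_of_l2Sq_extendByZero_le {v : S → ℂ} {M : ℝ} (h : l2Sq S (extendByZero S v) ≤ M) :
    ‖v‖ ≤ √M := by
  refine (pi_norm_le_iff_of_nonneg (Real.sqrt_nonneg M)).mpr fun k => Real.le_sqrt_of_sq_le ?_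
  rw [← extendByZero_of_mem S v k.2]
  exact (norm_sq_le_l2Sq S _ k.2).trans h

-- The vector field is cut off outside a ball that the a priori `ℓ²` bound, which the cutoff
-- respects, keeps the solution from leaving.
lemma exists_isGalerkinSol {ν T : ℝ} (hν : 0 < ν) (hT : 0 ≤ T) {a : Freq d → ℂ}
    (ha : ∀ k, k ∉ S → a k = 0) : ∃ c, IsGalerkinSol S ν T c ∧ c 0 = a := by
  set M := Real.exp (1 / (2 * ν) * T) * l2Sq S a
  let χ : ContDiffBump (0 : S → ℂ) := ⟨√M + 1, √M + 2, by positivity, by linarith⟩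
  obtain ⟨α, hα₀, hα⟩ := exists_forall_hasDerivAt_of_hasCompactSupport
    (g := fun v => χ v • fun k : S => galerkinField S ν (extendByZero S v) k)
    (χ.contDiff.smul (contDiff_galerkinField_extendByZero S ν)) χ.hasCompactSupport.smul_right
    (fun k => a k) hT
  have hinit : extendByZero S (α 0) = a := by
    ext k
    by_cases hk : k ∈ S
    · rw [extendByZero_of_mem S _ hk, hα₀]
    · rw [extendByZero_of_notMem S _ hk, ha k hk]
  have hderiv : ∀ t ∈ Set.Icc 0 T, ∀ k ∈ S, HasDerivAt (fun s => extendByZero S (α s) k)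
      ((χ (α t) : ℂ) * galerkinField S ν (extendByZero S (α t)) k) t := by
    intro t ht k hk
    simp_rw [extendByZero_of_mem S _ hk]
    simpa using hasDerivAt_pi.mp (hα t ht) ⟨k, hk⟩
  have hbound : ∀ t ∈ Set.Icc 0 T, l2Sq S (extendByZero S (α t)) ≤ M := by
    intro t ht
    refine (l2Sq_le_exp_of_hasDerivAt_smul_galerkinField hν (fun _ => χ.nonneg)
      (fun _ => χ.le_one) hderiv t ht).trans ?_
    rw [hinit]
    exact mul_le_mul_of_nonneg_right (Real.exp_le_exp.mpr (by gcongr; exact ht.2))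
      (l2Sq_nonneg S a)
  refine ⟨fun t => extendByZero S (α t),
    ⟨fun t k hk => extendByZero_of_notMem S _ hk, fun t ht k hk => ?_⟩, hinit⟩
  have hcutoff : χ (α t) = 1 := by
    refine χ.one_of_mem_closedBall (mem_closedBall_zero_iff.mpr ?_)
    exact (norm_le_of_l2Sq_extendByZero_le S (hbound t ht)).trans
      (le_add_of_nonneg_right zero_le_one)
  simpa [hcutoff] using hderiv t ht k hk

end GalerkinExistence

/-! ### The evolution variational inequality and its consequences -/

/-- The convex part `ν/2 ‖Δu‖² + ¼ ‖∇u‖₄⁴` of the energy. -/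
def convexEnergy {d : ℕ} (S : Finset (Freq d)) (ν : ℝ) (c : Freq d → ℂ) : ℝ :=
  ν / 2 * weightedSq S 4 c + quarticEnergy S c

/-- The energy `ν/2 ‖Δu‖² + ¼ ‖∇u‖₄⁴ - ½ ‖∇u‖²`, whose gradient flow is the Galerkin system. -/
def energy {d : ℕ} (S : Finset (Freq d)) (ν : ℝ) (c : Freq d → ℂ) : ℝ :=
  convexEnergy S ν c - (1 / 2) * weightedSq S 2 c

/-- The exponential growth rate of `ℓ²` norms; it is the maximum of `3x - νx²/2` over real `x`. -/
def growthRate (ν : ℝ) : ℝ := 9 / (2 * ν)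

/-- The coefficients of a real-valued function: `c (-k)` is the conjugate of `c k`. -/
def ConjSymm {d : ℕ} (c : Freq d → ℂ) : Prop := ∀ k, c (-k) = conj (c k)

section EnergyEstimates

variable {d : ℕ} {S : Finset (Freq d)} {ν T : ℝ}

lemma growthRate_pos (hν : 0 < ν) : 0 < growthRate ν := by unfold growthRate; positivity

lemma three_mul_le_growthRate (hν : 0 < ν) (x : ℝ) : 3 * x ≤ ν / 2 * x ^ 2 + growthRate ν := by
  have hsq : ν / 2 * x ^ 2 + growthRate ν - 3 * x = (ν * x - 3) ^ 2 / (2 * ν) := by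
    unfold growthRate; field_simp; ring
  have : 0 ≤ (ν * x - 3) ^ 2 / (2 * ν) := by positivity
  linarith

lemma convexEnergy_nonneg (hν : 0 < ν) (c : Freq d → ℂ) : 0 ≤ convexEnergy S ν c := by
  have := quarticEnergy_nonneg S c
  have := weightedSq_nonneg S 4 c
  unfold convexEnergy
  positivity

lemma convexEnergy_zero : convexEnergy S ν (0 : Freq d → ℂ) = 0 := by
  simp [convexEnergy, quarticEnergy, weightedSq, rePairing]

lemma re_mul_conj_sub_self (z w : ℂ) : (z * conj (z - w)).re = ‖z‖ ^ 2 - (z * conj w).re := by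
  rw [map_sub, mul_sub, Complex.sub_re, re_mul_conj_self]

lemma abs_re_mul_conj_le (z w : ℂ) : |(z * conj w).re| ≤ (1 / 2) * ‖z‖ ^ 2 + (1 / 2) * ‖w‖ ^ 2 := by
  refine (Complex.abs_re_le_norm _).trans ?_
  rw [norm_mul, RCLike.norm_conj]
  nlinarith [sq_nonneg (‖z‖ - ‖w‖)]

lemma two_mul_symbol_mul_re_le (hν : 0 < ν) (x : ℝ) (z w : ℂ) :
    2 * ((-(ν * x ^ 4) + x ^ 2) * (z * conj (z - w)).re) ≤
      ν * (x ^ 4 * ‖w‖ ^ 2) + x ^ 2 * ‖w‖ ^ 2 - ν / 2 * (x ^ 4 * ‖z‖ ^ 2) +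
        growthRate ν * ‖z‖ ^ 2 := by
  rw [re_mul_conj_sub_self]
  obtain ⟨hlow, hupp⟩ := abs_le.mp (abs_re_mul_conj_le z w)
  have hgrowth := mul_le_mul_of_nonneg_right (three_mul_le_growthRate hν (x ^ 2)) (sq_nonneg ‖z‖)
  have hfourth := mul_le_mul_of_nonneg_left hupp (show 0 ≤ ν * x ^ 4 by positivity)
  have hsecond := mul_le_mul_of_nonneg_left hlow (sq_nonneg x)
  nlinarith

lemma rePairing_sub_comm (u a b : Freq d → ℂ) :
    rePairing S u (fun k => b k - a k) = -rePairing S u (fun k => a k - b k) := by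
  rw [rePairing_eq_sum, rePairing_eq_sum, ← Finset.sum_neg_distrib]
  refine Finset.sum_congr rfl fun k _ => ?_
  simp only [map_sub, mul_sub, Complex.sub_re]
  ring

lemma evolution_variational_inequality (hν : 0 < ν) (c b : Freq d → ℂ) :
    2 * rePairing S (galerkinField S ν c) (fun k => c k - b k) ≤
      2 * convexEnergy S ν b + weightedSq S 2 b - convexEnergy S ν c +
        growthRate ν * l2Sq S c := by
  have hlinear : 2 * (∑ k ∈ S, (-(ν * freqNorm k ^ 4) + freqNorm k ^ 2) *
      (c k * conj (c k - b k)).re) ≤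
      ν * weightedSq S 4 b + weightedSq S 2 b - ν / 2 * weightedSq S 4 c +
        growthRate ν * l2Sq S c := by
    simp only [weightedSq, l2Sq, Finset.mul_sum, ← Finset.sum_add_distrib,
      ← Finset.sum_sub_distrib]
    exact Finset.sum_le_sum fun k _ => two_mul_symbol_mul_re_le hν _ _ _
  have hconvex := quarticEnergy_add_rePairing_le S c b
  rw [rePairing_sub_comm] at hconvex
  have hnonneg := quarticEnergy_nonneg S c
  rw [rePairing_galerkinField]
  unfold convexEnergy
  linarith

lemma two_mul_rePairing_galerkinField_self_le (hν : 0 < ν) (c : Freq d → ℂ) :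
    2 * rePairing S (galerkinField S ν c) c ≤ -convexEnergy S ν c + growthRate ν * l2Sq S c := by
  simpa [convexEnergy_zero, weightedSq] using evolution_variational_inequality (S := S) hν c 0

lemma rePairing_galerkinField_sub (ν : ℝ) (c z : Freq d → ℂ) :
    rePairing S (fun k => galerkinField S ν c k - galerkinField S ν z k) (fun k => c k - z k) =
      ∑ k ∈ S, (-(ν * freqNorm k ^ 4) + freqNorm k ^ 2) * ‖c k - z k‖ ^ 2 +
        rePairing S (cubicTerm S c) (fun k => z k - c k) +
        rePairing S (cubicTerm S z) (fun k => c k - z k) := by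
  simp only [rePairing_eq_sum, ← Finset.sum_add_distrib]
  refine Finset.sum_congr rfl fun k _ => ?_
  rw [← re_mul_conj_self, ← Complex.re_ofReal_mul, ← Complex.add_re, ← Complex.add_re]
  congr 1
  simp only [galerkinField, map_sub]
  ring

lemma rePairing_galerkinField_sub_le (hν : 0 < ν) (c z : Freq d → ℂ) :
    rePairing S (fun k => galerkinField S ν c k - galerkinField S ν z k) (fun k => c k - z k) ≤
      1 / (4 * ν) * l2Sq S (fun k => c k - z k) := by
  have hlinear : ∑ k ∈ S, (-(ν * freqNorm k ^ 4) + freqNorm k ^ 2) * ‖c k - z k‖ ^ 2 ≤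
      1 / (4 * ν) * l2Sq S (fun k => c k - z k) := by
    rw [l2Sq, Finset.mul_sum]
    exact Finset.sum_le_sum fun k _ =>
      mul_le_mul_of_nonneg_right (symbol_le hν _) (sq_nonneg _)
  rw [rePairing_galerkinField_sub]
  linarith [quarticEnergy_add_rePairing_le S c z, quarticEnergy_add_rePairing_le S z c]

lemma hasDerivAt_weightedSq {c : ℝ → Freq d → ℂ} {c' : Freq d → ℂ} {t : ℝ}
    (hc : ∀ k ∈ S, HasDerivAt (fun s => c s k) (c' k) t) (p : ℕ) :
    HasDerivAt (fun s => weightedSq S p (c s))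
      (∑ k ∈ S, freqNorm k ^ p * (2 * (c' k * conj (c t k)).re)) t :=
  HasDerivAt.fun_sum fun k hk => (hc k hk).norm_sq.const_mul (freqNorm k ^ p)

lemma differentiableAt_quarticEnergy {c : ℝ → Freq d → ℂ} {t : ℝ}
    (hc : ∀ k ∈ S, DifferentiableAt ℝ (fun s => c s k) t) :
    DifferentiableAt ℝ (fun s => quarticEnergy S (c s)) t := by
  have hconj : ∀ k ∈ S, DifferentiableAt ℝ (fun s => conj (c s k)) t := fun k hk =>
    Complex.conjCLE.differentiableAt.comp t (hc k hk)
  refine DifferentiableAt.const_mul (Complex.reCLM.differentiableAt.comp t ?_) _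
  refine DifferentiableAt.fun_sum fun k hk => DifferentiableAt.mul ?_ (hconj k hk)
  unfold cubicTerm
  refine DifferentiableAt.fun_sum fun a ha => DifferentiableAt.fun_sum fun b hb =>
    DifferentiableAt.fun_sum fun m hm => ?_
  split_ifs
  · exact (((differentiableAt_const _).mul (hc a ha)).mul (hconj b hb)).mul (hc m hm)
  · exact differentiableAt_const _

-- The supporting hyperplane of `quarticEnergy` at `c t` touches it there, so the derivatives agree.
lemma hasDerivAt_quarticEnergy {c : ℝ → Freq d → ℂ} {c' : Freq d → ℂ} {t : ℝ}
    (hc : ∀ k ∈ S, HasDerivAt (fun s => c s k) (c' k) t) :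
    HasDerivAt (fun s => quarticEnergy S (c s)) (rePairing S (cubicTerm S (c t)) c') t := by
  have hdiff := (differentiableAt_quarticEnergy fun k hk =>
    (hc k hk).differentiableAt).hasDerivAt
  have hplane : HasDerivAt (fun s => rePairing S (cubicTerm S (c t)) (fun k => c s k - c t k))
      (rePairing S (cubicTerm S (c t)) c') t := by
    simp only [rePairing_eq_sum]
    refine HasDerivAt.fun_sum fun k hk => ?_
    have hconj : HasDerivAt (fun s => conj (c s k - c t k)) (conj (c' k)) t :=
      Complex.conjCLE.hasFDerivAt.comp_hasDerivAt t ((hc k hk).sub_const (c t k))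
    exact Complex.reCLM.hasFDerivAt.comp_hasDerivAt t (hconj.const_mul (cubicTerm S (c t) k))
  have hmin : IsLocalMin (fun s => quarticEnergy S (c s) -
      rePairing S (cubicTerm S (c t)) (fun k => c s k - c t k)) t := by
    refine Filter.Eventually.of_forall fun s => ?_
    have htouch : rePairing S (cubicTerm S (c t)) (fun k => c t k - c t k) = 0 := by
      simp [rePairing]
    dsimp only
    linarith [quarticEnergy_add_rePairing_le S (c t) (c s)]
  have hzero := hmin.hasDerivAt_eq_zero (hdiff.sub hplane)
  rwa [sub_eq_zero.mp hzero] at hdiff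

lemma energy_le_convexEnergy (c : Freq d → ℂ) : energy S ν c ≤ convexEnergy S ν c := by
  unfold energy
  linarith [weightedSq_nonneg S 2 c]

lemma convexEnergy_le_energy (hν : 0 < ν) (c : Freq d → ℂ) :
    convexEnergy S ν c ≤ 2 * energy S ν c + 1 / (2 * ν) * l2Sq S c := by
  have hinterp : weightedSq S 2 c ≤ ν / 2 * weightedSq S 4 c + 1 / (2 * ν) * l2Sq S c := by
    simp only [weightedSq, l2Sq, Finset.mul_sum, ← Finset.sum_add_distrib]
    refine Finset.sum_le_sum fun k _ => ?_
    have hsymbol : freqNorm k ^ 2 ≤ ν / 2 * freqNorm k ^ 4 + 1 / (2 * ν) := by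
      have hsq : ν / 2 * freqNorm k ^ 4 + 1 / (2 * ν) - freqNorm k ^ 2 =
          (ν * freqNorm k ^ 2 - 1) ^ 2 / (2 * ν) := by field_simp; ring
      have : 0 ≤ (ν * freqNorm k ^ 2 - 1) ^ 2 / (2 * ν) := by positivity
      linarith
    linarith [mul_le_mul_of_nonneg_right hsymbol (sq_nonneg ‖c k‖)]
  have := quarticEnergy_nonneg S c
  unfold energy convexEnergy
  linarith

lemma cubicTerm_conj_neg (hS : ∀ k ∈ S, -k ∈ S) (c : Freq d → ℂ) (k : Freq d) :
    cubicTerm S (fun l => conj (c (-l))) k = conj (cubicTerm S c (-k)) := by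
  have hreflect (f : Freq d → ℂ) : ∑ a ∈ S, f a = ∑ a ∈ S, f (-a) :=
    Finset.sum_nbij' (fun a => -a) (fun a => -a) hS hS (fun a _ => neg_neg a)
      (fun a _ => neg_neg a) (fun a _ => by rw [neg_neg])
  simp only [cubicTerm, map_sum]
  rw [hreflect]
  refine Finset.sum_congr rfl fun a _ => ?_
  rw [hreflect]
  refine Finset.sum_congr rfl fun b _ => ?_
  rw [hreflect]
  refine Finset.sum_congr rfl fun m _ => ?_
  have hindex : -a - -b + -m = k ↔ a - b + m = -k := by
    rw [show -a - -b + -m = -(a - b + m) by abel, neg_eq_iff_eq_neg]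
  have hdot : freqDot (-m) k = freqDot m (-k) := by rw [← freqDot_neg_neg, neg_neg]
  simp only [hindex, neg_neg, freqDot_neg_neg, hdot]
  split_ifs <;> simp

end EnergyEstimates

namespace IsGalerkinSol

variable {d : ℕ} {S : Finset (Freq d)} {ν T : ℝ} {c z : ℝ → Freq d → ℂ} {t : ℝ}

lemma l2Sq_le (hc : IsGalerkinSol S ν T c) (hν : 0 < ν) {R : ℝ} (hR : l2Sq S (c 0) ≤ R)
    (ht : t ∈ Set.Icc 0 T) : l2Sq S (c t) ≤ Real.exp (growthRate ν * T) * R := by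
  have hgronwall := le_exp_mul_of_hasDerivAt_le (B := 0) (growthRate_pos hν).le le_rfl
    (fun s hs => hasDerivAt_l2Sq (hc.hasDerivAt s hs))
    (fun s _ => by
      linarith [two_mul_rePairing_galerkinField_self_le (S := S) hν (c s),
        convexEnergy_nonneg (S := S) hν (c s)]) t ht
  rw [zero_mul, add_zero] at hgronwall
  refine hgronwall.trans (mul_le_mul ?_ hR (l2Sq_nonneg S _) (Real.exp_pos _).le)
  exact Real.exp_le_exp.mpr (mul_le_mul_of_nonneg_left ht.2 (growthRate_pos hν).le)

lemma l2Sq_sub_le (hc : IsGalerkinSol S ν T c) (hz : IsGalerkinSol S ν T z) (hν : 0 < ν)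
    (ht : t ∈ Set.Icc 0 T) :
    l2Sq S (fun k => c t k - z t k) ≤
      Real.exp (1 / (2 * ν) * t) * l2Sq S (fun k => c 0 k - z 0 k) := by
  have hgronwall := le_exp_mul_of_hasDerivAt_le (A := 1 / (2 * ν)) (B := 0) (by positivity) le_rfl
    (fun s hs => hasDerivAt_l2Sq (c := fun s k => c s k - z s k)
      fun k hk => (hc.hasDerivAt s hs k hk).sub (hz.hasDerivAt s hs k hk))
    (fun s _ => ?_) t ht
  · simpa using hgronwall
  calc _ ≤ 2 * (1 / (4 * ν) * l2Sq S (fun k => c s k - z s k)) :=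
        mul_le_mul_of_nonneg_left (rePairing_galerkinField_sub_le hν _ _) zero_le_two
    _ = _ := by field_simp; ring

lemma hasDerivAt_energy (hc : IsGalerkinSol S ν T c) (ht : t ∈ Set.Icc 0 T) :
    HasDerivAt (fun s => energy S ν (c s)) (-l2Sq S (galerkinField S ν (c t))) t := by
  have hderiv := (((hasDerivAt_weightedSq (hc.hasDerivAt t ht) 4).const_mul (ν / 2)).add
    (hasDerivAt_quarticEnergy (hc.hasDerivAt t ht))).sub
    ((hasDerivAt_weightedSq (hc.hasDerivAt t ht) 2).const_mul (1 / 2))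
  refine HasDerivAt.congr_deriv hderiv ?_
  rw [rePairing_eq_sum, Finset.mul_sum, Finset.mul_sum, ← Finset.sum_add_distrib,
    ← Finset.sum_sub_distrib, l2Sq, ← Finset.sum_neg_distrib]
  refine Finset.sum_congr rfl fun k _ => ?_
  set v := galerkinField S ν (c t) k with hv
  have hcubic : cubicTerm S (c t) k =
      ((-(ν * freqNorm k ^ 4) + freqNorm k ^ 2 : ℝ) : ℂ) * c t k - v := by
    rw [hv, galerkinField]; ring
  have hswap : (c t k * conj v).re = (v * conj (c t k)).re := by simp; ring
  rw [hcubic, sub_mul, Complex.sub_re, re_mul_conj_self, mul_assoc, Complex.re_ofReal_mul, hswap]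
  ring

lemma energy_le (hc : IsGalerkinSol S ν T c) (ht : t ∈ Set.Icc 0 T) :
    energy S ν (c t) ≤ energy S ν (c 0) := by
  simpa using le_exp_mul_of_hasDerivAt_le (A := 0) (B := 0) le_rfl le_rfl
    (fun s hs => hc.hasDerivAt_energy hs)
    (fun s _ => by linarith [l2Sq_nonneg S (galerkinField S ν (c s))]) t ht

lemma convexEnergy_le (hc : IsGalerkinSol S ν T c) (hν : 0 < ν) (ht : t ∈ Set.Icc 0 T) :
    convexEnergy S ν (c t) ≤ 2 * convexEnergy S ν (c 0) +
      1 / (2 * ν) * (Real.exp (growthRate ν * T) * l2Sq S (c 0)) := by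
  have hl2 := mul_le_mul_of_nonneg_left (hc.l2Sq_le hν le_rfl ht)
    (show 0 ≤ 1 / (2 * ν) by positivity)
  linarith [convexEnergy_le_energy (S := S) hν (c t), hc.energy_le ht,
    energy_le_convexEnergy (S := S) (ν := ν) (c 0)]

lemma mul_energy_add_l2Sq_le (hc : IsGalerkinSol S ν T c) (hν : 0 < ν) {R : ℝ}
    (hR : l2Sq S (c 0) ≤ R) (ht : t ∈ Set.Icc 0 T) :
    t * energy S ν (c t) + l2Sq S (c t) ≤
      R + growthRate ν * (Real.exp (growthRate ν * T) * R) * t := by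
  have hrate := growthRate_pos hν
  have hR₀ : 0 ≤ R := (l2Sq_nonneg S _).trans hR
  have hgronwall := le_exp_mul_of_hasDerivAt_le (A := 0)
    (B := growthRate ν * (Real.exp (growthRate ν * T) * R)) le_rfl (by positivity)
    (fun s hs => ((hasDerivAt_id s).mul (hc.hasDerivAt_energy hs)).add
      (hasDerivAt_l2Sq (hc.hasDerivAt s hs)))
    (fun s hs => by
      have hdissip := mul_nonneg hs.1 (l2Sq_nonneg S (galerkinField S ν (c s)))
      have hl2 := mul_le_mul_of_nonneg_left (hc.l2Sq_le hν hR hs) hrate.le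
      simp only [id_eq]
      linarith [two_mul_rePairing_galerkinField_self_le (S := S) hν (c s),
        energy_le_convexEnergy (S := S) (ν := ν) (c s)]) t ht
  simp only [Pi.add_apply, Pi.mul_apply, id_eq, zero_mul, Real.exp_zero, one_mul,
    zero_add] at hgronwall
  linarith

lemma convexEnergy_le_of_pos (hc : IsGalerkinSol S ν T c) (hν : 0 < ν) {R : ℝ}
    (hR : l2Sq S (c 0) ≤ R) {t₀ : ℝ} (ht₀ : 0 < t₀) (ht : t ∈ Set.Icc t₀ T) :
    convexEnergy S ν (c t) ≤
      2 * ((R + growthRate ν * (Real.exp (growthRate ν * T) * R) * T) / t₀) +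
        1 / (2 * ν) * (Real.exp (growthRate ν * T) * R) := by
  have htT : t ∈ Set.Icc 0 T := ⟨ht₀.le.trans ht.1, ht.2⟩
  have hR₀ : 0 ≤ R := (l2Sq_nonneg S _).trans hR
  have hT : 0 ≤ T := htT.1.trans htT.2
  set B := growthRate ν * (Real.exp (growthRate ν * T) * R)
  have hB₀ : 0 ≤ B := by have := growthRate_pos hν; positivity
  have henergy : energy S ν (c t) ≤ (R + B * T) / t₀ := by
    rcases le_or_gt (energy S ν (c t)) 0 with hneg | hpos
    · exact hneg.trans (by positivity)
    · rw [le_div_iff₀ ht₀]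
      nlinarith [hc.mul_energy_add_l2Sq_le hν hR htT, l2Sq_nonneg S (c t),
        mul_le_mul_of_nonneg_left ht.1 hpos.le, mul_le_mul_of_nonneg_left ht.2 hB₀]
  have hl2 := mul_le_mul_of_nonneg_left (hc.l2Sq_le hν hR htT)
    (show 0 ≤ 1 / (2 * ν) by positivity)
  linarith [convexEnergy_le_energy (S := S) hν (c t)]

lemma l2Sq_sub_const_le (hc : IsGalerkinSol S ν T c) (hν : 0 < ν) {R : ℝ}
    (hR : l2Sq S (c 0) ≤ R) (b : Freq d → ℂ) (ht : t ∈ Set.Icc 0 T) :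
    l2Sq S (fun k => c t k - b k) ≤ l2Sq S (fun k => c 0 k - b k) +
      (2 * convexEnergy S ν b + weightedSq S 2 b +
        growthRate ν * (Real.exp (growthRate ν * T) * R)) * t := by
  have hrate := growthRate_pos hν
  have hR₀ : 0 ≤ R := (l2Sq_nonneg S _).trans hR
  have hb := convexEnergy_nonneg (S := S) hν b
  have hb' := weightedSq_nonneg S 2 b
  simpa using le_exp_mul_of_hasDerivAt_le (A := 0) le_rfl (by positivity)
    (fun s hs => hasDerivAt_l2Sq_sub (hc.hasDerivAt s hs) b) (fun s hs => by
      have hl2 := mul_le_mul_of_nonneg_left (hc.l2Sq_le hν hR hs) hrate.le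
      linarith [evolution_variational_inequality (S := S) hν (c s) b,
        convexEnergy_nonneg (S := S) hν (c s)]) t ht

lemma conj_neg (hc : IsGalerkinSol S ν T c) (hS : ∀ k ∈ S, -k ∈ S) :
    IsGalerkinSol S ν T fun t k => conj (c t (-k)) := by
  refine ⟨fun t k hk => ?_, fun t ht k hk => ?_⟩
  · rw [hc.eq_zero_of_notMem t (-k) fun h => hk (by simpa using hS _ h), map_zero]
  · have hfield : galerkinField S ν (fun k => conj (c t (-k))) k =
        conj (galerkinField S ν (c t) (-k)) := by
      simp only [galerkinField, cubicTerm_conj_neg hS, freqNorm_neg, map_sub, map_mul,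
        Complex.conj_ofReal]
    rw [hfield]
    exact Complex.conjCLE.hasFDerivAt.comp_hasDerivAt t (hc.hasDerivAt t ht (-k) (hS k hk))

lemma eqOn_of_initial_eq (hc : IsGalerkinSol S ν T c) (hz : IsGalerkinSol S ν T z) (hν : 0 < ν)
    (h₀ : ∀ k, c 0 k = z 0 k) (ht : t ∈ Set.Icc 0 T) : c t = z t := by
  have hzero : l2Sq S (fun k => c t k - z t k) ≤ 0 := by
    simpa [h₀, l2Sq] using hc.l2Sq_sub_le hz hν ht
  ext k
  by_cases hk : k ∈ S
  · have hsq := (norm_sq_le_l2Sq S (fun k => c t k - z t k) hk).trans hzero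
    exact sub_eq_zero.mp (norm_eq_zero.mp (pow_eq_zero_iff two_ne_zero |>.mp
      (le_antisymm hsq (sq_nonneg _))))
  · rw [hc.eq_zero_of_notMem t k hk, hz.eq_zero_of_notMem t k hk]

lemma conjSymm (hc : IsGalerkinSol S ν T c) (hν : 0 < ν) (hS : ∀ k ∈ S, -k ∈ S)
    (h₀ : ConjSymm (c 0)) (ht : t ∈ Set.Icc 0 T) : ConjSymm (c t) := by
  have heq := hc.eqOn_of_initial_eq (hc.conj_neg hS) hν (fun k => by simp [h₀ k]) ht
  intro k
  simpa using congrFun heq (-k)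

end IsGalerkinSol

/-! ### Uniform decay of the coefficients at positive times -/

/-- At all times in `[t₀, T]`, the coefficients `c k` of every mean-zero Galerkin solution whose
initial value has squared `ℓ²` norm at most `R` are `O(|k|^{-n/4})`, uniformly in the solution
and in the set of frequencies. -/
def UniformDecay (d : ℕ) (ν T R : ℝ) (n : ℕ) (t₀ : ℝ) : Prop :=
  ∃ B, 0 ≤ B ∧ ∀ (S : Finset (Freq d)) (c : ℝ → Freq d → ℂ), (0 : Freq d) ∉ S →
    IsGalerkinSol S ν T c → l2Sq S (c 0) ≤ R →
      ∀ t ∈ Set.Icc t₀ T, ∀ k ∈ S, quarterNorm k ^ n * ‖c t k‖ ≤ B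

section LinearSmoothing

lemma hasDerivAt_exp_const_mul (a t : ℝ) :
    HasDerivAt (fun s => Real.exp (a * s)) (Real.exp (a * t) * a) t := by
  simpa using ((hasDerivAt_id t).const_mul a).exp

lemma norm_le_exp_mul_add_of_hasDerivAt {y g : ℝ → ℂ} {a G s t : ℝ} (ha : 0 < a) (hst : s ≤ t)
    (hy : ∀ τ ∈ Set.Icc s t, HasDerivAt y (-(a : ℂ) * y τ + g τ) τ)
    (hg : ∀ τ ∈ Set.Icc s t, ‖g τ‖ ≤ G) :
    ‖y t‖ ≤ Real.exp (-a * (t - s)) * ‖y s‖ + G / a := by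
  have hG : 0 ≤ G := (norm_nonneg _).trans (hg s ⟨le_rfl, hst⟩)
  have hnorm (τ : ℝ) (z : ℂ) : ‖(Real.exp (a * τ) : ℂ) * z‖ = Real.exp (a * τ) * ‖z‖ := by
    rw [norm_mul, Complex.norm_real, Real.norm_of_nonneg (Real.exp_pos _).le]
  have hconj : ∀ τ ∈ Set.Icc s t, HasDerivAt (fun τ => (Real.exp (a * τ) : ℂ) * y τ)
      ((Real.exp (a * τ) : ℂ) * g τ) τ := fun τ hτ => by
    refine ((hasDerivAt_exp_const_mul a τ).ofReal_comp.mul (hy τ hτ)).congr_deriv ?_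
    push_cast; ring
  have hbarrier (τ : ℝ) : HasDerivAt (fun τ => Real.exp (a * s) * ‖y s‖ +
      G / a * (Real.exp (a * τ) - Real.exp (a * s))) (G * Real.exp (a * τ)) τ := by
    refine ((((hasDerivAt_exp_const_mul a τ).sub_const _).const_mul _).const_add _).congr_deriv ?_
    field_simp
  have hfence := image_norm_le_of_norm_deriv_right_le_deriv_boundary
    (fun τ hτ => (hconj τ hτ).continuousAt.continuousWithinAt)
    (fun τ hτ => (hconj τ ⟨hτ.1, hτ.2.le⟩).hasDerivWithinAt)
    (by rw [hnorm]; simp) hbarrier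
    (fun τ hτ => by
      rw [hnorm, mul_comm]
      exact mul_le_mul_of_nonneg_right (hg τ ⟨hτ.1, hτ.2.le⟩) (Real.exp_pos _).le)
    (right_mem_Icc.mpr hst)
  rw [hnorm] at hfence
  refine le_of_mul_le_mul_left (hfence.trans ?_) (Real.exp_pos (a * t))
  have hexp : Real.exp (a * t) * Real.exp (-a * (t - s)) = Real.exp (a * s) := by
    rw [← Real.exp_add]; ring_nf
  have hdrop : 0 ≤ G / a * Real.exp (a * s) := by positivity
  rw [mul_add, ← mul_assoc, hexp]
  linarith

lemma pow_mul_exp_neg_le (n : ℕ) {m : ℕ} (hm : m ≠ 0) {x δ : ℝ} (hx : 1 ≤ x) (hδ : 0 < δ) :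
    x ^ n * Real.exp (-(δ * x ^ m)) ≤ n.factorial / δ ^ n := by
  have hexp := Real.pow_div_factorial_le_exp (δ * x ^ m) (by positivity) n
  rw [div_le_iff₀ (by positivity), mul_pow] at hexp
  have hpow : x ^ n ≤ (x ^ m) ^ n := pow_le_pow_left₀ (by linarith) (le_self_pow₀ hx hm) n
  rw [Real.exp_neg, ← div_eq_mul_inv, div_le_div_iff₀ (Real.exp_pos _) (by positivity)]
  calc x ^ n * δ ^ n ≤ (x ^ m) ^ n * δ ^ n := by gcongr
    _ ≤ n.factorial * Real.exp (δ * x ^ m) := by linarith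

variable {d : ℕ} {S : Finset (Freq d)} {ν T : ℝ}

lemma IsGalerkinSol.quarterNorm_pow_mul_norm_le {c : ℝ → Freq d → ℂ} (hc : IsGalerkinSol S ν T c)
    (hν : 0 < ν) (n : ℕ) {t₀ R G : ℝ} (ht₀ : 0 < t₀)
    (hR : ∀ t ∈ Set.Icc 0 T, l2Sq S (c t) ≤ R) {k : Freq d} (hk : k ∈ S) (hk₀ : k ≠ 0)
    (hforce : ∀ t ∈ Set.Icc (t₀ / 2) T, quarterNorm k ^ n *
      ‖((freqNorm k ^ 2 : ℝ) : ℂ) * c t k - cubicTerm S (c t) k‖ ≤ G * quarterNorm k ^ 16)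
    {t : ℝ} (ht : t ∈ Set.Icc t₀ T) :
    quarterNorm k ^ n * ‖c t k‖ ≤ n.factorial / (ν * (t₀ / 2)) ^ n * √R + G / ν := by
  have hpos := quarterNorm_pos hk₀
  have hmem : ∀ τ ∈ Set.Icc (t - t₀ / 2) t, τ ∈ Set.Icc (t₀ / 2) T := fun τ hτ =>
    ⟨by linarith [hτ.1, ht.1], hτ.2.trans ht.2⟩
  have hduhamel := norm_le_exp_mul_add_of_hasDerivAt (y := fun s => c s k)
    (g := fun t => ((freqNorm k ^ 2 : ℝ) : ℂ) * c t k - cubicTerm S (c t) k)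
    (a := ν * quarterNorm k ^ 16) (G := G * quarterNorm k ^ 16 / quarterNorm k ^ n)
    (s := t - t₀ / 2) (t := t) (by positivity) (by linarith)
    (fun τ hτ => by
      refine (hc.hasDerivAt τ ⟨by linarith [(hmem τ hτ).1], (hmem τ hτ).2⟩ k hk).congr_deriv ?_
      rw [galerkinField, freqNorm_pow k 4]
      push_cast; ring)
    (fun τ hτ => by
      rw [le_div_iff₀ (by positivity), mul_comm]
      exact hforce τ (hmem τ hτ))
  have hinitial : ‖c (t - t₀ / 2) k‖ ≤ √R :=
    Real.le_sqrt_of_sq_le ((norm_sq_le_l2Sq S _ hk).trans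
      (hR _ ⟨by linarith [ht.1], by linarith [ht.2]⟩))
  have hsmooth := pow_mul_exp_neg_le n (m := 16) (by norm_num) (one_le_quarterNorm hk₀)
    (show 0 < ν * (t₀ / 2) by positivity)
  calc quarterNorm k ^ n * ‖c t k‖
      ≤ quarterNorm k ^ n * (Real.exp (-(ν * quarterNorm k ^ 16) * (t - (t - t₀ / 2))) *
          ‖c (t - t₀ / 2) k‖ + G * quarterNorm k ^ 16 / quarterNorm k ^ n /
            (ν * quarterNorm k ^ 16)) := by gcongr
    _ = quarterNorm k ^ n * Real.exp (-(ν * (t₀ / 2) * quarterNorm k ^ 16)) *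
          ‖c (t - t₀ / 2) k‖ + G / ν := by
        have hexponent : -(ν * quarterNorm k ^ 16) * (t - (t - t₀ / 2)) =
            -(ν * (t₀ / 2) * quarterNorm k ^ 16) := by ring
        rw [mul_add, ← mul_assoc, hexponent]
        congr 1
        field_simp
    _ ≤ n.factorial / (ν * (t₀ / 2)) ^ n * √R + G / ν := by gcongr

end LinearSmoothing

section CubicTermDecay

lemma sum_ite_sub_add_eq_pairProducts_le {G : Type*} [AddCommGroup G] [DecidableEq G]
    (S : Finset G) {v : G → ℝ} (hv : ∀ k, 0 ≤ v k) (k : G) :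
    (∑ a ∈ S, ∑ b ∈ S, ∑ m ∈ S,
      if a - b + m = k then v b * v m + v a * v m + v a * v b else 0) ≤
        3 * (∑ l ∈ S, v l) ^ 2 := by
  have hsplit (a b m : G) :
      (if a - b + m = k then v b * v m + v a * v m + v a * v b else 0) =
        (if k + b - m = a then v b * v m else 0) + (if a + m - k = b then v a * v m else 0) +
          (if k - a + b = m then v a * v b else 0) := by
    have ha : k + b - m = a ↔ a - b + m = k := by
      constructor <;> rintro rfl <;> abel
    have hb : a + m - k = b ↔ a - b + m = k := by
      constructor <;> rintro rfl <;> abel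
    have hm : k - a + b = m ↔ a - b + m = k := by
      constructor <;> rintro rfl <;> abel
    simp only [ha, hb, hm]
    split_ifs <;> simp
  have hsq : (∑ l ∈ S, v l) ^ 2 = ∑ a ∈ S, ∑ m ∈ S, v a * v m := by
    rw [sq, Finset.sum_mul_sum]
  have hpair (a b l : G) : (∑ m ∈ S, if l = m then v a * v b else 0) ≤ v a * v b :=
    sum_ite_eq_le S (f := fun _ => v a * v b) (fun _ => mul_nonneg (hv a) (hv b)) l
  have hsolve_a : (∑ a ∈ S, ∑ b ∈ S, ∑ m ∈ S, if k + b - m = a then v b * v m else 0) ≤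
      (∑ l ∈ S, v l) ^ 2 := by
    rw [hsq, Finset.sum_comm]
    refine Finset.sum_le_sum fun b _ => ?_
    rw [Finset.sum_comm]
    exact Finset.sum_le_sum fun m _ => hpair b m _
  have hsolve_b : (∑ a ∈ S, ∑ b ∈ S, ∑ m ∈ S, if a + m - k = b then v a * v m else 0) ≤
      (∑ l ∈ S, v l) ^ 2 := by
    rw [hsq]
    refine Finset.sum_le_sum fun a _ => ?_
    rw [Finset.sum_comm]
    exact Finset.sum_le_sum fun m _ => hpair a m _
  have hsolve_m : (∑ a ∈ S, ∑ b ∈ S, ∑ m ∈ S, if k - a + b = m then v a * v b else 0) ≤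
      (∑ l ∈ S, v l) ^ 2 := by
    rw [hsq]
    exact Finset.sum_le_sum fun a _ => Finset.sum_le_sum fun b _ => hpair a b _
  simp_rw [hsplit, Finset.sum_add_distrib]
  linarith

variable {d : ℕ} {S : Finset (Freq d)} {ν : ℝ} {c : Freq d → ℂ} {B : ℝ} {q : ℕ}

-- The largest of the three frequencies absorbs `|k|^{q/4}` and `|y|^{3/4} |z|^{3/4}`.
lemma quarterNorm_pow_mul_triple_le_of_dominant {x y z k : Freq d}
    (hyx : quarterNorm y ≤ quarterNorm x) (hzx : quarterNorm z ≤ quarterNorm x)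
    (hk : freqNorm k ≤ freqNorm x + freqNorm y + freqNorm z)
    (hB : quarterNorm x ^ (q + 10) * ‖c x‖ ≤ B) :
    quarterNorm k ^ q *
        ((freqNorm x * ‖c x‖) * (freqNorm y * ‖c y‖) * (freqNorm z * ‖c z‖)) ≤
      3 ^ q * B * ((quarterNorm y * ‖c y‖) * (quarterNorm z * ‖c z‖)) := by
  have hx₀ := quarterNorm_nonneg x
  have hy₀ := quarterNorm_nonneg y
  have hz₀ := quarterNorm_nonneg z
  have hk₀ := quarterNorm_nonneg k
  have hkx : quarterNorm k ≤ 3 * quarterNorm x := by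
    refine quarterNorm_le_of_freqNorm_le (by positivity) (hk.trans ?_)
    have hy4 := pow_le_pow_left₀ hy₀ hyx 4
    have hz4 := pow_le_pow_left₀ hz₀ hzx 4
    have hx4 := pow_nonneg hx₀ 4
    simp only [← quarterNorm_pow_four]
    linarith [mul_pow 3 (quarterNorm x) 4]
  simp only [← quarterNorm_pow_four]
  calc quarterNorm k ^ q * (quarterNorm x ^ 4 * ‖c x‖ * (quarterNorm y ^ 4 * ‖c y‖) *
        (quarterNorm z ^ 4 * ‖c z‖))
      = quarterNorm k ^ q * quarterNorm y ^ 3 * quarterNorm z ^ 3 * (quarterNorm x ^ 4 * ‖c x‖ *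
          ((quarterNorm y * ‖c y‖) * (quarterNorm z * ‖c z‖))) := by ring
    _ ≤ (3 * quarterNorm x) ^ q * quarterNorm x ^ 3 * quarterNorm x ^ 3 *
          (quarterNorm x ^ 4 * ‖c x‖ * ((quarterNorm y * ‖c y‖) * (quarterNorm z * ‖c z‖))) := by
        gcongr
    _ = 3 ^ q * (quarterNorm x ^ (q + 10) * ‖c x‖) *
          ((quarterNorm y * ‖c y‖) * (quarterNorm z * ‖c z‖)) := by ring
    _ ≤ 3 ^ q * B * ((quarterNorm y * ‖c y‖) * (quarterNorm z * ‖c z‖)) := by gcongr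

lemma quarterNorm_pow_mul_triple_le (hB : ∀ k ∈ S, quarterNorm k ^ (q + 10) * ‖c k‖ ≤ B)
    {a b m k : Freq d} (ha : a ∈ S) (hb : b ∈ S) (hm : m ∈ S) (h : a - b + m = k) :
    quarterNorm k ^ q *
        ((freqNorm a * ‖c a‖) * (freqNorm b * ‖c b‖) * (freqNorm m * ‖c m‖)) ≤
      3 ^ q * B * ((quarterNorm b * ‖c b‖) * (quarterNorm m * ‖c m‖) +
        (quarterNorm a * ‖c a‖) * (quarterNorm m * ‖c m‖) +
          (quarterNorm a * ‖c a‖) * (quarterNorm b * ‖c b‖)) := by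
  have hk : freqNorm k ≤ freqNorm a + freqNorm b + freqNorm m := by
    rw [← h]
    exact (freqNorm_add_le _ _).trans (by linarith [freqNorm_sub_le a b])
  have hB₀ : 0 ≤ B :=
    (mul_nonneg (pow_nonneg (quarterNorm_nonneg a) _) (norm_nonneg _)).trans (hB a ha)
  have hpair (x y : Freq d) :
      0 ≤ 3 ^ q * B * ((quarterNorm x * ‖c x‖) * (quarterNorm y * ‖c y‖)) := by
    have hx := quarterNorm_nonneg x
    have hy := quarterNorm_nonneg y
    positivity
  have hbm := hpair b m
  have ham := hpair a m
  have hab := hpair a b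
  rcases le_total (quarterNorm a) (quarterNorm b) with hle | hle <;>
    [rcases le_total (quarterNorm b) (quarterNorm m) with hle' | hle';
     rcases le_total (quarterNorm a) (quarterNorm m) with hle' | hle']
  · have hdom := quarterNorm_pow_mul_triple_le_of_dominant (k := k) (hle.trans hle') hle'
      (by linarith) (hB m hm)
    linarith
  · have hdom := quarterNorm_pow_mul_triple_le_of_dominant (k := k) hle hle' (by linarith)
      (hB b hb)
    linarith
  · have hdom := quarterNorm_pow_mul_triple_le_of_dominant (k := k) hle' (hle.trans hle')
      (by linarith) (hB m hm)
    linarith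
  · have hdom := quarterNorm_pow_mul_triple_le_of_dominant hle hle' hk (hB a ha)
    linarith

lemma quarterNorm_pow_mul_norm_cubicTerm_le (hB₀ : 0 ≤ B)
    (hB : ∀ k ∈ S, quarterNorm k ^ (q + 10) * ‖c k‖ ≤ B) (k : Freq d) :
    quarterNorm k ^ q * ‖cubicTerm S c k‖ ≤
      quarterNorm k ^ 4 * (3 ^ q * B * (3 * (∑ l ∈ S, quarterNorm l * ‖c l‖) ^ 2)) := by
  have hk₀ := quarterNorm_nonneg k
  have hconv := sum_ite_sub_add_eq_pairProducts_le S (v := fun l => quarterNorm l * ‖c l‖)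
    (fun l => mul_nonneg (quarterNorm_nonneg l) (norm_nonneg _)) k
  refine (mul_le_mul_of_nonneg_left (norm_cubicTerm_le_sum S c k) (pow_nonneg hk₀ q)).trans ?_
  rw [← mul_assoc (quarterNorm k ^ 4)]
  refine le_trans ?_ (mul_le_mul_of_nonneg_left hconv
    (show 0 ≤ quarterNorm k ^ 4 * (3 ^ q * B) by positivity))
  simp_rw [Finset.mul_sum]
  refine Finset.sum_le_sum fun a ha => Finset.sum_le_sum fun b hb =>
    Finset.sum_le_sum fun m hm => ?_
  split_ifs with h
  · have htriple := mul_le_mul_of_nonneg_left (quarterNorm_pow_mul_triple_le hB ha hb hm h)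
      (pow_nonneg hk₀ 4)
    rw [quarterNorm_pow_four k] at htriple ⊢
    linarith
  · simp

lemma weightedSq_four_le_convexEnergy (hν : 0 < ν) (c : Freq d → ℂ) :
    weightedSq S 4 c ≤ 2 / ν * convexEnergy S ν c := by
  have hquartic : 0 ≤ 2 / ν * quarticEnergy S c :=
    mul_nonneg (by positivity) (quarticEnergy_nonneg S c)
  have hexpand : 2 / ν * convexEnergy S ν c = weightedSq S 4 c + 2 / ν * quarticEnergy S c := by
    rw [convexEnergy]; field_simp
  linarith

lemma quarticEnergy_le_convexEnergy (hν : 0 < ν) (c : Freq d → ℂ) :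
    quarticEnergy S c ≤ convexEnergy S ν c :=
  le_add_of_nonneg_left (mul_nonneg (by positivity) (weightedSq_nonneg S 4 c))

lemma sq_sum_quarterNorm_mul_norm_le (hd : d ≤ 3) (hν : 0 < ν) (h0 : (0 : Freq d) ∉ S)
    (c : Freq d → ℂ) :
    (∑ l ∈ S, quarterNorm l * ‖c l‖) ^ 2 ≤ 2 / ν * convexEnergy S ν c * latticeSumBound := by
  have hfactor : ∀ l ∈ S,
      quarterNorm l * ‖c l‖ = (quarterNorm l ^ 8 * ‖c l‖) * (quarterNorm l ^ 7)⁻¹ := fun l hl => by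
    have hpos := quarterNorm_pos (ne_of_mem_of_not_mem hl h0)
    field_simp
  have hweight : ∑ l ∈ S, (quarterNorm l ^ 8 * ‖c l‖) ^ 2 = weightedSq S 4 c := by
    refine Finset.sum_congr rfl fun l _ => ?_
    rw [freqNorm_pow]; ring
  have hlattice : ∑ l ∈ S, ((quarterNorm l ^ 7)⁻¹) ^ 2 ≤ latticeSumBound := by
    simpa only [inv_pow, ← pow_mul] using sum_inv_quarterNorm_pow_le hd S h0
  have henergy := convexEnergy_nonneg (S := S) hν c
  rw [Finset.sum_congr rfl hfactor]
  refine (Finset.sum_mul_sq_le_sq_mul_sq S _ _).trans ?_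
  rw [hweight]
  exact mul_le_mul (weightedSq_four_le_convexEnergy hν c) hlattice (by positivity) (by positivity)

lemma quarterNorm_pow_mul_norm_cubicTerm_le_of_convexEnergy_le (hd : d ≤ 3) (hν : 0 < ν)
    (h0 : (0 : Freq d) ∉ S) (hB₀ : 0 ≤ B)
    (hB : ∀ k ∈ S, quarterNorm k ^ (q + 10) * ‖c k‖ ≤ B) {P : ℝ} (hP : convexEnergy S ν c ≤ P)
    (k : Freq d) :
    quarterNorm k ^ q * ‖cubicTerm S c k‖ ≤
      quarterNorm k ^ 4 * (3 ^ q * B * (3 * (2 / ν * P * latticeSumBound))) := by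
  have hL := latticeSumBound_pos
  have hsum : (∑ l ∈ S, quarterNorm l * ‖c l‖) ^ 2 ≤ 2 / ν * P * latticeSumBound :=
    (sq_sum_quarterNorm_mul_norm_le hd hν h0 c).trans (by gcongr)
  exact (quarterNorm_pow_mul_norm_cubicTerm_le hB₀ hB k).trans (by gcongr)

end CubicTermDecay

section Bootstrap

variable {d : ℕ} {ν T R t₀ : ℝ}

lemma exists_convexEnergy_le (d : ℕ) (hν : 0 < ν) (T R : ℝ) (ht₀ : 0 < t₀) :
    ∃ P, 0 ≤ P ∧ ∀ (S : Finset (Freq d)) (c : ℝ → Freq d → ℂ), IsGalerkinSol S ν T c →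
      l2Sq S (c 0) ≤ R → ∀ t ∈ Set.Icc t₀ T, convexEnergy S ν (c t) ≤ P :=
  ⟨max 0 _, le_max_left _ _, fun _ _ hc hR _ ht =>
    (hc.convexEnergy_le_of_pos hν hR ht₀ ht).trans (le_max_right 0 _)⟩

lemma norm_symbol_mul_sub_cubicTerm_le (S : Finset (Freq d)) (c : Freq d → ℂ) (k : Freq d) :
    ‖((freqNorm k ^ 2 : ℝ) : ℂ) * c k - cubicTerm S c k‖ ≤
      quarterNorm k ^ 8 * ‖c k‖ + ‖cubicTerm S c k‖ := by
  refine (norm_sub_le _ _).trans_eq ?_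
  rw [norm_mul, Complex.norm_real, Real.norm_of_nonneg (by positivity), freqNorm_pow]

lemma quarterNorm_pow_eight_mul_norm_le {S : Finset (Freq d)} (hν : 0 < ν) {c : Freq d → ℂ}
    {P : ℝ} (hP : convexEnergy S ν c ≤ P) {k : Freq d} (hk : k ∈ S) :
    quarterNorm k ^ 8 * ‖c k‖ ≤ √(2 / ν * P) := by
  apply Real.le_sqrt_of_sq_le
  calc (quarterNorm k ^ 8 * ‖c k‖) ^ 2 = freqNorm k ^ 4 * ‖c k‖ ^ 2 := by
        rw [freqNorm_pow]; ring
    _ ≤ weightedSq S 4 c :=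
        Finset.single_le_sum (f := fun k => freqNorm k ^ 4 * ‖c k‖ ^ 2)
          (fun k _ => by have := freqNorm_nonneg k; positivity) hk
    _ ≤ 2 / ν * P := (weightedSq_four_le_convexEnergy hν c).trans (by gcongr)

lemma uniformDecay_twelve (hν : 0 < ν) (T R : ℝ) (ht₀ : 0 < t₀) : UniformDecay d ν T R 12 t₀ := by
  obtain ⟨P, -, hP⟩ := exists_convexEnergy_le d hν T R (half_pos ht₀)
  refine ⟨max 0 _, le_max_left _ _, fun S c h0 hc hR t ht k hk =>
    (hc.quarterNorm_pow_mul_norm_le hν 12 ht₀ (fun t ht => hc.l2Sq_le hν hR ht) hk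
      (ne_of_mem_of_not_mem hk h0) (G := √(2 / ν * P) + (1 + 4 * P)) ?_ ht).trans
        (le_max_right _ _)⟩
  intro s hs
  have hone : 1 ≤ quarterNorm k ^ 4 := one_le_pow₀ (one_le_quarterNorm (ne_of_mem_of_not_mem hk h0))
  have hcubic : ‖cubicTerm S (c s) k‖ ≤ quarterNorm k ^ 4 * (1 + 4 * P) := by
    refine (norm_cubicTerm_le_quarticEnergy S (c s) hk).trans ?_
    rw [quarterNorm_pow_four]
    refine mul_le_mul_of_nonneg_left ?_ (freqNorm_nonneg k)
    linarith [quarticEnergy_le_convexEnergy (S := S) hν (c s), hP S c hc hR s hs]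
  have hforce : ‖((freqNorm k ^ 2 : ℝ) : ℂ) * c s k - cubicTerm S (c s) k‖ ≤
      quarterNorm k ^ 4 * √(2 / ν * P) + quarterNorm k ^ 4 * (1 + 4 * P) := by
    refine (norm_symbol_mul_sub_cubicTerm_le S (c s) k).trans (add_le_add ?_ hcubic)
    exact (quarterNorm_pow_eight_mul_norm_le hν (hP S c hc hR s hs) hk).trans
      (le_mul_of_one_le_left (Real.sqrt_nonneg _) hone)
  calc quarterNorm k ^ 12 * ‖((freqNorm k ^ 2 : ℝ) : ℂ) * c s k - cubicTerm S (c s) k‖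
      ≤ quarterNorm k ^ 12 *
          (quarterNorm k ^ 4 * √(2 / ν * P) + quarterNorm k ^ 4 * (1 + 4 * P)) := by
        gcongr
    _ = (√(2 / ν * P) + (1 + 4 * P)) * quarterNorm k ^ 16 := by ring

namespace UniformDecay

lemma mono {m n : ℕ} (hmn : m ≤ n) (h : UniformDecay d ν T R n t₀) :
    UniformDecay d ν T R m t₀ := by
  obtain ⟨B, hB₀, hB⟩ := h
  refine ⟨B, hB₀, fun S c h0 hc hR t ht k hk => le_trans ?_ (hB S c h0 hc hR t ht k hk)⟩
  have := one_le_quarterNorm (ne_of_mem_of_not_mem hk h0)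
  gcongr

lemma add_two (hd : d ≤ 3) (hν : 0 < ν) (ht₀ : 0 < t₀) {q : ℕ}
    (h : UniformDecay d ν T R (q + 10) (t₀ / 2)) : UniformDecay d ν T R (q + 12) t₀ := by
  obtain ⟨B, hB₀, hB⟩ := h
  obtain ⟨P, -, hP⟩ := exists_convexEnergy_le d hν T R (half_pos ht₀)
  set Q := 3 ^ q * B * (3 * (2 / ν * P * latticeSumBound))
  refine ⟨max 0 _, le_max_left _ _, fun S c h0 hc hR t ht k hk =>
    (hc.quarterNorm_pow_mul_norm_le hν _ ht₀ (fun t ht => hc.l2Sq_le hν hR ht) hk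
      (ne_of_mem_of_not_mem hk h0) (G := B + Q) ?_ ht).trans (le_max_right _ _)⟩
  intro s hs
  have hone := one_le_quarterNorm (ne_of_mem_of_not_mem hk h0)
  have hcubic : quarterNorm k ^ q * ‖cubicTerm S (c s) k‖ ≤ quarterNorm k ^ 4 * Q :=
    quarterNorm_pow_mul_norm_cubicTerm_le_of_convexEnergy_le hd hν h0 hB₀
      (hB S c h0 hc hR s hs) (hP S c hc hR s hs) k
  have hlinear := hB S c h0 hc hR s hs k hk
  calc quarterNorm k ^ (q + 12) * ‖((freqNorm k ^ 2 : ℝ) : ℂ) * c s k - cubicTerm S (c s) k‖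
      ≤ quarterNorm k ^ (q + 12) * (quarterNorm k ^ 8 * ‖c s k‖ + ‖cubicTerm S (c s) k‖) := by
        gcongr
        exact norm_symbol_mul_sub_cubicTerm_le S (c s) k
    _ = quarterNorm k ^ 10 * (quarterNorm k ^ (q + 10) * ‖c s k‖) +
          quarterNorm k ^ 12 * (quarterNorm k ^ q * ‖cubicTerm S (c s) k‖) := by ring
    _ ≤ quarterNorm k ^ 16 * B + quarterNorm k ^ 12 * (quarterNorm k ^ 4 * Q) := by
        gcongr
        norm_num
    _ = (B + Q) * quarterNorm k ^ 16 := by ring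

end UniformDecay

lemma uniformDecay (hd : d ≤ 3) (hν : 0 < ν) (T R : ℝ) (n : ℕ) (ht₀ : 0 < t₀) :
    UniformDecay d ν T R n t₀ := by
  suffices heven : ∀ q t₀, 0 < t₀ → UniformDecay d ν T R (2 * q + 12) t₀ from
    (heven n t₀ ht₀).mono (by omega)
  intro q
  induction q with
  | zero => exact fun t₀ ht₀ => uniformDecay_twelve hν T R ht₀
  | succ q ih => exact fun t₀ ht₀ => .add_two hd hν ht₀ (q := 2 * q + 2) (ih _ (half_pos ht₀))

lemma norm_symbol_le (hν : 0 < ν) (k : Freq d) :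
    ‖((-(ν * freqNorm k ^ 4) + freqNorm k ^ 2 : ℝ) : ℂ)‖ ≤ ν * freqNorm k ^ 4 + freqNorm k ^ 2 := by
  rw [Complex.norm_real]
  refine (norm_add_le _ _).trans_eq ?_
  rw [norm_neg, Real.norm_of_nonneg (by positivity), Real.norm_of_nonneg (by positivity)]

lemma norm_galerkinField_le (S : Finset (Freq d)) (hν : 0 < ν) (c : Freq d → ℂ) (k : Freq d) :
    ‖galerkinField S ν c k‖ ≤
      (ν * quarterNorm k ^ 16 + quarterNorm k ^ 8) * ‖c k‖ + ‖cubicTerm S c k‖ := by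
  refine (norm_sub_le _ _).trans ?_
  rw [norm_mul]
  gcongr
  refine (norm_symbol_le hν k).trans_eq ?_
  rw [freqNorm_pow, freqNorm_pow]

lemma exists_quarterNorm_pow_mul_norm_galerkinField_le (hd : d ≤ 3) (hν : 0 < ν) (T R : ℝ) (n : ℕ)
    (ht₀ : 0 < t₀) :
    ∃ B, 0 ≤ B ∧ ∀ (S : Finset (Freq d)) (c : ℝ → Freq d → ℂ), (0 : Freq d) ∉ S →
      IsGalerkinSol S ν T c → l2Sq S (c 0) ≤ R →
        ∀ t ∈ Set.Icc t₀ T, ∀ k ∈ S, quarterNorm k ^ n * ‖galerkinField S ν (c t) k‖ ≤ B := by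
  obtain ⟨B, hB₀, hB⟩ := uniformDecay (d := d) hd hν T R (n + 16) ht₀
  obtain ⟨P, hP₀, hP⟩ := exists_convexEnergy_le d hν T R ht₀
  have hL := latticeSumBound_pos
  set Q := 3 ^ (n + 4) * B * (3 * (2 / ν * P * latticeSumBound))
  refine ⟨ν * B + B + Q, by positivity, fun S c h0 hc hR t ht k hk => ?_⟩
  have hdecay : ∀ m ≤ n + 16, ∀ k ∈ S, quarterNorm k ^ m * ‖c t k‖ ≤ B := fun m hm k hk => by
    refine le_trans ?_ (hB S c h0 hc hR t ht k hk)
    have := one_le_quarterNorm (ne_of_mem_of_not_mem hk h0)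
    gcongr
  have hpos := quarterNorm_pos (ne_of_mem_of_not_mem hk h0)
  have hcubic : quarterNorm k ^ n * ‖cubicTerm S (c t) k‖ ≤ Q := by
    refine le_of_mul_le_mul_left (Eq.trans_le ?_
      (quarterNorm_pow_mul_norm_cubicTerm_le_of_convexEnergy_le (q := n + 4) hd hν h0 hB₀
        (hdecay _ (by omega)) (hP S c hc hR t ht) k)) (pow_pos hpos 4)
    ring
  calc quarterNorm k ^ n * ‖galerkinField S ν (c t) k‖
      ≤ quarterNorm k ^ n * ((ν * quarterNorm k ^ 16 + quarterNorm k ^ 8) * ‖c t k‖ +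
          ‖cubicTerm S (c t) k‖) := by
        gcongr
        exact norm_galerkinField_le S hν (c t) k
    _ = ν * (quarterNorm k ^ (n + 16) * ‖c t k‖) + quarterNorm k ^ (n + 8) * ‖c t k‖ +
          quarterNorm k ^ n * ‖cubicTerm S (c t) k‖ := by ring
    _ ≤ ν * B + B + Q := by
        gcongr
        exacts [hdecay _ le_rfl k hk, hdecay _ (by omega) k hk]

end Bootstrap

/-! ### High-frequency tails -/

/-- The truncation of the coefficients `a` to the frequencies with `|k|^{1/4} < 2^{j+1}`. -/
def lowPass {d : ℕ} (j : ℕ) (a : Freq d → ℂ) (k : Freq d) : ℂ :=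
  if quarterNorm k < 2 ^ (j + 1) then a k else 0

/-- A soft indicator of the frequencies with `|k|^{1/4} ≥ 2^j`. It decays towards low frequencies
just fast enough for `∑ j, 2^{4dj} tailWeight j k` to be comparable with `|k|^d`. -/
def tailWeight {d : ℕ} (j : ℕ) (k : Freq d) : ℝ := min 1 ((quarterNorm k / 2 ^ j) ^ (4 * d + 1))

/-- The squared `ℓ²` norm of the coefficients over `S`, weighted by `tailWeight j`. -/
def tailSq {d : ℕ} (S : Finset (Freq d)) (j : ℕ) (a : Freq d → ℂ) : ℝ :=
  ∑ k ∈ S, tailWeight j k * ‖a k‖ ^ 2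

/-- An upper bound for `∑ j ≥ J, 2^{4dj} tailWeight j k`. -/
def cumTailWeight {d : ℕ} (J : ℕ) (k : Freq d) : ℝ :=
  min (4 * quarterNorm k ^ (4 * d)) (quarterNorm k ^ (4 * d + 1) * (2 / 2 ^ J))

/-- The constant of `quarticEnergy_lowPass_le`, where `A` bounds the squared `H^{d/2}` norm. -/
def quarticConst (d : ℕ) (A : ℝ) : ℝ :=
  1 / 4 * (latticeSumBound * (2 ^ 14 + 1)) * 2 ^ (4 * d + 2) * A

/-- The constant of `IsGalerkinSol.sum_high_le`, where `A` bounds the squared `H^{d/2}` norm of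
the initial value. -/
def tailConst (d : ℕ) (ν A : ℝ) : ℝ :=
  2 * Real.exp (1 / (2 * ν)) + 2 * (2 / ν * (2 * (ν / 2 * 2 ^ 16 + quarticConst d A) +
    1 / (2 * ν) * (Real.exp (growthRate ν) * 2 ^ 16)))

/-- The constant of `IsGalerkinSol.l2Sq_sub_initial_le`, where `A` bounds the squared `H^{d/2}` norm
of the initial value. -/
def initialRate (d : ℕ) (ν A : ℝ) (L : ℕ) : ℝ :=
  2 * (2 * ((2 ^ L) ^ 16 * ((ν / 2 * 2 ^ 16 + quarticConst d A) * A)) +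
    (2 ^ L) ^ 16 * (2 ^ 16 * A) + growthRate ν * (Real.exp (growthRate ν) * A))

/-- The weight used in `quarticEnergy_le` for truncated coefficients: the homogeneous `H^{d/2}`
weight `|k|^d` divided by the summable `|k|^{7/4}` at low frequencies, and `|k|^{7/4}` itself at the
high frequencies, which do not contribute. -/
def lowPassWeight {d : ℕ} (j : ℕ) (k : Freq d) : ℝ :=
  if quarterNorm k < 2 ^ (j + 1) then quarterNorm k ^ (4 * d) / quarterNorm k ^ 7
  else quarterNorm k ^ 7

section TailWeights

variable {d : ℕ}

lemma tailWeight_nonneg (j : ℕ) (k : Freq d) : 0 ≤ tailWeight j k := by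
  have hk := quarterNorm_nonneg k
  exact le_min zero_le_one (by positivity)

lemma tailWeight_le_one (j : ℕ) (k : Freq d) : tailWeight j k ≤ 1 := min_le_left _ _

lemma tailWeight_eq_one {j : ℕ} {k : Freq d} (h : 2 ^ j ≤ quarterNorm k) : tailWeight j k = 1 :=
  min_eq_left (one_le_pow₀ ((one_le_div (by positivity)).mpr h))

lemma pow_le_two_pow_mul_tailWeight {j q : ℕ} {k : Freq d} (hq : 4 * d + 1 ≤ q)
    (h : quarterNorm k ≤ 2 ^ (j + 1)) :
    quarterNorm k ^ q ≤ (2 ^ j) ^ q * (2 ^ q * tailWeight j k) := by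
  have hk := quarterNorm_nonneg k
  rw [← div_le_iff₀' (by positivity), ← div_pow, ← div_le_iff₀' (by positivity), tailWeight,
    le_min_iff]
  constructor
  · refine div_le_one_of_le₀ (pow_le_pow_left₀ (by positivity) ?_ q) (by positivity)
    rw [div_le_iff₀ (by positivity)]
    linarith [pow_succ (2 : ℝ) j]
  · set x := quarterNorm k / 2 ^ j
    have hx : x / 2 ≤ 1 := by
      rw [div_div, ← pow_succ]
      exact div_le_one_of_le₀ h (by positivity)
    calc x ^ q / 2 ^ q = (x / 2) ^ q := (div_pow _ _ _).symm
      _ ≤ (x / 2) ^ (4 * d + 1) := pow_le_pow_of_le_one (by positivity) hx hq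
      _ ≤ x ^ (4 * d + 1) := by gcongr; linarith [show 0 ≤ x by positivity]

lemma sum_Ico_one_div_two_pow_le (J N : ℕ) :
    ∑ j ∈ Finset.Ico J N, (1 : ℝ) / 2 ^ j ≤ 2 / 2 ^ J := by
  rcases le_total N J with h | h
  · rw [Finset.Ico_eq_empty_of_le h, Finset.sum_empty]
    positivity
  · have htelescope : ∑ j ∈ Finset.Ico J N, (1 : ℝ) / 2 ^ j = 2 / 2 ^ J - 2 / 2 ^ N := by
      induction N, h using Nat.le_induction with
      | base => simp
      | succ n hn ih => rw [Finset.sum_Ico_succ_top hn, ih, pow_succ]; field_simp; ring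
    rw [htelescope]
    exact sub_le_self _ (by positivity)

lemma sum_Ico_tailWeight_le_pow_succ (k : Freq d) (J N : ℕ) :
    ∑ j ∈ Finset.Ico J N, (2 ^ j) ^ (4 * d) * tailWeight j k ≤
      quarterNorm k ^ (4 * d + 1) * (2 / 2 ^ J) := by
  have hk := quarterNorm_nonneg k
  calc ∑ j ∈ Finset.Ico J N, (2 ^ j) ^ (4 * d) * tailWeight j k
      ≤ ∑ j ∈ Finset.Ico J N, quarterNorm k ^ (4 * d + 1) * (1 / 2 ^ j) := by
        refine Finset.sum_le_sum fun j _ => ?_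
        calc (2 ^ j) ^ (4 * d) * tailWeight j k
            ≤ (2 ^ j) ^ (4 * d) * (quarterNorm k / 2 ^ j) ^ (4 * d + 1) := by
              gcongr; exact min_le_right _ _
          _ = quarterNorm k ^ (4 * d + 1) * (1 / 2 ^ j) := by
              rw [div_pow, pow_succ ((2 : ℝ) ^ j)]; field_simp
    _ ≤ quarterNorm k ^ (4 * d + 1) * (2 / 2 ^ J) := by
        rw [← Finset.mul_sum]
        gcongr
        exact sum_Ico_one_div_two_pow_le J N

lemma sum_Ico_tailWeight_le_pow (hd : 1 ≤ d) {k : Freq d} (hk : k ≠ 0) (J N : ℕ) :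
    ∑ j ∈ Finset.Ico J N, (2 ^ j) ^ (4 * d) * tailWeight j k ≤ 4 * quarterNorm k ^ (4 * d) := by
  set s := dyadicShell k
  have hk₀ := quarterNorm_nonneg k
  have hlow : ∑ j ∈ Finset.range (s + 1), (2 ^ j) ^ (4 * d) * tailWeight j k ≤
      2 * quarterNorm k ^ (4 * d) := by
    calc ∑ j ∈ Finset.range (s + 1), (2 ^ j) ^ (4 * d) * tailWeight j k
        ≤ ∑ j ∈ Finset.range (s + 1), ((2 : ℝ) ^ (4 * d)) ^ j := by
          refine Finset.sum_le_sum fun j _ => ?_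
          rw [← pow_mul, ← pow_mul, mul_comm j]
          exact mul_le_of_le_one_right (by positivity) (tailWeight_le_one j k)
      _ ≤ 2 * ((2 : ℝ) ^ (4 * d)) ^ s :=
          sum_pow_le_two_mul_pow (le_self_pow₀ one_le_two (by omega)) s
      _ ≤ 2 * quarterNorm k ^ (4 * d) := by
          rw [← pow_mul, mul_comm (4 * d), pow_mul]
          gcongr
          exact two_pow_dyadicShell_le hk
  have hhigh : ∑ j ∈ Finset.Ico (s + 1) N, (2 ^ j) ^ (4 * d) * tailWeight j k ≤
      2 * quarterNorm k ^ (4 * d) := by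
    refine (sum_Ico_tailWeight_le_pow_succ k (s + 1) N).trans ?_
    calc quarterNorm k ^ (4 * d + 1) * (2 / 2 ^ (s + 1))
        = 2 * quarterNorm k ^ (4 * d) * (quarterNorm k / 2 ^ (s + 1)) := by ring
      _ ≤ 2 * quarterNorm k ^ (4 * d) :=
          mul_le_of_le_one_right (by positivity)
            (div_le_one_of_le₀ (quarterNorm_lt_two_pow k).le (by positivity))
  have hsubset : Finset.Ico J N ⊆ Finset.range (s + 1) ∪ Finset.Ico (s + 1) N := fun j hj => by
    simp only [Finset.mem_union, Finset.mem_range, Finset.mem_Ico] at hj ⊢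
    omega
  refine (Finset.sum_le_sum_of_subset_of_nonneg hsubset fun j _ _ =>
    mul_nonneg (by positivity) (tailWeight_nonneg j k)).trans ?_
  rw [Finset.sum_union (by
    rw [Finset.range_eq_Ico]; exact Finset.Ico_disjoint_Ico_consecutive _ _ _)]
  linarith

lemma sum_Ico_tailWeight_le (hd : 1 ≤ d) {k : Freq d} (hk : k ≠ 0) (J N : ℕ) :
    ∑ j ∈ Finset.Ico J N, (2 ^ j) ^ (4 * d) * tailWeight j k ≤ cumTailWeight J k :=
  le_min (sum_Ico_tailWeight_le_pow hd hk J N) (sum_Ico_tailWeight_le_pow_succ k J N)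

lemma cumTailWeight_nonneg (J : ℕ) (k : Freq d) : 0 ≤ cumTailWeight J k := by
  have hk := quarterNorm_nonneg k
  exact le_min (by positivity) (by positivity)

lemma tailWeight_le_cumTailWeight (hd : 1 ≤ d) {k : Freq d} (hk : k ≠ 0) (j : ℕ) :
    tailWeight j k ≤ cumTailWeight j k := by
  refine le_trans ?_ (sum_Ico_tailWeight_le hd hk j (j + 1))
  rw [Nat.Ico_succ_singleton, Finset.sum_singleton]
  exact le_mul_of_one_le_left (tailWeight_nonneg j k) (one_le_pow₀ (one_le_pow₀ one_le_two))

lemma freqNorm_pow_le_cumTailWeight {J : ℕ} {k : Freq d} (h : 2 ^ J ≤ quarterNorm k) :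
    freqNorm k ^ d ≤ cumTailWeight J k := by
  have hk := quarterNorm_nonneg k
  have hpow : 0 ≤ quarterNorm k ^ (4 * d) := by positivity
  rw [freqNorm_pow]
  refine le_min (by linarith) ?_
  rw [pow_succ, mul_assoc]
  refine le_mul_of_one_le_right hpow ?_
  rw [mul_div_assoc', le_div_iff₀ (by positivity)]
  linarith

lemma cumTailWeight_mul_le (J : ℕ) (a : Freq d → ℂ) (k : Freq d) :
    cumTailWeight J k * ‖a k‖ ^ 2 ≤ 4 * (freqNorm k ^ d * ‖a k‖ ^ 2) := by
  rw [← mul_assoc, freqNorm_pow]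
  exact mul_le_mul_of_nonneg_right (min_le_left _ _) (by positivity)

lemma summable_cumTailWeight_mul {a : Freq d → ℂ}
    (ha : Summable fun k => freqNorm k ^ d * ‖a k‖ ^ 2) (J : ℕ) :
    Summable fun k => cumTailWeight J k * ‖a k‖ ^ 2 :=
  .of_nonneg_of_le (fun k => mul_nonneg (cumTailWeight_nonneg J k) (by positivity))
    (cumTailWeight_mul_le J a) (ha.mul_left 4)

lemma sum_cumTailWeight_mul_le_tsum {a : Freq d → ℂ}
    (ha : Summable fun k => freqNorm k ^ d * ‖a k‖ ^ 2)
    (S : Finset (Freq d)) (J : ℕ) :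
    ∑ k ∈ S, cumTailWeight J k * ‖a k‖ ^ 2 ≤ ∑' k, cumTailWeight J k * ‖a k‖ ^ 2 :=
  (summable_cumTailWeight_mul ha J).sum_le_tsum S fun k _ =>
    mul_nonneg (cumTailWeight_nonneg J k) (by positivity)

lemma tendsto_tsum_cumTailWeight_mul {a : Freq d → ℂ}
    (ha : Summable fun k => freqNorm k ^ d * ‖a k‖ ^ 2) :
    Tendsto (fun J => ∑' k, cumTailWeight J k * ‖a k‖ ^ 2) atTop (nhds 0) := by
  have hnonneg (J : ℕ) (k : Freq d) : 0 ≤ cumTailWeight J k * ‖a k‖ ^ 2 :=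
    mul_nonneg (cumTailWeight_nonneg J k) (by positivity)
  have hpointwise (k : Freq d) :
      Tendsto (fun J => cumTailWeight J k * ‖a k‖ ^ 2) atTop (nhds 0) := by
    have hgeom := (tendsto_pow_atTop_nhds_zero_of_lt_one (r := (1 / 2 : ℝ)) (by norm_num)
      (by norm_num)).const_mul (quarterNorm k ^ (4 * d + 1) * 2 * ‖a k‖ ^ 2)
    rw [mul_zero] at hgeom
    refine squeeze_zero (hnonneg · k) (fun J => ?_) hgeom
    calc cumTailWeight J k * ‖a k‖ ^ 2
        ≤ quarterNorm k ^ (4 * d + 1) * (2 / 2 ^ J) * ‖a k‖ ^ 2 := by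
          gcongr; exact min_le_right _ _
      _ = quarterNorm k ^ (4 * d + 1) * 2 * ‖a k‖ ^ 2 * (1 / 2) ^ J := by
          rw [div_pow, one_pow]; ring
  have hlim := tendsto_tsum_of_dominated_convergence (𝓕 := atTop) (ha.mul_left 4) hpointwise
    (.of_forall fun J k => by
      rw [Real.norm_of_nonneg (hnonneg J k)]
      exact cumTailWeight_mul_le J a k)
  simpa using hlim

end TailWeights

section LowPass

variable {d : ℕ} {S : Finset (Freq d)} {ν A : ℝ}

lemma quarticConst_nonneg (hA : 0 ≤ A) : 0 ≤ quarticConst d A := by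
  have hL := latticeSumBound_pos
  unfold quarticConst
  positivity

lemma tailConst_nonneg (hν : 0 < ν) (hA : 0 ≤ A) : 0 ≤ tailConst d ν A := by
  have hquartic := quarticConst_nonneg (d := d) hA
  unfold tailConst
  positivity

lemma lowPassWeight_pos {k : Freq d} (hk : k ≠ 0) (j : ℕ) : 0 < lowPassWeight j k := by
  have hpos := quarterNorm_pos hk
  unfold lowPassWeight
  split_ifs <;> positivity

lemma sum_inv_lowPassWeight_sq_le (hd : d ≤ 3) (h0 : (0 : Freq d) ∉ S) (j : ℕ) :
    ∑ k ∈ S, (lowPassWeight j k)⁻¹ ^ 2 ≤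
      latticeSumBound * (2 ^ 14 + 1) * 2 ^ (j * (14 - 4 * d)) := by
  have hlow : ∑ k ∈ S with quarterNorm k < 2 ^ (j + 1), (lowPassWeight j k)⁻¹ ^ 2 ≤
      latticeSumBound * 2 ^ 14 * 2 ^ (j * (14 - 4 * d)) := by
    refine (Finset.sum_congr rfl fun k hk => ?_).trans_le
      (sum_quarterNorm_pow_div_le hd _ (by simp [h0]) j fun k hk => (Finset.mem_filter.mp hk).2)
    rw [lowPassWeight, if_pos (Finset.mem_filter.mp hk).2, inv_div, div_pow, ← pow_mul, ← pow_mul]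
    congr 2
    ring
  have hhigh : ∑ k ∈ S with ¬quarterNorm k < 2 ^ (j + 1), (lowPassWeight j k)⁻¹ ^ 2 ≤
      latticeSumBound := by
    refine (Finset.sum_congr rfl fun k hk => ?_).trans_le
      (sum_inv_quarterNorm_pow_le hd _ (by simp [h0]))
    rw [lowPassWeight, if_neg (Finset.mem_filter.mp hk).2, inv_pow, ← pow_mul]
  have hone : latticeSumBound ≤ latticeSumBound * 2 ^ (j * (14 - 4 * d)) :=
    le_mul_of_one_le_right latticeSumBound_pos.le (one_le_pow₀ one_le_two)
  rw [← Finset.sum_filter_add_sum_filter_not S fun k => quarterNorm k < 2 ^ (j + 1)]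
  linarith

lemma freqNorm_sq_mul_lowPass_mul_lowPassWeight {k : Freq d} (hk : k ≠ 0) (j : ℕ)
    (a : Freq d → ℂ) :
    freqNorm k ^ 2 * ‖lowPass j a k‖ ^ 2 * lowPassWeight j k =
      if quarterNorm k < 2 ^ (j + 1) then quarterNorm k ^ (4 * d + 1) * ‖a k‖ ^ 2 else 0 := by
  have hpos := quarterNorm_pos hk
  unfold lowPass lowPassWeight
  split_ifs
  · rw [freqNorm_pow]; field_simp; ring
  · simp

lemma sum_lowPass_mul_lowPassWeight_le (h0 : (0 : Freq d) ∉ S) (j : ℕ) (a : Freq d → ℂ) :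
    ∑ k ∈ S, freqNorm k ^ 2 * ‖lowPass j a k‖ ^ 2 * lowPassWeight j k ≤
      2 ^ (j + 1) * weightedSq S d a := by
  rw [weightedSq, Finset.mul_sum]
  refine Finset.sum_le_sum fun k hk => ?_
  rw [freqNorm_sq_mul_lowPass_mul_lowPassWeight (ne_of_mem_of_not_mem hk h0)]
  have hk₀ := quarterNorm_nonneg k
  rw [freqNorm_pow]
  split_ifs with h
  · calc quarterNorm k ^ (4 * d + 1) * ‖a k‖ ^ 2
        = quarterNorm k * (quarterNorm k ^ (4 * d) * ‖a k‖ ^ 2) := by ring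
      _ ≤ 2 ^ (j + 1) * (quarterNorm k ^ (4 * d) * ‖a k‖ ^ 2) := by gcongr
  · positivity

lemma sum_lowPass_mul_lowPassWeight_le_tailSq (h0 : (0 : Freq d) ∉ S) (j : ℕ) (a : Freq d → ℂ) :
    ∑ k ∈ S, freqNorm k ^ 2 * ‖lowPass j a k‖ ^ 2 * lowPassWeight j k ≤
      (2 ^ j) ^ (4 * d + 1) * (2 ^ (4 * d + 1) * tailSq S j a) := by
  rw [tailSq, Finset.mul_sum, Finset.mul_sum]
  refine Finset.sum_le_sum fun k hk => ?_
  rw [freqNorm_sq_mul_lowPass_mul_lowPassWeight (ne_of_mem_of_not_mem hk h0)]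
  have hweight := tailWeight_nonneg j k
  split_ifs with h
  · have hbound := mul_le_mul_of_nonneg_right (pow_le_two_pow_mul_tailWeight le_rfl h.le)
      (show 0 ≤ ‖a k‖ ^ 2 by positivity)
    linarith
  · positivity

lemma quarticEnergy_lowPass_le (hd : d ≤ 3) (h0 : (0 : Freq d) ∉ S) {a : Freq d → ℂ}
    (hA : weightedSq S d a ≤ A) (j : ℕ) :
    quarticEnergy S (lowPass j a) ≤ (2 ^ j) ^ 16 * (quarticConst d A * tailSq S j a) := by
  have hA₀ : 0 ≤ A := (weightedSq_nonneg S d a).trans hA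
  have hL := latticeSumBound_pos
  have hpos (k) (hk : k ∈ S) := lowPassWeight_pos (ne_of_mem_of_not_mem hk h0) j
  set X := ∑ k ∈ S, freqNorm k ^ 2 * ‖lowPass j a k‖ ^ 2 * lowPassWeight j k
  have hX₀ : 0 ≤ X := Finset.sum_nonneg fun k hk => by have := hpos k hk; positivity
  have hXsq : X ^ 2 ≤ (2 ^ (j + 1) * A) *
      ((2 ^ j) ^ (4 * d + 1) * (2 ^ (4 * d + 1) * tailSq S j a)) := by
    rw [sq]
    exact mul_le_mul
      ((sum_lowPass_mul_lowPassWeight_le h0 j a).trans (by gcongr))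
      (sum_lowPass_mul_lowPassWeight_le_tailSq h0 j a) hX₀ (by positivity)
  have hexponent : ((2 : ℝ) ^ j) ^ 16 = (2 ^ j) ^ (14 - 4 * d) * 2 ^ j * (2 ^ j) ^ (4 * d + 1) := by
    rw [← pow_succ, ← pow_add]
    congr 1
    omega
  calc quarticEnergy S (lowPass j a)
      ≤ 1 / 4 * ((∑ k ∈ S, (lowPassWeight j k)⁻¹ ^ 2) * X ^ 2) := quarticEnergy_le S _ _ hpos
    _ ≤ 1 / 4 * ((latticeSumBound * (2 ^ 14 + 1) * 2 ^ (j * (14 - 4 * d))) * ((2 ^ (j + 1) * A) *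
          ((2 ^ j) ^ (4 * d + 1) * (2 ^ (4 * d + 1) * tailSq S j a)))) := by
        gcongr
        exact sum_inv_lowPassWeight_sq_le hd h0 j
    _ = (2 ^ j) ^ 16 * (quarticConst d A * tailSq S j a) := by
        rw [hexponent, quarticConst, pow_mul, pow_succ 2 j]
        ring

lemma l2Sq_sub_lowPass_le (S : Finset (Freq d)) (j : ℕ) (a : Freq d → ℂ) :
    l2Sq S (fun k => a k - lowPass j a k) ≤ tailSq S j a := by
  refine Finset.sum_le_sum fun k _ => ?_
  have hweight := tailWeight_nonneg j k
  simp only [lowPass]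
  split_ifs with h
  · rw [sub_self, norm_zero, zero_pow two_ne_zero]
    positivity
  · rw [sub_zero, tailWeight_eq_one (le_trans (by gcongr <;> simp) (not_lt.mp h)), one_mul]

lemma weightedSq_four_lowPass_le (hd : d ≤ 3) (S : Finset (Freq d)) (j : ℕ) (a : Freq d → ℂ) :
    weightedSq S 4 (lowPass j a) ≤ (2 ^ j) ^ 16 * (2 ^ 16 * tailSq S j a) := by
  rw [weightedSq, tailSq, Finset.mul_sum, Finset.mul_sum]
  refine Finset.sum_le_sum fun k _ => ?_
  have hweight := tailWeight_nonneg j k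
  unfold lowPass
  split_ifs with h
  · have hbound := mul_le_mul_of_nonneg_right
      (pow_le_two_pow_mul_tailWeight (d := d) (q := 16) (by omega) h.le)
      (show 0 ≤ ‖a k‖ ^ 2 by positivity)
    rw [freqNorm_pow]
    norm_num only at hbound ⊢
    linarith
  · rw [norm_zero, zero_pow two_ne_zero, mul_zero]
    positivity

lemma l2Sq_le_weightedSq (h0 : (0 : Freq d) ∉ S) (p : ℕ) (a : Freq d → ℂ) :
    l2Sq S a ≤ weightedSq S p a :=
  Finset.sum_le_sum fun _ hk => le_mul_of_one_le_left (by positivity)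
    (one_le_pow₀ (one_le_freqNorm (ne_of_mem_of_not_mem hk h0)))

lemma convexEnergy_lowPass_le (hd : d ≤ 3) (hν : 0 < ν) (h0 : (0 : Freq d) ∉ S) {a : Freq d → ℂ}
    (hA : weightedSq S d a ≤ A) (j : ℕ) :
    convexEnergy S ν (lowPass j a) ≤
      (2 ^ j) ^ 16 * ((ν / 2 * 2 ^ 16 + quarticConst d A) * tailSq S j a) := by
  have hlinear := mul_le_mul_of_nonneg_left (weightedSq_four_lowPass_le hd S j a)
    (show 0 ≤ ν / 2 by positivity)
  have hquartic := quarticEnergy_lowPass_le hd h0 hA j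
  rw [convexEnergy]
  linarith

end LowPass

section TailPropagation

variable {d : ℕ} {S : Finset (Freq d)} {ν A : ℝ} {c : ℝ → Freq d → ℂ} {t : ℝ}

lemma norm_add_sq_le_two_mul {E : Type*} [SeminormedAddCommGroup E] (u v : E) :
    ‖u + v‖ ^ 2 ≤ 2 * ‖u‖ ^ 2 + 2 * ‖v‖ ^ 2 := by
  linarith [pow_le_pow_left₀ (norm_nonneg _) (norm_add_le u v) 2, add_sq_le (a := ‖u‖) (b := ‖v‖)]

lemma sum_high_le_of_comparison (S : Finset (Freq d)) (u z : Freq d → ℂ) (j : ℕ) :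
    ∑ k ∈ S with 2 ^ j ≤ quarterNorm k, ‖u k‖ ^ 2 ≤
      2 * l2Sq S (fun k => u k - z k) + 2 * (weightedSq S 4 z / (2 ^ j) ^ 16) := by
  rw [l2Sq, weightedSq, Finset.sum_div, Finset.mul_sum, Finset.mul_sum, ← Finset.sum_add_distrib,
    Finset.sum_filter]
  refine Finset.sum_le_sum fun k _ => ?_
  split_ifs with h
  · have hz : ‖z k‖ ^ 2 ≤ freqNorm k ^ 4 * ‖z k‖ ^ 2 / (2 ^ j) ^ 16 := by
      rw [le_div_iff₀ (by positivity), freqNorm_pow, mul_comm]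
      gcongr
    have htriangle := norm_add_sq_le_two_mul (u k - z k) (z k)
    rw [sub_add_cancel] at htriangle
    linarith
  · positivity

namespace IsGalerkinSol

-- The solution starting from the truncated data is close to `c` by contraction, and its
-- high frequencies are small because its energy stays bounded.
lemma sum_high_le (hc : IsGalerkinSol S ν 1 c) (hd : d ≤ 3) (hν : 0 < ν) (h0 : (0 : Freq d) ∉ S)
    (hA : weightedSq S d (c 0) ≤ A) (j : ℕ) (ht : t ∈ Set.Icc (0 : ℝ) 1) :
    ∑ k ∈ S with 2 ^ j ≤ quarterNorm k, ‖c t k‖ ^ 2 ≤ tailConst d ν A * tailSq S j (c 0) := by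
  obtain ⟨z, hz, hz₀⟩ := exists_isGalerkinSol S hν zero_le_one (a := lowPass j (c 0))
    fun k hk => by rw [lowPass, hc.eq_zero_of_notMem 0 k hk, ite_self]
  set M := tailSq S j (c 0)
  have hcontraction : l2Sq S (fun k => c t k - z t k) ≤ Real.exp (1 / (2 * ν)) * M := by
    refine (hc.l2Sq_sub_le hz hν ht).trans (mul_le_mul ?_ ?_ (l2Sq_nonneg S _) (by positivity))
    · exact Real.exp_le_exp.mpr (mul_le_of_le_one_right (by positivity) ht.2)
    · rw [hz₀]
      exact l2Sq_sub_lowPass_le S j (c 0)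
  have hl2 : l2Sq S (z 0) ≤ (2 ^ j) ^ 16 * (2 ^ 16 * M) := by
    rw [hz₀]
    exact (l2Sq_le_weightedSq h0 4 _).trans (weightedSq_four_lowPass_le hd S j (c 0))
  have henergy : convexEnergy S ν (z t) ≤ (2 ^ j) ^ 16 *
      ((2 * (ν / 2 * 2 ^ 16 + quarticConst d A) +
        1 / (2 * ν) * (Real.exp (growthRate ν) * 2 ^ 16)) * M) := by
    have hinitial := convexEnergy_lowPass_le hd hν h0 hA j
    have hgrowth : 1 / (2 * ν) * (Real.exp (growthRate ν) * l2Sq S (z 0)) ≤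
        1 / (2 * ν) * (Real.exp (growthRate ν) * ((2 ^ j) ^ 16 * (2 ^ 16 * M))) := by gcongr
    have hevolve := hz.convexEnergy_le hν ht
    rw [mul_one] at hevolve
    rw [← hz₀] at hinitial
    linarith
  have hsobolev : weightedSq S 4 (z t) / (2 ^ j) ^ 16 ≤ 2 / ν *
      ((2 * (ν / 2 * 2 ^ 16 + quarticConst d A) +
        1 / (2 * ν) * (Real.exp (growthRate ν) * 2 ^ 16)) * M) := by
    rw [div_le_iff₀' (by positivity), mul_left_comm]
    exact (weightedSq_four_le_convexEnergy hν (z t)).trans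
      (mul_le_mul_of_nonneg_left henergy (by positivity))
  refine (sum_high_le_of_comparison S (c t) (z t) j).trans ?_
  rw [tailConst]
  linarith

end IsGalerkinSol

lemma freqNorm_pow_mul_le_sum_Ico {k : Freq d} (hk : k ≠ 0) {J N : ℕ}
    (hJ : 2 ^ J ≤ quarterNorm k) (hN : dyadicShell k < N) {x : ℝ} (hx : 0 ≤ x) :
    freqNorm k ^ d * x ≤ ∑ j ∈ Finset.Ico J N,
      2 ^ (4 * d) * (2 ^ j) ^ (4 * d) * if 2 ^ j ≤ quarterNorm k then x else 0 := by
  have hshell := quarterNorm_lt_two_pow k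
  have hk₀ := quarterNorm_nonneg k
  have hmem : dyadicShell k ∈ Finset.Ico J N := by
    refine Finset.mem_Ico.mpr ⟨?_, hN⟩
    exact Nat.lt_succ_iff.mp ((pow_lt_pow_iff_right₀ one_lt_two).mp (hJ.trans_lt hshell))
  refine le_trans ?_ (Finset.single_le_sum (fun j _ => ?_) hmem)
  · rw [if_pos (two_pow_dyadicShell_le hk), ← mul_pow, ← pow_succ', freqNorm_pow]
    gcongr
  · split_ifs <;> positivity

lemma IsGalerkinSol.sum_high_freqNorm_pow_le (hc : IsGalerkinSol S ν 1 c) (hd₁ : 1 ≤ d)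
    (hd : d ≤ 3) (hν : 0 < ν) (h0 : (0 : Freq d) ∉ S) (hA : weightedSq S d (c 0) ≤ A) (J : ℕ)
    (ht : t ∈ Set.Icc (0 : ℝ) 1) :
    ∑ k ∈ S with 2 ^ J ≤ quarterNorm k, freqNorm k ^ d * ‖c t k‖ ^ 2 ≤
      2 ^ (4 * d) * tailConst d ν A * ∑ k ∈ S, cumTailWeight J k * ‖c 0 k‖ ^ 2 := by
  have hA₀ : 0 ≤ A := (weightedSq_nonneg S d _).trans hA
  have hC := tailConst_nonneg (d := d) hν hA₀
  have hne (k) (hk : k ∈ S) : k ≠ 0 := ne_of_mem_of_not_mem hk h0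
  obtain ⟨N, hN⟩ : ∃ N, ∀ k ∈ S, dyadicShell k < N :=
    ⟨S.sup dyadicShell + 1, fun k hk => Nat.lt_succ_of_le (Finset.le_sup hk)⟩
  calc ∑ k ∈ S with 2 ^ J ≤ quarterNorm k, freqNorm k ^ d * ‖c t k‖ ^ 2
      ≤ ∑ k ∈ S, ∑ j ∈ Finset.Ico J N, 2 ^ (4 * d) * (2 ^ j) ^ (4 * d) *
          (if 2 ^ j ≤ quarterNorm k then ‖c t k‖ ^ 2 else 0) := by
        rw [Finset.sum_filter]
        refine Finset.sum_le_sum fun k hk => ?_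
        split_ifs with h
        · exact freqNorm_pow_mul_le_sum_Ico (hne k hk) h (hN k hk) (by positivity)
        · exact Finset.sum_nonneg fun j _ => by split_ifs <;> positivity
    _ = ∑ j ∈ Finset.Ico J N, 2 ^ (4 * d) * (2 ^ j) ^ (4 * d) *
          ∑ k ∈ S with 2 ^ j ≤ quarterNorm k, ‖c t k‖ ^ 2 := by
        rw [Finset.sum_comm]
        simp_rw [Finset.sum_filter, Finset.mul_sum]
    _ ≤ ∑ j ∈ Finset.Ico J N, 2 ^ (4 * d) * (2 ^ j) ^ (4 * d) *
          (tailConst d ν A * tailSq S j (c 0)) := by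
        gcongr
        exact hc.sum_high_le hd hν h0 hA _ ht
    _ = 2 ^ (4 * d) * tailConst d ν A *
          ∑ k ∈ S, (∑ j ∈ Finset.Ico J N, (2 ^ j) ^ (4 * d) * tailWeight j k) * ‖c 0 k‖ ^ 2 := by
        simp_rw [tailSq, Finset.mul_sum, Finset.sum_mul, Finset.mul_sum]
        rw [Finset.sum_comm]
        exact Finset.sum_congr rfl fun k _ => Finset.sum_congr rfl fun j _ => by ring
    _ ≤ 2 ^ (4 * d) * tailConst d ν A * ∑ k ∈ S, cumTailWeight J k * ‖c 0 k‖ ^ 2 := by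
        gcongr with k hk
        exact sum_Ico_tailWeight_le hd₁ (hne k hk) J N

end TailPropagation

/-! ### Uniform attainment of the initial value -/

section InitialValue

variable {d : ℕ} {S : Finset (Freq d)} {ν A : ℝ} {c : ℝ → Freq d → ℂ} {t : ℝ}

lemma initialRate_nonneg (hν : 0 < ν) (hA : 0 ≤ A) (L : ℕ) : 0 ≤ initialRate d ν A L := by
  have hquartic := quarticConst_nonneg (d := d) hA
  have hrate := growthRate_pos hν
  unfold initialRate
  positivity

lemma weightedSq_mono_exponent (h0 : (0 : Freq d) ∉ S) {p q : ℕ} (hpq : p ≤ q) (a : Freq d → ℂ) :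
    weightedSq S p a ≤ weightedSq S q a :=
  Finset.sum_le_sum fun _ hk => mul_le_mul_of_nonneg_right
    (pow_le_pow_right₀ (one_le_freqNorm (ne_of_mem_of_not_mem hk h0)) hpq) (by positivity)

lemma tailSq_le_l2Sq (S : Finset (Freq d)) (j : ℕ) (a : Freq d → ℂ) : tailSq S j a ≤ l2Sq S a :=
  Finset.sum_le_sum fun k _ => mul_le_of_le_one_left (by positivity) (tailWeight_le_one j k)

lemma tailSq_le_sum_cumTailWeight_mul (hd : 1 ≤ d) (h0 : (0 : Freq d) ∉ S) (j : ℕ)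
    (a : Freq d → ℂ) : tailSq S j a ≤ ∑ k ∈ S, cumTailWeight j k * ‖a k‖ ^ 2 :=
  Finset.sum_le_sum fun _ hk => mul_le_mul_of_nonneg_right
    (tailWeight_le_cumTailWeight hd (ne_of_mem_of_not_mem hk h0) j) (by positivity)

lemma l2Sq_sub_le_two_mul (S : Finset (Freq d)) (u a b : Freq d → ℂ) :
    l2Sq S (fun k => u k - a k) ≤
      2 * l2Sq S (fun k => u k - b k) + 2 * l2Sq S (fun k => a k - b k) := by
  simp only [l2Sq, Finset.mul_sum, ← Finset.sum_add_distrib]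
  refine Finset.sum_le_sum fun k _ => ?_
  have htriangle := norm_add_sq_le_two_mul (u k - b k) (b k - a k)
  rwa [sub_add_sub_cancel, norm_sub_rev (b k)] at htriangle

lemma sum_sobolev_sub_le (h0 : (0 : Freq d) ∉ S) (J : ℕ) (u a : Freq d → ℂ) :
    ∑ k ∈ S, (1 + freqNorm k ^ d) * ‖u k - a k‖ ^ 2 ≤
      (1 + (2 ^ J) ^ (4 * d)) * l2Sq S (fun k => u k - a k) +
        4 * (∑ k ∈ S with 2 ^ J ≤ quarterNorm k, freqNorm k ^ d * ‖u k‖ ^ 2 +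
          ∑ k ∈ S, cumTailWeight J k * ‖a k‖ ^ 2) := by
  rw [l2Sq, Finset.sum_filter, Finset.mul_sum, ← Finset.sum_add_distrib, Finset.mul_sum,
    ← Finset.sum_add_distrib]
  refine Finset.sum_le_sum fun k hk => ?_
  have hk₀ := quarterNorm_nonneg k
  split_ifs with h
  · have hone : 1 ≤ freqNorm k ^ d := one_le_pow₀ (one_le_freqNorm (ne_of_mem_of_not_mem hk h0))
    have htriangle := norm_add_sq_le_two_mul (u k) (-a k)
    rw [← sub_eq_add_neg, norm_neg] at htriangle
    have htail := mul_le_mul_of_nonneg_right (freqNorm_pow_le_cumTailWeight h)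
      (show 0 ≤ ‖a k‖ ^ 2 by positivity)
    have hsobolev : (1 + freqNorm k ^ d) * ‖u k - a k‖ ^ 2 ≤
        2 * freqNorm k ^ d * (2 * ‖u k‖ ^ 2 + 2 * ‖a k‖ ^ 2) := by
      gcongr
      linarith
    linarith [show 0 ≤ (1 + ((2 : ℝ) ^ J) ^ (4 * d)) * ‖u k - a k‖ ^ 2 by positivity]
  · have hlow : (1 + freqNorm k ^ d) * ‖u k - a k‖ ^ 2 ≤
        (1 + (2 ^ J) ^ (4 * d)) * ‖u k - a k‖ ^ 2 := by
      rw [freqNorm_pow]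
      gcongr
      exact (not_le.mp h).le
    linarith [mul_nonneg (cumTailWeight_nonneg J k) (sq_nonneg ‖a k‖)]

namespace IsGalerkinSol

lemma l2Sq_sub_initial_le (hc : IsGalerkinSol S ν 1 c) (hd₁ : 1 ≤ d) (hd : d ≤ 3) (hν : 0 < ν)
    (h0 : (0 : Freq d) ∉ S) (hA : weightedSq S d (c 0) ≤ A) (L : ℕ)
    (ht : t ∈ Set.Icc (0 : ℝ) 1) :
    l2Sq S (fun k => c t k - c 0 k) ≤
      4 * ∑ k ∈ S, cumTailWeight L k * ‖c 0 k‖ ^ 2 + initialRate d ν A L * t := by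
  have hl2 : l2Sq S (c 0) ≤ A := (l2Sq_le_weightedSq h0 d _).trans hA
  have htail : tailSq S L (c 0) ≤ A := (tailSq_le_l2Sq S L _).trans hl2
  have hquartic := quarticConst_nonneg (d := d) ((weightedSq_nonneg S d _).trans hA)
  have henergy : convexEnergy S ν (lowPass L (c 0)) ≤
      (2 ^ L) ^ 16 * ((ν / 2 * 2 ^ 16 + quarticConst d A) * A) :=
    (convexEnergy_lowPass_le hd hν h0 hA L).trans (by gcongr)
  have hsobolev : weightedSq S 2 (lowPass L (c 0)) ≤ (2 ^ L) ^ 16 * (2 ^ 16 * A) :=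
    (weightedSq_mono_exponent h0 (by norm_num) _).trans
      ((weightedSq_four_lowPass_le hd S L _).trans (by gcongr))
  have hsub : l2Sq S (fun k => c 0 k - lowPass L (c 0) k) ≤
      ∑ k ∈ S, cumTailWeight L k * ‖c 0 k‖ ^ 2 :=
    (l2Sq_sub_lowPass_le S L _).trans (tailSq_le_sum_cumTailWeight_mul hd₁ h0 L _)
  have hevolve := hc.l2Sq_sub_const_le hν hl2 (lowPass L (c 0)) ht
  rw [mul_one] at hevolve
  have hrate : (2 * convexEnergy S ν (lowPass L (c 0)) + weightedSq S 2 (lowPass L (c 0)) +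
      growthRate ν * (Real.exp (growthRate ν) * A)) * t ≤ initialRate d ν A L / 2 * t := by
    refine mul_le_mul_of_nonneg_right ?_ ht.1
    rw [initialRate]
    linarith
  linarith [l2Sq_sub_le_two_mul S (c t) (c 0) (lowPass L (c 0))]

lemma sum_sobolev_sub_initial_le (hc : IsGalerkinSol S ν 1 c) (hd₁ : 1 ≤ d) (hd : d ≤ 3)
    (hν : 0 < ν) (h0 : (0 : Freq d) ∉ S) (hA : weightedSq S d (c 0) ≤ A) (J L : ℕ)
    (ht : t ∈ Set.Icc (0 : ℝ) 1) :
    ∑ k ∈ S, (1 + freqNorm k ^ d) * ‖c t k - c 0 k‖ ^ 2 ≤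
      (1 + (2 ^ J) ^ (4 * d)) *
          (4 * ∑ k ∈ S, cumTailWeight L k * ‖c 0 k‖ ^ 2 + initialRate d ν A L * t) +
        4 * ((2 ^ (4 * d) * tailConst d ν A + 1) *
          ∑ k ∈ S, cumTailWeight J k * ‖c 0 k‖ ^ 2) := by
  refine (sum_sobolev_sub_le h0 J _ _).trans (add_le_add ?_ ?_)
  · gcongr
    exact hc.l2Sq_sub_initial_le hd₁ hd hν h0 hA L ht
  · rw [add_mul, one_mul]
    gcongr
    exact hc.sum_high_freqNorm_pow_le hd₁ hd hν h0 hA J ht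

end IsGalerkinSol

lemma exists_forall_sum_sobolev_sub_le (hd₁ : 1 ≤ d) (hd : d ≤ 3) (hν : 0 < ν) {a : Freq d → ℂ}
    (ha : Summable fun k => freqNorm k ^ d * ‖a k‖ ^ 2) {ε : ℝ} (hε : 0 < ε) :
    ∃ δ, 0 < δ ∧ δ ≤ 1 ∧ ∀ (S : Finset (Freq d)) (c : ℝ → Freq d → ℂ), (0 : Freq d) ∉ S →
      IsGalerkinSol S ν 1 c → (∀ k ∈ S, c 0 k = a k) → ∀ t ∈ Set.Icc 0 δ,
        ∑ k ∈ S, (1 + freqNorm k ^ d) * ‖c t k - a k‖ ^ 2 ≤ ε := by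
  have hterm (k : Freq d) : 0 ≤ freqNorm k ^ d * ‖a k‖ ^ 2 :=
    mul_nonneg (pow_nonneg (freqNorm_nonneg k) d) (by positivity)
  set A := ∑' k, freqNorm k ^ d * ‖a k‖ ^ 2
  have hA₀ : 0 ≤ A := tsum_nonneg hterm
  have htails := tendsto_tsum_cumTailWeight_mul ha
  set C := 2 ^ (4 * d) * tailConst d ν A + 1
  have hC : 0 < C := by have := tailConst_nonneg (d := d) hν hA₀; positivity
  obtain ⟨J, hJ⟩ := (htails.eventually_lt_const (show 0 < ε / (8 * C) by positivity)).exists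
  set D : ℝ := 1 + (2 ^ J) ^ (4 * d)
  have hD : 0 < D := by positivity
  obtain ⟨L, hL⟩ := (htails.eventually_lt_const (show 0 < ε / (16 * D) by positivity)).exists
  set K := initialRate d ν A L
  have hK : 0 ≤ K := initialRate_nonneg hν hA₀ L
  refine ⟨min 1 (ε / (4 * D * (K + 1))), by positivity, min_le_left _ _,
    fun S c h0 hc hinit t ht => ?_⟩
  have hcongr (w : Freq d → ℝ) : ∑ k ∈ S, w k * ‖c 0 k‖ ^ 2 = ∑ k ∈ S, w k * ‖a k‖ ^ 2 :=
    Finset.sum_congr rfl fun k hk => by rw [hinit k hk]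
  have hA : weightedSq S d (c 0) ≤ A := (hcongr _).trans_le (ha.sum_le_tsum S fun k _ => hterm k)
  have htail (j : ℕ) : ∑ k ∈ S, cumTailWeight j k * ‖c 0 k‖ ^ 2 ≤
      ∑' k, cumTailWeight j k * ‖a k‖ ^ 2 :=
    (hcongr _).trans_le (sum_cumTailWeight_mul_le_tsum ha S j)
  have htime : K * t ≤ ε / (4 * D) := by
    calc K * t ≤ (K + 1) * (ε / (4 * D * (K + 1))) :=
          mul_le_mul (by linarith) (ht.2.trans (min_le_right _ _)) ht.1 (by positivity)
      _ = ε / (4 * D) := by field_simp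
  calc ∑ k ∈ S, (1 + freqNorm k ^ d) * ‖c t k - a k‖ ^ 2
      = ∑ k ∈ S, (1 + freqNorm k ^ d) * ‖c t k - c 0 k‖ ^ 2 :=
        Finset.sum_congr rfl fun k hk => by rw [hinit k hk]
    _ ≤ D * (4 * (ε / (16 * D)) + ε / (4 * D)) + 4 * (C * (ε / (8 * C))) := by
        refine (hc.sum_sobolev_sub_initial_le hd₁ hd hν h0 hA J L
          ⟨ht.1, ht.2.trans (min_le_left _ _)⟩).trans ?_
        gcongr
        · exact (htail L).trans hL.le
        · exact (htail J).trans hJ.le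
    _ = ε := by field_simp; norm_num

end InitialValue

/-! ### Taylor expansion in time -/

/-- A Lipschitz constant at frequency `k` of `galerkinField` on the coefficients bounded by
`B |k|^{-9/2}`. -/
def fieldLipConst {d : ℕ} (ν B : ℝ) (k : Freq d) : ℝ :=
  (ν * freqNorm k ^ 4 + freqNorm k ^ 2) * B + 3 * B ^ 3 * freqNorm k * latticeSumBound ^ 3

section Lipschitz

variable {d : ℕ} {S : Finset (Freq d)} {ν B : ℝ}

lemma fieldLipConst_nonneg (hν : 0 < ν) (hB : 0 ≤ B) (k : Freq d) : 0 ≤ fieldLipConst ν B k := by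
  have hk := freqNorm_nonneg k
  have hL := latticeSumBound_pos
  unfold fieldLipConst
  positivity

lemma quarterNorm_pow_mul_le_mul_inv {k : Freq d} (hk : k ≠ 0) {y : ℝ} {p : ℕ}
    (h : quarterNorm k ^ (p + 14) * y ≤ B) :
    quarterNorm k ^ p * y ≤ B * (quarterNorm k ^ 14)⁻¹ := by
  have hpos := quarterNorm_pos hk
  rw [← div_eq_mul_inv, le_div_iff₀ (by positivity)]
  linarith [pow_add (quarterNorm k) p 14 ▸ h]

lemma freqNorm_mul_le_mul_inv (h0 : (0 : Freq d) ∉ S) {y : Freq d → ℝ}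
    (h : ∀ k ∈ S, quarterNorm k ^ 18 * y k ≤ B) (k : Freq d) (hk : k ∈ S) :
    freqNorm k * y k ≤ B * (quarterNorm k ^ 14)⁻¹ := by
  rw [← quarterNorm_pow_four]
  exact quarterNorm_pow_mul_le_mul_inv (ne_of_mem_of_not_mem hk h0) (h k hk)

lemma norm_mul_conj_mul_sub_le (a b m a' b' m' : ℂ) :
    ‖a * conj b * m - a' * conj b' * m'‖ ≤
      ‖a‖ * ‖b‖ * ‖m - m'‖ + ‖a‖ * ‖b - b'‖ * ‖m'‖ + ‖a - a'‖ * ‖b'‖ * ‖m'‖ := by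
  have htelescope : a * conj b * m - a' * conj b' * m' =
      a * conj b * (m - m') + a * conj (b - b') * m' + (a - a') * conj b' * m' := by
    rw [map_sub]
    ring
  rw [htelescope]
  refine norm_add₃_le.trans_eq ?_
  simp only [norm_mul, RCLike.norm_conj]

lemma freqNorm_mul_norm_mul_conj_mul_sub_le {c z : Freq d → ℂ} {w : Freq d → ℝ} {δ : ℝ}
    (hc : ∀ k ∈ S, freqNorm k * ‖c k‖ ≤ w k) (hz : ∀ k ∈ S, freqNorm k * ‖z k‖ ≤ w k)
    (hcz : ∀ k ∈ S, freqNorm k * ‖c k - z k‖ ≤ w k * δ) {a b m : Freq d} (ha : a ∈ S) (hb : b ∈ S)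
    (hm : m ∈ S) :
    freqNorm a * freqNorm b * freqNorm m * ‖c a * conj (c b) * c m - z a * conj (z b) * z m‖ ≤
      3 * δ * (w a * w b * w m) := by
  have hnonneg (k : Freq d) (y : ℂ) : 0 ≤ freqNorm k * ‖y‖ :=
    mul_nonneg (freqNorm_nonneg k) (norm_nonneg y)
  have hw (k) (hk : k ∈ S) : 0 ≤ w k := (hnonneg k _).trans (hc k hk)
  have hwδ (k) (hk : k ∈ S) : 0 ≤ w k * δ := (hnonneg k _).trans (hcz k hk)
  have hwa := hw a ha
  have hwb := hw b hb
  have hprod {x y v X Y V : ℝ} (hx : x ≤ X) (hy : y ≤ Y) (hv : v ≤ V) (hy₀ : 0 ≤ y) (hv₀ : 0 ≤ v)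
      (hX : 0 ≤ X) (hY : 0 ≤ Y) : x * y * v ≤ X * Y * V :=
    mul_le_mul (mul_le_mul hx hy hy₀ hX) hv hv₀ (mul_nonneg hX hY)
  calc freqNorm a * freqNorm b * freqNorm m * ‖c a * conj (c b) * c m - z a * conj (z b) * z m‖
      ≤ freqNorm a * freqNorm b * freqNorm m * (‖c a‖ * ‖c b‖ * ‖c m - z m‖ +
          ‖c a‖ * ‖c b - z b‖ * ‖z m‖ + ‖c a - z a‖ * ‖z b‖ * ‖z m‖) := by
        have hk (k : Freq d) := freqNorm_nonneg k
        exact mul_le_mul_of_nonneg_left (norm_mul_conj_mul_sub_le _ _ _ _ _ _)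
          (mul_nonneg (mul_nonneg (hk a) (hk b)) (hk m))
    _ = freqNorm a * ‖c a‖ * (freqNorm b * ‖c b‖) * (freqNorm m * ‖c m - z m‖) +
          freqNorm a * ‖c a‖ * (freqNorm b * ‖c b - z b‖) * (freqNorm m * ‖z m‖) +
          freqNorm a * ‖c a - z a‖ * (freqNorm b * ‖z b‖) * (freqNorm m * ‖z m‖) := by ring
    _ ≤ w a * w b * (w m * δ) + w a * (w b * δ) * w m + w a * δ * w b * w m :=
        add_le_add_three
          (hprod (hc a ha) (hc b hb) (hcz m hm) (hnonneg _ _) (hnonneg _ _) hwa hwb)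
          (hprod (hc a ha) (hcz b hb) (hz m hm) (hnonneg _ _) (hnonneg _ _) hwa (hwδ b hb))
          (hprod (hcz a ha) (hz b hb) (hz m hm) (hnonneg _ _) (hnonneg _ _) (hwδ a ha) hwb)
    _ = 3 * δ * (w a * w b * w m) := by ring

lemma norm_cubicTerm_sub_le {c z : Freq d → ℂ} {w : Freq d → ℝ} {δ : ℝ} (hδ : 0 ≤ δ)
    (hc : ∀ k ∈ S, freqNorm k * ‖c k‖ ≤ w k) (hz : ∀ k ∈ S, freqNorm k * ‖z k‖ ≤ w k)
    (hcz : ∀ k ∈ S, freqNorm k * ‖c k - z k‖ ≤ w k * δ) (k : Freq d) :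
    ‖cubicTerm S c k - cubicTerm S z k‖ ≤ 3 * δ * freqNorm k * (∑ a ∈ S, w a) ^ 3 := by
  have hk := freqNorm_nonneg k
  have hw (k) (hk : k ∈ S) : 0 ≤ w k :=
    (mul_nonneg (freqNorm_nonneg k) (norm_nonneg _)).trans (hc k hk)
  have hcube : (∑ a ∈ S, w a) ^ 3 = ∑ a ∈ S, ∑ b ∈ S, ∑ m ∈ S, w a * w b * w m := by
    rw [pow_succ, sq, Finset.sum_mul_sum, Finset.sum_mul]
    simp only [Finset.sum_mul, Finset.mul_sum]
    exact Finset.sum_congr rfl fun _ _ => Finset.sum_comm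
  simp only [cubicTerm, ← Finset.sum_sub_distrib, hcube, Finset.mul_sum]
  refine (norm_sum_le _ _).trans (Finset.sum_le_sum fun a ha => ?_)
  refine (norm_sum_le _ _).trans (Finset.sum_le_sum fun b hb => ?_)
  refine (norm_sum_le _ _).trans (Finset.sum_le_sum fun m hm => ?_)
  have hwa := hw a ha
  have hwb := hw b hb
  have hwm := hw m hm
  split_ifs
  · calc ‖((freqDot a b * freqDot m k : ℝ) : ℂ) * c a * conj (c b) * c m -
          ((freqDot a b * freqDot m k : ℝ) : ℂ) * z a * conj (z b) * z m‖
        = |freqDot a b| * |freqDot m k| *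
            ‖c a * conj (c b) * c m - z a * conj (z b) * z m‖ := by
          rw [← abs_mul, ← Real.norm_eq_abs, ← Complex.norm_real, ← norm_mul]
          congr 1
          ring
      _ ≤ freqNorm a * freqNorm b * (freqNorm m * freqNorm k) *
            ‖c a * conj (c b) * c m - z a * conj (z b) * z m‖ := by
          have ha₀ := freqNorm_nonneg a
          have hb₀ := freqNorm_nonneg b
          gcongr
          · exact abs_freqDot_le a b
          · exact abs_freqDot_le m k
      _ = freqNorm k * (freqNorm a * freqNorm b * freqNorm m *
            ‖c a * conj (c b) * c m - z a * conj (z b) * z m‖) := by ring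
      _ ≤ freqNorm k * (3 * δ * (w a * w b * w m)) := by
          exact mul_le_mul_of_nonneg_left
            (freqNorm_mul_norm_mul_conj_mul_sub_le hc hz hcz ha hb hm) hk
      _ = 3 * δ * freqNorm k * (w a * w b * w m) := by ring
  · rw [sub_zero, norm_zero]
    positivity

lemma norm_galerkinField_sub_le (hd : d ≤ 3) (hν : 0 < ν) (h0 : (0 : Freq d) ∉ S)
    {c z : Freq d → ℂ} {δ : ℝ} (hB : 0 ≤ B) (hδ : 0 ≤ δ)
    (hc : ∀ k ∈ S, quarterNorm k ^ 18 * ‖c k‖ ≤ B) (hz : ∀ k ∈ S, quarterNorm k ^ 18 * ‖z k‖ ≤ B)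
    (hcz : ∀ k ∈ S, quarterNorm k ^ 18 * ‖c k - z k‖ ≤ B * δ) {k : Freq d} (hk : k ∈ S) :
    ‖galerkinField S ν c k - galerkinField S ν z k‖ ≤ fieldLipConst ν B k * δ := by
  have hk₀ := freqNorm_nonneg k
  have hsum : ∑ a ∈ S, B * (quarterNorm a ^ 14)⁻¹ ≤ B * latticeSumBound := by
    rw [← Finset.mul_sum]
    exact mul_le_mul_of_nonneg_left (sum_inv_quarterNorm_pow_le hd S h0) hB
  have hcubic : ‖cubicTerm S c k - cubicTerm S z k‖ ≤
      3 * δ * freqNorm k * (B * latticeSumBound) ^ 3 := by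
    refine (norm_cubicTerm_sub_le hδ (freqNorm_mul_le_mul_inv h0 hc)
      (freqNorm_mul_le_mul_inv h0 hz) (fun l hl => ?_) k).trans (by gcongr)
    exact (freqNorm_mul_le_mul_inv h0 hcz l hl).trans_eq (by ring)
  have hsub : ‖c k - z k‖ ≤ B * δ :=
    (le_mul_of_one_le_left (norm_nonneg _)
      (one_le_pow₀ (one_le_quarterNorm (ne_of_mem_of_not_mem hk h0)))).trans (hcz k hk)
  have hlinear : ‖((-(ν * freqNorm k ^ 4) + freqNorm k ^ 2 : ℝ) : ℂ) * (c k - z k)‖ ≤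
      (ν * freqNorm k ^ 4 + freqNorm k ^ 2) * (B * δ) := by
    rw [norm_mul]
    exact mul_le_mul (norm_symbol_le hν k) hsub (norm_nonneg _) (by positivity)
  calc ‖galerkinField S ν c k - galerkinField S ν z k‖
      = ‖((-(ν * freqNorm k ^ 4) + freqNorm k ^ 2 : ℝ) : ℂ) * (c k - z k) -
          (cubicTerm S c k - cubicTerm S z k)‖ := by
        unfold galerkinField
        congr 1
        ring
    _ ≤ fieldLipConst ν B k * δ := by
        refine (norm_sub_le _ _).trans ((add_le_add hlinear hcubic).trans_eq ?_)
        rw [fieldLipConst]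
        ring

end Lipschitz

lemma norm_sub_sub_smul_le_of_hasDerivAt {E : Type*} [NormedAddCommGroup E] [NormedSpace ℝ E]
    {f f' : ℝ → E} {s t C : ℝ} (hf : ∀ x ∈ Set.uIcc t s, HasDerivAt f (f' x) x)
    (hf' : ∀ x ∈ Set.uIcc t s, ‖f' x - f' t‖ ≤ C * |x - t|) (hC : 0 ≤ C) :
    ‖f s - f t - (s - t) • f' t‖ ≤ C * |s - t| ^ 2 := by
  have hmean := Convex.norm_image_sub_le_of_norm_hasDerivWithin_le (C := C * |s - t|)
    (f := fun x => f x - x • f' t) (f' := fun x => f' x - (1 : ℝ) • f' t)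
    (fun x hx => ((hf x hx).sub ((hasDerivAt_id x).smul_const _)).hasDerivWithinAt)
    (fun x hx => by
      rw [one_smul]
      exact (hf' x hx).trans
        (mul_le_mul_of_nonneg_left (Set.abs_sub_left_of_mem_uIcc hx) hC))
    (convex_uIcc t s) Set.left_mem_uIcc Set.right_mem_uIcc
  calc ‖f s - f t - (s - t) • f' t‖ = ‖f s - s • f' t - (f t - t • f' t)‖ := by
        congr 1
        rw [sub_smul]
        abel
    _ ≤ C * |s - t| * |s - t| := hmean
    _ = C * |s - t| ^ 2 := by ring

lemma IsGalerkinSol.norm_sub_sub_smul_galerkinField_le {d : ℕ} {S : Finset (Freq d)} {ν T t₀ B : ℝ}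
    {c : ℝ → Freq d → ℂ} (hc : IsGalerkinSol S ν T c) (hd : d ≤ 3) (hν : 0 < ν)
    (h0 : (0 : Freq d) ∉ S) (ht₀ : 0 < t₀) (hB₀ : 0 ≤ B)
    (hB : ∀ t ∈ Set.Icc t₀ T, ∀ k ∈ S, quarterNorm k ^ 18 * ‖c t k‖ ≤ B)
    (hB' : ∀ t ∈ Set.Icc t₀ T, ∀ k ∈ S, quarterNorm k ^ 18 * ‖galerkinField S ν (c t) k‖ ≤ B)
    {k : Freq d} (hk : k ∈ S) {s t : ℝ} (hs : s ∈ Set.Icc t₀ T) (ht : t ∈ Set.Icc t₀ T) :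
    ‖c s k - c t k - (s - t) • galerkinField S ν (c t) k‖ ≤
      fieldLipConst ν B k * |s - t| ^ 2 := by
  have hmem (x) (hx : x ∈ Set.uIcc t s) : x ∈ Set.Icc t₀ T := Set.uIcc_subset_Icc ht hs hx
  have hderiv (x) (hx : x ∈ Set.uIcc t s) (l) (hl : l ∈ S) :
      HasDerivAt (fun s => c s l) (galerkinField S ν (c x) l) x :=
    hc.hasDerivAt x ⟨ht₀.le.trans (hmem x hx).1, (hmem x hx).2⟩ l hl
  have hlipschitz (x) (hx : x ∈ Set.uIcc t s) (l) (hl : l ∈ S) :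
      quarterNorm l ^ 18 * ‖c x l - c t l‖ ≤ B * |x - t| := by
    have hpos : 0 < quarterNorm l ^ 18 := pow_pos (quarterNorm_pos (ne_of_mem_of_not_mem hl h0)) 18
    have hmean := Convex.norm_image_sub_le_of_norm_hasDerivWithin_le (C := B / quarterNorm l ^ 18)
      (fun y hy => (hderiv y hy l hl).hasDerivWithinAt)
      (fun y hy => (le_div_iff₀' hpos).mpr (hB' y (hmem y hy) l hl))
      (convex_uIcc t s) Set.left_mem_uIcc hx
    rwa [div_mul_eq_mul_div, le_div_iff₀' hpos, Real.norm_eq_abs] at hmean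
  exact norm_sub_sub_smul_le_of_hasDerivAt (fun x hx => hderiv x hx k hk)
    (fun x hx => norm_galerkinField_sub_le hd hν h0 hB₀ (abs_nonneg _) (hB x (hmem x hx))
      (hB t ht) (hlipschitz x hx) hk) (fieldLipConst_nonneg hν hB₀ k)

/-! ### Fourier series with rapidly decreasing coefficients -/

/-- Rapidly decreasing Fourier coefficients of mean zero. -/
structure RapidDecay {d : ℕ} (c : Freq d → ℂ) : Prop where
  apply_zero : c 0 = 0
  exists_bound : ∀ n : ℕ, ∃ B, ∀ k, quarterNorm k ^ n * ‖c k‖ ≤ B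

/-- The Fourier coefficients of `∂_j u`, where `c` are those of `u`. -/
def derivCoeff {d : ℕ} (j : Fin d) (c : Freq d → ℂ) (k : Freq d) : ℂ :=
  Complex.I * (k j : ℂ) * c k

/-- The Fourier coefficients of `Δu`, where `c` are those of `u`. -/
def laplCoeff {d : ℕ} (c : Freq d → ℂ) (k : Freq d) : ℂ := -((freqNorm k ^ 2 : ℝ) : ℂ) * c k

/-- The sum of the Fourier series with coefficients `c`. -/
def fourierSeries {d : ℕ} (c : Freq d → ℂ) (x : Ed d) : ℂ := ∑' k, c k * fourierMode k x

/-- The real part of `fourierSeries c`; it is the whole series if `c` is `ConjSymm`. -/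
def realSeries {d : ℕ} (c : Freq d → ℂ) (x : Ed d) : ℝ := (fourierSeries c x).re

/-- The linear map `z ↦ (y ↦ y_j z)`, through which the differential of a Fourier series is a
linear function of its partial derivatives. -/
def coordMulCLM {d : ℕ} (j : Fin d) : ℂ →L[ℝ] (Ed d →L[ℝ] ℂ) :=
  ContinuousLinearMap.smulRightL ℝ (Ed d) ℂ (EuclideanSpace.proj j)

section RapidlyDecreasing

variable {d : ℕ} {c : Freq d → ℂ}

lemma summable_inv_quarterNorm_pow (hd : d ≤ 3) :
    Summable fun k : Freq d => (quarterNorm k ^ 14)⁻¹ := by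
  classical
  refine summable_of_sum_le (c := latticeSumBound)
    (fun k => inv_nonneg.mpr (pow_nonneg (quarterNorm_nonneg k) 14)) fun F => ?_
  rw [← Finset.sum_erase F (a := (0 : Freq d)) (by simp [quarterNorm_zero])]
  exact sum_inv_quarterNorm_pow_le hd (F.erase 0) (Finset.notMem_erase 0 F)

lemma quarterNorm_pow_mul_norm_le_mul_inv (h0 : c 0 = 0) {B : ℝ} {n p : ℕ} (hp : p + 14 ≤ n)
    (h : ∀ k, quarterNorm k ^ n * ‖c k‖ ≤ B) (k : Freq d) :
    quarterNorm k ^ p * ‖c k‖ ≤ B * (quarterNorm k ^ 14)⁻¹ := by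
  rcases eq_or_ne k 0 with rfl | hk
  · simp [h0, quarterNorm_zero]
  · refine quarterNorm_pow_mul_le_mul_inv hk (le_trans ?_ (h k))
    gcongr
    exact one_le_quarterNorm hk

lemma norm_le_mul_inv_quarterNorm_pow (h0 : c 0 = 0) {B : ℝ} {n : ℕ} (hn : 14 ≤ n)
    (h : ∀ k, quarterNorm k ^ n * ‖c k‖ ≤ B) (k : Freq d) :
    ‖c k‖ ≤ B * (quarterNorm k ^ 14)⁻¹ := by
  simpa using quarterNorm_pow_mul_norm_le_mul_inv (p := 0) h0 (by omega) h k

lemma RapidDecay.derivCoeff (h : RapidDecay c) (j : Fin d) : RapidDecay (derivCoeff j c) := by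
  refine ⟨by simp [_root_.derivCoeff], fun n => ?_⟩
  obtain ⟨B, hB⟩ := h.exists_bound (n + 4)
  refine ⟨B, fun k => le_trans ?_ (hB k)⟩
  have hk := quarterNorm_nonneg k
  have hkj := abs_le_freqNorm k j
  rw [_root_.derivCoeff, norm_mul, norm_mul, Complex.norm_I, one_mul, Complex.norm_intCast,
    pow_add, quarterNorm_pow_four, mul_assoc]
  gcongr

lemma RapidDecay.laplCoeff (h : RapidDecay c) : RapidDecay (laplCoeff c) := by
  refine ⟨by simp [_root_.laplCoeff, h.apply_zero], fun n => ?_⟩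
  obtain ⟨B, hB⟩ := h.exists_bound (n + 8)
  refine ⟨B, fun k => le_of_eq_of_le ?_ (hB k)⟩
  rw [_root_.laplCoeff, norm_mul, norm_neg, Complex.norm_real, norm_pow, Real.norm_eq_abs,
    abs_of_nonneg (freqNorm_nonneg k), freqNorm_pow, ← mul_assoc, ← pow_add]

lemma RapidDecay.summable_norm (hd : d ≤ 3) (h : RapidDecay c) : Summable fun k => ‖c k‖ := by
  obtain ⟨B, hB⟩ := h.exists_bound 14
  exact Summable.of_nonneg_of_le (fun k => norm_nonneg _)
    (norm_le_mul_inv_quarterNorm_pow h.apply_zero le_rfl hB)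
    ((summable_inv_quarterNorm_pow hd).mul_left B)

lemma RapidDecay.summable_norm_mul_fourierMode (hd : d ≤ 3) (h : RapidDecay c) (x : Ed d) :
    Summable fun k => ‖c k * fourierMode k x‖ := by
  simpa only [norm_mul, norm_fourierMode, mul_one] using h.summable_norm hd

lemma RapidDecay.hasSum (hd : d ≤ 3) (h : RapidDecay c) (x : Ed d) :
    HasSum (fun k => c k * fourierMode k x) (fourierSeries c x) :=
  (h.summable_norm_mul_fourierMode hd x).of_norm.hasSum

lemma coordMulCLM_apply (j : Fin d) (z : ℂ) (y : Ed d) : coordMulCLM j z y = (y j : ℂ) * z := by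
  simp [coordMulCLM]

lemma hasFDerivAt_mul_fourierMode (c : Freq d → ℂ) (k : Freq d) (x : Ed d) :
    HasFDerivAt (fun y => c k * fourierMode k y)
      (∑ j, coordMulCLM j (derivCoeff j c k * fourierMode k x)) x := by
  have hphase : HasFDerivAt (fun y : Ed d => Complex.I * ∑ i, (k i : ℂ) * (y i : ℂ))
      (∑ j, coordMulCLM j (Complex.I * (k j : ℂ))) x := by
    convert (∑ j, coordMulCLM j (Complex.I * (k j : ℂ))).hasFDerivAt using 2 with y
    simp only [_root_.sum_apply, coordMulCLM_apply, Finset.mul_sum]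
    exact Finset.sum_congr rfl fun j _ => by ring
  refine (hphase.cexp.const_mul (c k)).congr_fderiv ?_
  ext y
  simp only [_root_.smul_apply, _root_.sum_apply, coordMulCLM_apply, smul_eq_mul, Finset.mul_sum,
    derivCoeff, fourierMode]
  exact Finset.sum_congr rfl fun j _ => by ring

lemma RapidDecay.hasFDerivAt_fourierSeries (hd : d ≤ 3) (h : RapidDecay c) (x : Ed d) :
    HasFDerivAt (fourierSeries c)
      (∑ j, coordMulCLM j (fourierSeries (_root_.derivCoeff j c) x)) x := by
  have hsummable : Summable fun k => ∑ j : Fin d,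
      ‖(coordMulCLM j : ℂ →L[ℝ] (Ed d →L[ℝ] ℂ))‖ * ‖_root_.derivCoeff j c k‖ :=
    summable_sum fun j _ => ((h.derivCoeff j).summable_norm hd).mul_left _
  refine (hasFDerivAt_tsum hsummable (hasFDerivAt_mul_fourierMode c) (fun k y => ?_)
    (h.hasSum hd x).summable x).congr_fderiv (HasSum.tsum_eq ?_)
  · refine norm_sum_le_of_le _ fun j _ => ?_
    refine (ContinuousLinearMap.le_opNorm _ _).trans_eq ?_
    rw [norm_mul, norm_fourierMode, mul_one]
  · exact hasSum_sum fun j _ => (coordMulCLM j).hasSum ((h.derivCoeff j).hasSum hd x)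

lemma RapidDecay.contDiff_fourierSeries_nat (hd : d ≤ 3) (n : ℕ) {c : Freq d → ℂ}
    (h : RapidDecay c) : ContDiff ℝ n (fourierSeries c) := by
  induction n generalizing c with
  | zero =>
    rw [Nat.cast_zero, contDiff_zero, continuous_iff_continuousAt]
    exact fun x => (h.hasFDerivAt_fourierSeries hd x).continuousAt
  | succ n ih =>
    push_cast
    rw [contDiff_succ_iff_hasFDerivAt]
    exact ⟨_, ContDiff.sum fun j _ => (coordMulCLM j).contDiff.comp (ih (h.derivCoeff j)),
      h.hasFDerivAt_fourierSeries hd⟩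

lemma RapidDecay.contDiff_realSeries (hd : d ≤ 3) (h : RapidDecay c) :
    ContDiff ℝ (⊤ : ℕ∞) (realSeries c) :=
  Complex.reCLM.contDiff.comp (contDiff_infty.mpr fun n => h.contDiff_fourierSeries_nat hd n)

lemma RapidDecay.differentiable_realSeries (hd : d ≤ 3) (h : RapidDecay c) :
    Differentiable ℝ (realSeries c) :=
  (h.contDiff_realSeries hd).differentiable (by simp)

lemma RapidDecay.pd_realSeries (hd : d ≤ 3) (h : RapidDecay c) (j : Fin d) :
    pd (realSeries c) j = realSeries (_root_.derivCoeff j c) := by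
  funext x
  have hderiv : HasFDerivAt (realSeries c) _ x :=
    Complex.reCLM.hasFDerivAt.comp x (h.hasFDerivAt_fourierSeries hd x)
  rw [pd, hderiv.fderiv]
  simp only [ContinuousLinearMap.comp_apply, _root_.sum_apply, coordMulCLM_apply]
  rw [Finset.sum_eq_single j (fun i _ hij => by simp [hij]) (by simp)]
  simp [realSeries]

lemma sum_derivCoeff_derivCoeff (c : Freq d → ℂ) (k : Freq d) :
    ∑ j, derivCoeff j (derivCoeff j c) k = laplCoeff c k := by
  simp only [derivCoeff, laplCoeff, freqNorm_sq, ← mul_assoc]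
  rw [← Finset.sum_mul]
  push_cast
  rw [← Finset.sum_neg_distrib]
  refine congrArg (· * c k) (Finset.sum_congr rfl fun j _ => ?_)
  linear_combination (k j : ℂ) ^ 2 * Complex.I_sq

lemma RapidDecay.lapl_realSeries (hd : d ≤ 3) (h : RapidDecay c) :
    lapl (realSeries c) = realSeries (_root_.laplCoeff c) := by
  funext x
  have hsum := hasSum_sum (s := Finset.univ) fun j _ =>
    ((h.derivCoeff j).derivCoeff j).hasSum hd x
  simp only [← Finset.sum_mul, sum_derivCoeff_derivCoeff] at hsum
  simp only [lapl, h.pd_realSeries hd, (h.derivCoeff _).pd_realSeries hd, realSeries]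
  rw [← Complex.re_sum, hsum.unique (h.laplCoeff.hasSum hd x)]

lemma periodicSpace_realSeries (c : Freq d → ℂ) : PeriodicSpace (realSeries c) := by
  intro j x
  simp only [realSeries, fourierSeries, fourierMode_add_two_pi]

end RapidlyDecreasing

section RealSeries

variable {d : ℕ} {c : Freq d → ℂ}

lemma ConjSymm.derivCoeff (h : ConjSymm c) (j : Fin d) : ConjSymm (derivCoeff j c) := by
  intro k
  simp [_root_.derivCoeff, h k]

lemma ConjSymm.conj_fourierSeries (h : ConjSymm c) (x : Ed d) :
    conj (fourierSeries c x) = fourierSeries c x := by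
  rw [fourierSeries, Complex.conj_tsum, ← (Equiv.neg (Freq d)).tsum_eq]
  refine tsum_congr fun k => ?_
  rw [Equiv.neg_apply, map_mul, h k, fourierMode_neg, Complex.conj_conj, Complex.conj_conj]

lemma ConjSymm.ofReal_realSeries (h : ConjSymm c) (x : Ed d) :
    (realSeries c x : ℂ) = fourierSeries c x :=
  Complex.conj_eq_iff_re.mp (h.conj_fourierSeries x)

lemma fcoefR_eq_integral (f : Ed d → ℝ) (k : Freq d) :
    fcoefR f k = ∫ x in Qd d, (f x : ℂ) * fourierMode (-k) x := by
  simp [fcoefR, fourierMode]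

lemma fcoefR_realSeries (hd : d ≤ 3) (h : RapidDecay c) (hc : ConjSymm c) (k : Freq d) :
    fcoefR (realSeries c) k = (((2 * π) ^ d : ℝ) : ℂ) * c k := by
  have hseries (x : Ed d) : (realSeries c x : ℂ) * fourierMode (-k) x =
      ∑' l, c l * fourierMode (l - k) x := by
    rw [hc.ofReal_realSeries, fourierSeries, ← tsum_mul_right]
    simp only [mul_assoc, sub_eq_add_neg, fourierMode_add]
  have hintegrable (l : Freq d) :
      IntegrableOn (fun x => c l * fourierMode (l - k) x) (Qd d) :=
    integrableOn_Qd_of_continuous (continuous_const.mul (continuous_fourierMode _))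
  have hsummable : Summable fun l => ∫ x in Qd d, ‖c l * fourierMode (l - k) x‖ := by
    simp only [norm_mul, norm_fourierMode, mul_one, integral_const, smul_eq_mul]
    exact (h.summable_norm hd).mul_left _
  simp only [fcoefR_eq_integral, hseries]
  rw [← integral_tsum_of_summable_integral_norm hintegrable hsummable]
  simp only [integral_const_mul, integral_fourierMode, sub_eq_zero, mul_ite, mul_zero,
    tsum_ite_eq, mul_comm]

end RealSeries

/-! ### The equation in terms of Fourier coefficients -/

/-- `∇·(|∇u|²∇u)` as a function of the gradient `g` and the Hessian `H` of `u`. -/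
def cubicDivergence {d : ℕ} {R : Type*} [CommSemiring R] (g : Fin d → R) (H : Fin d → Fin d → R) :
    R :=
  ∑ i, ∑ j, (H i j * (g i * g j) + g i * (H i j * g j) + g i * (g i * H j j))

/-- The contribution to the Fourier series of `-∇·(|∇u|²∇u)` of the modes `a, b, m`; their
product has frequency `a - b + m`. -/
def cubicSummand {d : ℕ} (c : Freq d → ℂ) (x : Ed d) (p : Freq d × Freq d × Freq d) : ℂ :=
  ((freqDot p.1 p.2.1 * freqDot p.2.2 (p.1 - p.2.1 + p.2.2) : ℝ) : ℂ) *
    c p.1 * conj (c p.2.1) * c p.2.2 * fourierMode (p.1 - p.2.1 + p.2.2) x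

section Equation

variable {d : ℕ} {c : Freq d → ℂ}

lemma ofReal_cubicDivergence (g : Fin d → ℝ) (H : Fin d → Fin d → ℝ) :
    ((cubicDivergence g H : ℝ) : ℂ) =
      cubicDivergence (fun i => (g i : ℂ)) (fun i j => (H i j : ℂ)) := by
  simp [cubicDivergence]

lemma slopeDiv_eq {u : Ed d → ℝ} {x : Ed d} (h : ∀ i, DifferentiableAt ℝ (pd u i) x) :
    slopeDiv u x =
      cubicDivergence (fun i => pd u i x) (fun i j => pd (pd u i) j x) - lapl u x := by
  have hslope : HasFDerivAt (fun y => gradSq u y - 1)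
      (∑ i, (2 * pd u i x) • fderiv ℝ (pd u i) x) x := by
    refine (HasFDerivAt.fun_sum fun i _ => ?_).sub_const 1
    simpa using (h i).hasFDerivAt.pow 2
  simp only [slopeDiv, lapl, cubicDivergence]
  rw [Finset.sum_comm, ← Finset.sum_sub_distrib]
  refine Finset.sum_congr rfl fun j _ => ?_
  rw [pd, (hslope.fun_mul (h j).hasFDerivAt).fderiv]
  simp only [_root_.add_apply, _root_.smul_apply, _root_.sum_apply, smul_eq_mul, gradSq,
    Finset.mul_sum, sub_mul, Finset.sum_mul, one_mul, ← pd.eq_1]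
  rw [sub_add_eq_add_sub, ← Finset.sum_add_distrib]
  exact congrArg (· - _) (Finset.sum_congr rfl fun i _ => by ring)

lemma hasSum_mul_mul {ι : Type*} {f g h : ι → ℂ} {F G H : ℂ} (hf : HasSum f F)
    (hg : HasSum g G) (hh : HasSum h H) (hf' : Summable fun k => ‖f k‖)
    (hg' : Summable fun k => ‖g k‖) (hh' : Summable fun k => ‖h k‖) :
    HasSum (fun p : ι × ι × ι => f p.1 * (g p.2.1 * h p.2.2)) (F * (G * H)) := by
  have hgh : Summable fun p : ι × ι => ‖g p.1 * h p.2‖ := hg'.mul_norm hh'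
  have hfgh : Summable fun p : ι × ι × ι => ‖f p.1 * (g p.2.1 * h p.2.2)‖ :=
    Summable.mul_norm (g := fun p : ι × ι => g p.1 * h p.2) hf' hgh
  exact HasSum.mul (g := fun p : ι × ι => g p.1 * h p.2) hf (hg.mul hh hgh.of_norm) hfgh.of_norm

lemma RapidDecay.hasSum_conj (hd : d ≤ 3) (h : RapidDecay c) (hc : ConjSymm c) (x : Ed d) :
    HasSum (fun k => conj (c k * fourierMode k x)) (fourierSeries c x) := by
  rw [← hc.conj_fourierSeries, Complex.hasSum_conj']
  simpa only [Complex.conj_conj] using h.hasSum hd x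

lemma RapidDecay.hasSum_mul_conj_mul (hd : d ≤ 3) {a b m : Freq d → ℂ} (ha : RapidDecay a)
    (hb : RapidDecay b) (hb' : ConjSymm b) (hm : RapidDecay m) (x : Ed d) :
    HasSum (fun p : Freq d × Freq d × Freq d => a p.1 * fourierMode p.1 x *
        (conj (b p.2.1 * fourierMode p.2.1 x) * (m p.2.2 * fourierMode p.2.2 x)))
      (fourierSeries a x * (fourierSeries b x * fourierSeries m x)) := by
  have hconj : Summable fun k => ‖conj (b k * fourierMode k x)‖ := by
    simpa only [RCLike.norm_conj] using hb.summable_norm_mul_fourierMode hd x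
  have hsum := hasSum_mul_mul (ha.hasSum hd x) (hb.hasSum_conj hd hb' x) (hm.hasSum hd x)
    (ha.summable_norm_mul_fourierMode hd x) hconj (hm.summable_norm_mul_fourierMode hd x)
  exact hsum

lemma cubicSummand_eq_neg_sum (c : Freq d → ℂ) (x : Ed d) (a b m : Freq d) :
    cubicSummand c x (a, b, m) = -∑ i, ∑ j,
      (derivCoeff j (derivCoeff i c) a * fourierMode a x *
          (conj (derivCoeff i c b * fourierMode b x) * (derivCoeff j c m * fourierMode m x)) +
        derivCoeff i c a * fourierMode a x * (conj (derivCoeff j (derivCoeff i c) b *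
          fourierMode b x) * (derivCoeff j c m * fourierMode m x)) +
        derivCoeff i c a * fourierMode a x * (conj (derivCoeff i c b * fourierMode b x) *
          (derivCoeff j (derivCoeff j c) m * fourierMode m x))) := by
  simp only [cubicSummand, fourierMode_add, fourierMode_sub, Complex.ofReal_mul, ofReal_freqDot]
  rw [Finset.sum_mul_sum]
  simp only [Finset.sum_mul, ← Finset.sum_neg_distrib]
  refine Finset.sum_congr rfl fun i _ => Finset.sum_congr rfl fun j _ => ?_
  simp only [derivCoeff, map_mul, Complex.conj_I, map_intCast, Pi.add_apply, Pi.sub_apply]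
  push_cast
  ring_nf
  simp only [Complex.I_pow_four]
  ring

lemma RapidDecay.hasSum_cubicSummand (hd : d ≤ 3) (h : RapidDecay c) (hc : ConjSymm c)
    (x : Ed d) :
    HasSum (cubicSummand c x) (-cubicDivergence (fun i => fourierSeries (_root_.derivCoeff i c) x)
      fun i j => fourierSeries (_root_.derivCoeff j (_root_.derivCoeff i c)) x) := by
  have hgrad (i : Fin d) := h.derivCoeff i
  have hhess (i j : Fin d) := (h.derivCoeff i).derivCoeff j
  have hsum := hasSum_sum (s := Finset.univ) fun i _ => hasSum_sum (s := Finset.univ) fun j _ =>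
    ((hasSum_mul_conj_mul hd (hhess i j) (hgrad i) (hc.derivCoeff i) (hgrad j) x).add
      (hasSum_mul_conj_mul hd (hgrad i) (hhess i j) ((hc.derivCoeff i).derivCoeff j)
        (hgrad j) x)).add
      (hasSum_mul_conj_mul hd (hgrad i) (hgrad i) (hc.derivCoeff i) (hhess j j) x)
  exact hsum.neg.congr_fun fun ⟨a, b, m⟩ => cubicSummand_eq_neg_sum c x a b m

lemma RapidDecay.cubicDivergence_realSeries (hd : d ≤ 3) (h : RapidDecay c) (hc : ConjSymm c)
    (x : Ed d) :
    cubicDivergence (fun i => pd (realSeries c) i x) (fun i j => pd (pd (realSeries c) i) j x) =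
      -(∑' p, cubicSummand c x p).re := by
  rw [(h.hasSum_cubicSummand hd hc x).tsum_eq, Complex.neg_re, neg_neg, ← Complex.ofReal_inj]
  simp only [h.pd_realSeries hd, (h.derivCoeff _).pd_realSeries hd,
    ← ((hc.derivCoeff _).derivCoeff _).ofReal_realSeries, ← (hc.derivCoeff _).ofReal_realSeries,
    ← ofReal_cubicDivergence, Complex.ofReal_re]

lemma RapidDecay.tsum_symbol_mul_eq (hd : d ≤ 3) (h : RapidDecay c) (ν : ℝ) (x : Ed d) :
    (∑' k, ((-(ν * freqNorm k ^ 4) + freqNorm k ^ 2 : ℝ) : ℂ) * c k * fourierMode k x).re =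
      -lapl (realSeries c) x - ν * lapl (lapl (realSeries c)) x := by
  have hsum := (h.laplCoeff.hasSum hd x).neg.sub
    ((h.laplCoeff.laplCoeff.hasSum hd x).mul_left (ν : ℂ))
  rw [h.lapl_realSeries hd, h.laplCoeff.lapl_realSeries hd, realSeries, realSeries,
    ← Complex.re_ofReal_mul, ← Complex.neg_re, ← Complex.sub_re, ← hsum.tsum_eq]
  refine congrArg Complex.re (tsum_congr fun k => ?_)
  simp only [_root_.laplCoeff]
  push_cast
  ring

lemma RapidDecay.re_tsum_eq_slopeDiv_sub (hd : d ≤ 3) (h : RapidDecay c) (hc : ConjSymm c)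
    (ν : ℝ) (x : Ed d) :
    ((∑' k, ((-(ν * freqNorm k ^ 4) + freqNorm k ^ 2 : ℝ) : ℂ) * c k * fourierMode k x) -
        ∑' p, cubicSummand c x p).re =
      slopeDiv (realSeries c) x - ν * lapl (lapl (realSeries c)) x := by
  have hdiff (i : Fin d) : DifferentiableAt ℝ (pd (realSeries c) i) x := by
    rw [h.pd_realSeries hd]
    exact (h.derivCoeff i).differentiable_realSeries hd x
  rw [Complex.sub_re, h.tsum_symbol_mul_eq hd, slopeDiv_eq hdiff,
    h.cubicDivergence_realSeries hd hc]
  ring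

end Equation

/-! ### Passage to the limit in the Galerkin system -/

/-- `galerkinField` extended by zero to the frequencies outside `S`. -/
def truncatedField {d : ℕ} (S : Finset (Freq d)) (ν : ℝ) (c : Freq d → ℂ) (k : Freq d) : ℂ :=
  if k ∈ S then galerkinField S ν c k else 0

section CubicSummand

variable {d : ℕ}

lemma abs_freqDot_mul_abs_freqDot_le (a b m : Freq d) :
    |freqDot a b| * |freqDot m (a - b + m)| ≤
      3 * (freqNorm a ^ 2 * freqNorm b ^ 2 * freqNorm m ^ 2) := by
  have hnonneg (k : Freq d) := freqNorm_nonneg k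
  have hle_sq (k : Freq d) := freqNorm_le_sq k
  have htriangle : freqNorm (a - b + m) ≤ freqNorm a + freqNorm b + freqNorm m :=
    (freqNorm_add_le _ _).trans (add_le_add_left (freqNorm_sub_le a b) _)
  calc |freqDot a b| * |freqDot m (a - b + m)|
      ≤ freqNorm a * freqNorm b * (freqNorm m * (freqNorm a + freqNorm b + freqNorm m)) :=
        mul_le_mul (abs_freqDot_le a b)
          ((abs_freqDot_le _ _).trans (mul_le_mul_of_nonneg_left htriangle (hnonneg m)))
          (abs_nonneg _) (mul_nonneg (hnonneg a) (hnonneg b))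
    _ = freqNorm a ^ 2 * freqNorm b * freqNorm m + freqNorm a * freqNorm b ^ 2 * freqNorm m +
          freqNorm a * freqNorm b * freqNorm m ^ 2 := by ring
    _ ≤ freqNorm a ^ 2 * freqNorm b ^ 2 * freqNorm m ^ 2 +
          freqNorm a ^ 2 * freqNorm b ^ 2 * freqNorm m ^ 2 +
          freqNorm a ^ 2 * freqNorm b ^ 2 * freqNorm m ^ 2 := by
        have hb := hnonneg b
        have hm := hnonneg m
        gcongr <;> apply hle_sq
    _ = 3 * (freqNorm a ^ 2 * freqNorm b ^ 2 * freqNorm m ^ 2) := by ring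

lemma norm_cubicSummand_le (c : Freq d → ℂ) (x : Ed d) (p : Freq d × Freq d × Freq d) :
    ‖cubicSummand c x p‖ ≤ 3 * (quarterNorm p.1 ^ 8 * ‖c p.1‖ *
      (quarterNorm p.2.1 ^ 8 * ‖c p.2.1‖ * (quarterNorm p.2.2 ^ 8 * ‖c p.2.2‖))) := by
  obtain ⟨a, b, m⟩ := p
  have hpow (k : Freq d) : quarterNorm k ^ 8 = freqNorm k ^ 2 := (freqNorm_pow k 2).symm
  rw [cubicSummand, norm_mul, norm_mul, norm_mul, norm_mul, norm_fourierMode, Complex.norm_real,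
    RCLike.norm_conj, Real.norm_eq_abs, abs_mul, mul_one]
  calc |freqDot a b| * |freqDot m (a - b + m)| * ‖c a‖ * ‖c b‖ * ‖c m‖
      ≤ 3 * (freqNorm a ^ 2 * freqNorm b ^ 2 * freqNorm m ^ 2) * ‖c a‖ * ‖c b‖ * ‖c m‖ := by
        gcongr ?_ * _ * _ * _
        exact abs_freqDot_mul_abs_freqDot_le a b m
    _ = _ := by rw [hpow, hpow, hpow]; ring

lemma cubicSummand_eq_zero (c : Freq d → ℂ) (x : Ed d) {p : Freq d × Freq d × Freq d}
    (hp : p.1 - p.2.1 + p.2.2 = 0) : cubicSummand c x p = 0 := by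
  simp [cubicSummand, hp, show freqDot p.2.2 0 = 0 by simp [freqDot]]

lemma fourierSeries_truncatedField {S : Finset (Freq d)} {c : Freq d → ℂ} (ν : ℝ)
    (hc : ∀ k, k ∉ S → c k = 0) (x : Ed d) :
    fourierSeries (truncatedField S ν c) x =
      (∑' k, ((-(ν * freqNorm k ^ 4) + freqNorm k ^ 2 : ℝ) : ℂ) * c k * fourierMode k x) -
        ∑' p : Freq d × Freq d × Freq d,
          if p.1 - p.2.1 + p.2.2 ∈ S then cubicSummand c x p else 0 := by
  rw [fourierSeries, tsum_eq_sum (s := S) fun k hk => by simp [truncatedField, hk],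
    tsum_eq_sum (s := S) fun k hk => by simp [hc k hk],
    tsum_eq_sum (s := S ×ˢ S ×ˢ S) fun p hp => ?_]
  · have hfield (k) (hk : k ∈ S) : truncatedField S ν c k * fourierMode k x =
        ((-(ν * freqNorm k ^ 4) + freqNorm k ^ 2 : ℝ) : ℂ) * c k * fourierMode k x -
          cubicTerm S c k * fourierMode k x := by
      rw [truncatedField, if_pos hk, galerkinField, sub_mul]
    rw [Finset.sum_congr rfl hfield, Finset.sum_sub_distrib, Finset.sum_product]
    simp only [Finset.sum_product, cubicTerm, Finset.sum_mul]
    rw [Finset.sum_comm]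
    refine congrArg _ (Finset.sum_congr rfl fun a _ => ?_)
    rw [Finset.sum_comm]
    refine Finset.sum_congr rfl fun b _ => ?_
    rw [Finset.sum_comm]
    refine Finset.sum_congr rfl fun m _ => ?_
    simp only [ite_mul, zero_mul, Finset.sum_ite_eq, cubicSummand]
  · simp only [Finset.mem_product, not_and_or] at hp
    rcases hp with h | h | h <;> simp [cubicSummand, hc _ h]

end CubicSummand

section DominatedConvergence

variable {d : ℕ} {l : Filter ℕ} {c : ℕ → Freq d → ℂ} {C : Freq d → ℂ} {B : ℝ}

lemma tendsto_fourierSeries (hd : d ≤ 3) (hc : ∀ k, Tendsto (fun N => c N k) l (nhds (C k)))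
    (hB : ∀ᶠ N in l, ∀ k, ‖c N k‖ ≤ B * (quarterNorm k ^ 14)⁻¹) (x : Ed d) :
    Tendsto (fun N => fourierSeries (c N) x) l (nhds (fourierSeries C x)) := by
  refine tendsto_tsum_of_dominated_convergence ((summable_inv_quarterNorm_pow hd).mul_left B)
    (fun k => (hc k).mul_const _) ?_
  simpa only [norm_mul, norm_fourierMode, mul_one] using hB

lemma tendsto_tsum_symbol_mul (hd : d ≤ 3) {ν : ℝ} (hν : 0 < ν)
    (hc : ∀ k, Tendsto (fun N => c N k) l (nhds (C k)))
    (h0 : ∀ N, c N 0 = 0) (hB : ∀ᶠ N in l, ∀ k, quarterNorm k ^ 30 * ‖c N k‖ ≤ B) (x : Ed d) :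
    Tendsto (fun N =>
        ∑' k, ((-(ν * freqNorm k ^ 4) + freqNorm k ^ 2 : ℝ) : ℂ) * c N k * fourierMode k x) l
      (nhds (∑' k,
        ((-(ν * freqNorm k ^ 4) + freqNorm k ^ 2 : ℝ) : ℂ) * C k * fourierMode k x)) := by
  refine tendsto_fourierSeries hd (B := ν * B + B) (fun k => (hc k).const_mul _) ?_ x
  filter_upwards [hB] with N hN k
  have hfour := quarterNorm_pow_mul_norm_le_mul_inv (p := 16) (h0 N) (by norm_num) hN k
  have htwo := quarterNorm_pow_mul_norm_le_mul_inv (p := 8) (h0 N) (by norm_num) hN k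
  calc ‖((-(ν * freqNorm k ^ 4) + freqNorm k ^ 2 : ℝ) : ℂ) * c N k‖
      ≤ (ν * freqNorm k ^ 4 + freqNorm k ^ 2) * ‖c N k‖ := by
        rw [norm_mul]
        exact mul_le_mul_of_nonneg_right (norm_symbol_le hν k) (norm_nonneg _)
    _ = ν * (quarterNorm k ^ 16 * ‖c N k‖) + quarterNorm k ^ 8 * ‖c N k‖ := by
        rw [freqNorm_pow, freqNorm_pow]
        ring
    _ ≤ ν * (B * (quarterNorm k ^ 14)⁻¹) + B * (quarterNorm k ^ 14)⁻¹ := by gcongr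
    _ = (ν * B + B) * (quarterNorm k ^ 14)⁻¹ := by ring

lemma summable_inv_quarterNorm_pow_mul_mul (hd : d ≤ 3) :
    Summable fun p : Freq d × Freq d × Freq d =>
      (quarterNorm p.1 ^ 14)⁻¹ * ((quarterNorm p.2.1 ^ 14)⁻¹ * (quarterNorm p.2.2 ^ 14)⁻¹) := by
  have hnonneg (k : Freq d) : 0 ≤ (quarterNorm k ^ 14)⁻¹ :=
    inv_nonneg.mpr (pow_nonneg (quarterNorm_nonneg k) 14)
  have hsummable := summable_inv_quarterNorm_pow hd
  exact hsummable.mul_of_nonneg (hsummable.mul_of_nonneg hsummable hnonneg hnonneg) hnonneg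
    fun p => mul_nonneg (hnonneg p.1) (hnonneg p.2)

lemma norm_cubicSummand_le_mul_inv {c : Freq d → ℂ} (h0 : c 0 = 0)
    (hB : ∀ k, quarterNorm k ^ 30 * ‖c k‖ ≤ B) (x : Ed d) (p : Freq d × Freq d × Freq d) :
    ‖cubicSummand c x p‖ ≤ 3 * B ^ 3 * ((quarterNorm p.1 ^ 14)⁻¹ *
      ((quarterNorm p.2.1 ^ 14)⁻¹ * (quarterNorm p.2.2 ^ 14)⁻¹)) := by
  have hdecay (k : Freq d) := quarterNorm_pow_mul_norm_le_mul_inv (p := 8) h0 (by norm_num) hB k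
  have hnonneg (k : Freq d) : 0 ≤ quarterNorm k ^ 8 * ‖c k‖ :=
    mul_nonneg (pow_nonneg (quarterNorm_nonneg k) 8) (norm_nonneg _)
  have hbound (k : Freq d) := (hnonneg k).trans (hdecay k)
  calc ‖cubicSummand c x p‖
      ≤ 3 * (B * (quarterNorm p.1 ^ 14)⁻¹ *
          (B * (quarterNorm p.2.1 ^ 14)⁻¹ * (B * (quarterNorm p.2.2 ^ 14)⁻¹))) := by
        refine (norm_cubicSummand_le c x p).trans (mul_le_mul_of_nonneg_left ?_ (by norm_num))
        exact mul_le_mul (hdecay _) (mul_le_mul (hdecay _) (hdecay _) (hnonneg _) (hbound _))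
          (mul_nonneg (hnonneg _) (hnonneg _)) (hbound _)
    _ = _ := by ring

lemma tendsto_cubicSummand (hc : ∀ k, Tendsto (fun N => c N k) l (nhds (C k))) (x : Ed d)
    (p : Freq d × Freq d × Freq d) :
    Tendsto (fun N => cubicSummand (c N) x p) l (nhds (cubicSummand C x p)) :=
  ((((hc p.1).const_mul _).mul ((Complex.continuous_conj.tendsto _).comp (hc p.2.1))).mul
    (hc p.2.2)).mul_const _

lemma tendsto_tsum_cubicSummand (hd : d ≤ 3) {S : ℕ → Finset (Freq d)}
    (hS : ∀ k, k ≠ 0 → ∀ᶠ N in l, k ∈ S N) (hc : ∀ k, Tendsto (fun N => c N k) l (nhds (C k)))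
    (h0 : ∀ N, c N 0 = 0) (hB : ∀ᶠ N in l, ∀ k, quarterNorm k ^ 30 * ‖c N k‖ ≤ B) (x : Ed d) :
    Tendsto (fun N => ∑' p : Freq d × Freq d × Freq d,
        if p.1 - p.2.1 + p.2.2 ∈ S N then cubicSummand (c N) x p else 0) l
      (nhds (∑' p, cubicSummand C x p)) := by
  refine tendsto_tsum_of_dominated_convergence
    ((summable_inv_quarterNorm_pow_mul_mul hd).mul_left (3 * B ^ 3)) (fun p => ?_) ?_
  · rcases eq_or_ne (p.1 - p.2.1 + p.2.2) 0 with hp | hp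
    · simp only [cubicSummand_eq_zero _ x hp, ite_self]
      exact tendsto_const_nhds
    · refine (tendsto_cubicSummand hc x p).congr' ?_
      filter_upwards [hS _ hp] with N hN
      rw [if_pos hN]
  · filter_upwards [hB] with N hN p
    refine le_trans ?_ (norm_cubicSummand_le_mul_inv (h0 N) hN x p)
    split_ifs <;> simp

lemma fourierSeries_eq_of_tendsto_truncatedField (hd : d ≤ 3) {ν : ℝ} (hν : 0 < ν) [l.NeBot]
    {S : ℕ → Finset (Freq d)} {C' : Freq d → ℂ} (hS : ∀ k, k ≠ 0 → ∀ᶠ N in l, k ∈ S N)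
    (h0 : ∀ N, (0 : Freq d) ∉ S N) (hsupp : ∀ N, ∀ k, k ∉ S N → c N k = 0)
    (hc : ∀ k, Tendsto (fun N => c N k) l (nhds (C k)))
    (hc' : ∀ k, Tendsto (fun N => truncatedField (S N) ν (c N) k) l (nhds (C' k)))
    (hB : ∀ᶠ N in l, ∀ k, quarterNorm k ^ 30 * ‖c N k‖ ≤ B)
    (hB' : ∀ᶠ N in l, ∀ k, quarterNorm k ^ 30 * ‖truncatedField (S N) ν (c N) k‖ ≤ B) (x : Ed d) :
    fourierSeries C' x =
      (∑' k, ((-(ν * freqNorm k ^ 4) + freqNorm k ^ 2 : ℝ) : ℂ) * C k * fourierMode k x) -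
        ∑' p, cubicSummand C x p := by
  have h0' (N : ℕ) : c N 0 = 0 := hsupp N 0 (h0 N)
  refine tendsto_nhds_unique (tendsto_fourierSeries (B := B) hd hc' ?_ x)
    (((tendsto_tsum_symbol_mul hd hν hc h0' hB x).sub
      (tendsto_tsum_cubicSummand hd hS hc h0' hB x)).congr fun N =>
        (fourierSeries_truncatedField ν (hsupp N) x).symm)
  filter_upwards [hB'] with N hN
  exact norm_le_mul_inv_quarterNorm_pow (if_neg (h0 N)) (by norm_num) hN

end DominatedConvergence

section TimeDerivative

lemma hasDerivAt_of_norm_sub_sub_smul_le {E : Type*} [NormedAddCommGroup E] [NormedSpace ℝ E]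
    {f : ℝ → E} {f' : E} {t K : ℝ}
    (h : ∀ᶠ s in nhds t, ‖f s - f t - (s - t) • f'‖ ≤ K * |s - t| ^ 2) : HasDerivAt f f' t := by
  refine hasDerivAt_iff_isLittleO.mpr (Asymptotics.IsBigO.trans_isLittleO
    (Asymptotics.IsBigO.of_bound K ?_) (Asymptotics.isLittleO_pow_sub_sub t one_lt_two))
  simpa using h

lemma hasDerivAt_fourierSeries {d : ℕ} (hd : d ≤ 3) {C C' : ℝ → Freq d → ℂ} {t t₀ T B : ℝ}
    (ht : t ∈ Ioo t₀ T) (h0 : C t 0 = 0) (h0' : ∀ s ∈ Ioo t₀ T, C' s 0 = 0)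
    (hC : ∀ s ∈ Ioo t₀ T, ∀ k, HasDerivAt (fun s => C s k) (C' s k) s)
    (hB : ∀ k, quarterNorm k ^ 30 * ‖C t k‖ ≤ B)
    (hB' : ∀ s ∈ Ioo t₀ T, ∀ k, quarterNorm k ^ 30 * ‖C' s k‖ ≤ B) (x : Ed d) :
    HasDerivAt (fun s => fourierSeries (C s) x) (fourierSeries (C' t) x) t := by
  have hsummable := (summable_inv_quarterNorm_pow hd).mul_left B
  refine hasDerivAt_tsum_of_isPreconnected hsummable isOpen_Ioo isPreconnected_Ioo
    (fun k s hs => (hC s hs k).mul_const _) (fun k s hs => ?_) ht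
    (.of_norm_bounded hsummable fun k => ?_) ht <;>
    rw [norm_mul, norm_fourierMode, mul_one]
  · exact norm_le_mul_inv_quarterNorm_pow (h0' s hs) (by norm_num) (hB' s hs) k
  · exact norm_le_mul_inv_quarterNorm_pow h0 (by norm_num) hB k

end TimeDerivative

/-- The coefficientwise limit of a sequence of coefficient families along a filter; it is only
meaningful where these limits exist. -/
def limitCoeff {d : ℕ} (l : Filter ℕ) (a : ℕ → Freq d → ℂ) (k : Freq d) : ℂ :=
  limUnder l fun N => a N k

/-- A sequence of Galerkin solutions with real-valued, uniformly `L²`-bounded initial data, on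
symmetric frequency sets exhausting the nonzero frequencies and with existence times tending to
infinity. -/
structure GalerkinSequence {d : ℕ} (ν R : ℝ) (S : ℕ → Finset (Freq d))
    (c : ℕ → ℝ → Freq d → ℂ) : Prop where
  zero_notMem : ∀ N, (0 : Freq d) ∉ S N
  neg_mem : ∀ N, ∀ k ∈ S N, -k ∈ S N
  eventually_mem : ∀ k : Freq d, k ≠ 0 → ∀ᶠ N in atTop, k ∈ S N
  isGalerkinSol : ∀ N : ℕ, IsGalerkinSol (S N) ν (N + 1) (c N)
  conjSymm : ∀ N, ConjSymm (c N 0)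
  l2Sq_le : ∀ N, l2Sq (S N) (c N 0) ≤ R

section Limit

variable {d : ℕ} {U : Ultrafilter ℕ} {ν R : ℝ} {S : ℕ → Finset (Freq d)}
  {c : ℕ → ℝ → Freq d → ℂ}

lemma tendsto_limitCoeff {a : ℕ → Freq d → ℂ} {B : ℝ}
    (h : ∀ᶠ N in (U : Filter ℕ), ∀ k, ‖a N k‖ ≤ B) (k : Freq d) :
    Tendsto (fun N => a N k) U (nhds (limitCoeff U a k)) := by
  obtain ⟨z, -, hz⟩ := (isCompact_closedBall (0 : ℂ) B).ultrafilter_le_nhds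
    (U.map fun N => a N k) (le_principal_iff.mpr (h.mono fun N hN => by simpa using hN k))
  exact tendsto_nhds_limUnder ⟨z, hz⟩

lemma IsGalerkinSol.mono {S : Finset (Freq d)} {T T' : ℝ} {c : ℝ → Freq d → ℂ}
    (h : IsGalerkinSol S ν T c) (hT : T' ≤ T) : IsGalerkinSol S ν T' c :=
  ⟨h.eq_zero_of_notMem, fun t ht => h.hasDerivAt t ⟨ht.1, ht.2.trans hT⟩⟩

lemma eventually_le_natCast_add_one {l : Filter ℕ} (hl : l ≤ atTop) (T : ℝ) :
    ∀ᶠ N : ℕ in l, T ≤ N + 1 :=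
  hl ((tendsto_natCast_atTop_atTop.eventually_ge_atTop T).mono fun _ hN => by linarith)

namespace GalerkinSequence

lemma exists_bound (h : GalerkinSequence ν R S c) (hd : d ≤ 3) (hν : 0 < ν) (n : ℕ) {t₀ : ℝ}
    (ht₀ : 0 < t₀) (T : ℝ) :
    ∃ B, 0 ≤ B ∧ ∀ N : ℕ, T ≤ N + 1 → ∀ t ∈ Icc t₀ T, ∀ k,
      quarterNorm k ^ n * ‖c N t k‖ ≤ B ∧
        quarterNorm k ^ n * ‖truncatedField (S N) ν (c N t) k‖ ≤ B := by
  obtain ⟨B, hB₀, hB⟩ := uniformDecay (d := d) hd hν T R n ht₀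
  obtain ⟨B', -, hB'⟩ := exists_quarterNorm_pow_mul_norm_galerkinField_le (d := d) hd hν T R n ht₀
  refine ⟨max B B', le_max_of_le_left hB₀, fun N hN t ht k => ?_⟩
  have hsol := (h.isGalerkinSol N).mono hN
  by_cases hk : k ∈ S N
  · rw [truncatedField, if_pos hk]
    exact ⟨le_max_of_le_left (hB _ _ (h.zero_notMem N) hsol (h.l2Sq_le N) t ht k hk),
      le_max_of_le_right (hB' _ _ (h.zero_notMem N) hsol (h.l2Sq_le N) t ht k hk)⟩
  · rw [truncatedField, if_neg hk, hsol.eq_zero_of_notMem t k hk]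
    simpa using Or.inl hB₀

lemma tendsto (h : GalerkinSequence ν R S c) (hd : d ≤ 3) (hν : 0 < ν)
    (hU : (U : Filter ℕ) ≤ atTop) {t : ℝ} (ht : 0 < t) (k : Freq d) :
    Tendsto (fun N => c N t k) U (nhds (limitCoeff U (fun N => c N t) k)) := by
  obtain ⟨B, -, hB⟩ := h.exists_bound hd hν 0 ht t
  refine tendsto_limitCoeff (B := B) ?_ k
  filter_upwards [eventually_le_natCast_add_one hU t] with N hN k
  simpa using (hB N hN t (right_mem_Icc.mpr le_rfl) k).1

lemma tendsto_truncatedField (h : GalerkinSequence ν R S c) (hd : d ≤ 3) (hν : 0 < ν)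
    (hU : (U : Filter ℕ) ≤ atTop) {t : ℝ} (ht : 0 < t) (k : Freq d) :
    Tendsto (fun N => truncatedField (S N) ν (c N t) k) U
      (nhds (limitCoeff U (fun N => truncatedField (S N) ν (c N t)) k)) := by
  obtain ⟨B, -, hB⟩ := h.exists_bound hd hν 0 ht t
  refine tendsto_limitCoeff (B := B) ?_ k
  filter_upwards [eventually_le_natCast_add_one hU t] with N hN k
  simpa using (hB N hN t (right_mem_Icc.mpr le_rfl) k).2

lemma exists_bound_limitCoeff (h : GalerkinSequence ν R S c) (hd : d ≤ 3) (hν : 0 < ν)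
    (hU : (U : Filter ℕ) ≤ atTop) (n : ℕ) {t₀ : ℝ} (ht₀ : 0 < t₀) (T : ℝ) :
    ∃ B, ∀ t ∈ Icc t₀ T, ∀ k,
      quarterNorm k ^ n * ‖limitCoeff U (fun N => c N t) k‖ ≤ B ∧
        quarterNorm k ^ n * ‖limitCoeff U (fun N => truncatedField (S N) ν (c N t)) k‖ ≤ B := by
  obtain ⟨B, -, hB⟩ := h.exists_bound hd hν n ht₀ T
  refine ⟨B, fun t ht k => ?_⟩
  have hpos := ht₀.trans_le ht.1
  have hlarge := eventually_le_natCast_add_one hU T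
  exact ⟨le_of_tendsto ((h.tendsto hd hν hU hpos k).norm.const_mul _)
      (hlarge.mono fun N hN => (hB N hN t ht k).1),
    le_of_tendsto ((h.tendsto_truncatedField hd hν hU hpos k).norm.const_mul _)
      (hlarge.mono fun N hN => (hB N hN t ht k).2)⟩

lemma limitCoeff_zero (h : GalerkinSequence ν R S c) (t : ℝ) :
    limitCoeff U (fun N => c N t) 0 = 0 := by
  simp only [limitCoeff, fun N => (h.isGalerkinSol N).eq_zero_of_notMem t 0 (h.zero_notMem N)]
  exact tendsto_const_nhds.limUnder_eq

lemma limitCoeff_truncatedField_zero (h : GalerkinSequence ν R S c) (t : ℝ) :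
    limitCoeff U (fun N => truncatedField (S N) ν (c N t)) 0 = 0 := by
  simp only [limitCoeff, truncatedField, if_neg (h.zero_notMem _)]
  exact tendsto_const_nhds.limUnder_eq

lemma rapidDecay_limitCoeff (h : GalerkinSequence ν R S c) (hd : d ≤ 3) (hν : 0 < ν)
    (hU : (U : Filter ℕ) ≤ atTop) {t : ℝ} (ht : 0 < t) :
    RapidDecay (limitCoeff U fun N => c N t) := by
  refine ⟨h.limitCoeff_zero t, fun n => ?_⟩
  obtain ⟨B, hB⟩ := h.exists_bound_limitCoeff hd hν hU n ht t
  exact ⟨B, fun k => (hB t (right_mem_Icc.mpr le_rfl) k).1⟩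

lemma conjSymm_limitCoeff (h : GalerkinSequence ν R S c) (hd : d ≤ 3) (hν : 0 < ν)
    (hU : (U : Filter ℕ) ≤ atTop) {t : ℝ} (ht : 0 < t) :
    ConjSymm (limitCoeff U fun N => c N t) := by
  intro k
  refine tendsto_nhds_unique (h.tendsto hd hν hU ht (-k))
    (((Complex.continuous_conj.tendsto _).comp (h.tendsto hd hν hU ht k)).congr' ?_)
  filter_upwards [eventually_le_natCast_add_one hU t] with N hN
  exact ((h.isGalerkinSol N).conjSymm hν (h.neg_mem N) (h.conjSymm N) ⟨ht.le, hN⟩ k).symm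

lemma hasDerivAt_limitCoeff (h : GalerkinSequence ν R S c) (hd : d ≤ 3) (hν : 0 < ν)
    (hU : (U : Filter ℕ) ≤ atTop) {t : ℝ} (ht : 0 < t) (k : Freq d) :
    HasDerivAt (fun s => limitCoeff U (fun N => c N s) k)
      (limitCoeff U (fun N => truncatedField (S N) ν (c N t)) k) t := by
  obtain ⟨B, hB₀, hB⟩ := h.exists_bound hd hν 18 (half_pos ht) (2 * t)
  refine hasDerivAt_of_norm_sub_sub_smul_le (K := fieldLipConst ν B k) ?_
  filter_upwards [Icc_mem_nhds (a := t / 2) (b := 2 * t) (by linarith) (by linarith)] with s hs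
  have hs₀ : 0 < s := (half_pos ht).trans_le hs.1
  refine le_of_tendsto (((h.tendsto hd hν hU hs₀ k).sub (h.tendsto hd hν hU ht k)).sub
    ((h.tendsto_truncatedField hd hν hU ht k).const_smul (s - t))).norm ?_
  filter_upwards [eventually_le_natCast_add_one hU (2 * t)] with N hN
  have hsol := (h.isGalerkinSol N).mono hN
  by_cases hk : k ∈ S N
  · rw [truncatedField, if_pos hk]
    refine hsol.norm_sub_sub_smul_galerkinField_le hd hν (h.zero_notMem N) (half_pos ht) hB₀
      (fun τ hτ l _ => (hB N hN τ hτ l).1) (fun τ hτ l hl => ?_) hk hs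
      ⟨by linarith, by linarith⟩
    simpa only [truncatedField, if_pos hl] using (hB N hN τ hτ l).2
  · rw [truncatedField, if_neg hk, hsol.eq_zero_of_notMem s k hk, hsol.eq_zero_of_notMem t k hk]
    simpa using mul_nonneg (fieldLipConst_nonneg hν hB₀ k) (sq_nonneg _)

lemma fourierSeries_limitCoeff_truncatedField (h : GalerkinSequence ν R S c) (hd : d ≤ 3)
    (hν : 0 < ν) (hU : (U : Filter ℕ) ≤ atTop) {t : ℝ} (ht : 0 < t) (x : Ed d) :
    fourierSeries (limitCoeff U fun N => truncatedField (S N) ν (c N t)) x =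
      (∑' k, ((-(ν * freqNorm k ^ 4) + freqNorm k ^ 2 : ℝ) : ℂ) *
        limitCoeff U (fun N => c N t) k * fourierMode k x) -
          ∑' p, cubicSummand (limitCoeff U fun N => c N t) x p := by
  obtain ⟨B, -, hB⟩ := h.exists_bound hd hν 30 ht t
  have hlarge := eventually_le_natCast_add_one hU t
  exact fourierSeries_eq_of_tendsto_truncatedField hd hν
    (fun k hk => hU (h.eventually_mem k hk)) h.zero_notMem
    (fun N => (h.isGalerkinSol N).eq_zero_of_notMem t) (h.tendsto hd hν hU ht)
    (h.tendsto_truncatedField hd hν hU ht)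
    (hlarge.mono fun N hN k => (hB N hN t (right_mem_Icc.mpr le_rfl) k).1)
    (hlarge.mono fun N hN k => (hB N hN t (right_mem_Icc.mpr le_rfl) k).2) x

theorem hasDerivAt_realSeries_limitCoeff (h : GalerkinSequence ν R S c) (hd : d ≤ 3) (hν : 0 < ν)
    (hU : (U : Filter ℕ) ≤ atTop) {t : ℝ} (ht : 0 < t) (x : Ed d) :
    HasDerivAt (fun s => realSeries (limitCoeff U fun N => c N s) x)
      (slopeDiv (realSeries (limitCoeff U fun N => c N t)) x -
        ν * lapl (lapl (realSeries (limitCoeff U fun N => c N t))) x) t := by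
  obtain ⟨B, hB⟩ := h.exists_bound_limitCoeff hd hν hU 30 (half_pos ht) (2 * t)
  have hmem : t ∈ Ioo (t / 2) (2 * t) := ⟨by linarith, by linarith⟩
  have hderiv := hasDerivAt_fourierSeries hd hmem (h.limitCoeff_zero t)
    (fun s _ => h.limitCoeff_truncatedField_zero s)
    (fun s hs => h.hasDerivAt_limitCoeff hd hν hU ((half_pos ht).trans hs.1))
    (fun k => (hB t (Ioo_subset_Icc_self hmem) k).1)
    (fun s hs k => (hB s (Ioo_subset_Icc_self hs) k).2) x
  rw [h.fourierSeries_limitCoeff_truncatedField hd hν hU ht x] at hderiv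
  rw [← (h.rapidDecay_limitCoeff hd hν hU ht).re_tsum_eq_slopeDiv_sub hd
    (h.conjSymm_limitCoeff hd hν hU ht) ν x]
  exact Complex.reCLM.hasFDerivAt.comp_hasDerivAt t hderiv

end GalerkinSequence

end Limit

/-! ### Solution with prescribed Fourier coefficients -/

/-- The nonzero frequencies whose coordinates are at most `N` in absolute value. -/
def freqBox (d N : ℕ) : Finset (Freq d) :=
  (Fintype.piFinset fun _ => Finset.Icc (-(N : ℤ)) N).erase 0

section FreqBox

variable {d N : ℕ} {k : Freq d}

lemma mem_freqBox : k ∈ freqBox d N ↔ k ≠ 0 ∧ ∀ i, |k i| ≤ N := by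
  simp [freqBox, Fintype.mem_piFinset, abs_le]

lemma neg_mem_freqBox : -k ∈ freqBox d N ↔ k ∈ freqBox d N := by simp [mem_freqBox]

lemma eventually_mem_freqBox (hk : k ≠ 0) : ∀ᶠ N in atTop, k ∈ freqBox d N := by
  have hle (i : Fin d) : ∀ᶠ N : ℕ in atTop, |k i| ≤ (N : ℤ) :=
    tendsto_natCast_atTop_atTop.eventually_ge_atTop |k i|
  filter_upwards [eventually_all.mpr hle] with N hN
  exact mem_freqBox.mpr ⟨hk, hN⟩

end FreqBox

section Existence

variable {d : ℕ} {ν : ℝ} {a : Freq d → ℂ}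

lemma exists_galerkinSequence (hν : 0 < ν) (ha : ConjSymm a) (hsum : Summable fun k => ‖a k‖ ^ 2) :
    ∃ c, GalerkinSequence ν (∑' k, ‖a k‖ ^ 2) (freqBox d) c ∧
      ∀ N, ∀ k ∈ freqBox d N, c N 0 k = a k := by
  have hexists (N : ℕ) : ∃ c, IsGalerkinSol (freqBox d N) ν (N + 1) c ∧
      c 0 = fun k => if k ∈ freqBox d N then a k else 0 :=
    exists_isGalerkinSol _ hν (by positivity) fun k hk => if_neg hk
  choose c hsol hinit using hexists
  have hinit' (N : ℕ) (k) (hk : k ∈ freqBox d N) : c N 0 k = a k := by simp [hinit, hk]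
  refine ⟨c, ⟨fun N h => (mem_freqBox.mp h).1 rfl, fun N k => neg_mem_freqBox.mpr,
    fun k => eventually_mem_freqBox, hsol, fun N k => ?_, fun N => ?_⟩, hinit'⟩
  · simp only [hinit, neg_mem_freqBox, ha k, apply_ite conj, map_zero]
  · exact (Finset.sum_congr rfl fun k hk => by rw [hinit' N k hk]).trans_le
      (hsum.sum_le_tsum _ fun k _ => by positivity)

lemma GalerkinSequence.eventually_sum_sobolev_limitCoeff_sub_le {R : ℝ} {U : Ultrafilter ℕ}
    {S : ℕ → Finset (Freq d)} {c : ℕ → ℝ → Freq d → ℂ} (h : GalerkinSequence ν R S c)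
    (hd₁ : 1 ≤ d) (hd : d ≤ 3) (hν : 0 < ν) (hU : (U : Filter ℕ) ≤ atTop) (ha₀ : a 0 = 0)
    (ha : Summable fun k => freqNorm k ^ d * ‖a k‖ ^ 2)
    (hinit : ∀ N, ∀ k ∈ S N, c N 0 k = a k) {ε : ℝ} (hε : 0 < ε) :
    ∀ᶠ t in nhdsWithin 0 (Ioi 0), ∀ F : Finset (Freq d),
      ∑ k ∈ F, (1 + freqNorm k ^ d) * ‖limitCoeff U (fun N => c N t) k - a k‖ ^ 2 ≤ ε := by
  obtain ⟨δ, hδ, -, hclose⟩ := exists_forall_sum_sobolev_sub_le hd₁ hd hν ha hε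
  filter_upwards [Ioc_mem_nhdsGT hδ] with t ⟨ht, htδ⟩ F
  rw [← Finset.sum_erase F (a := 0) (by rw [h.limitCoeff_zero t, ha₀]; simp)]
  refine le_of_tendsto (tendsto_finsetSum _ fun k _ =>
    ((((h.tendsto hd hν hU ht k).sub_const _).norm).pow 2).const_mul _) ?_
  have hsubset : ∀ᶠ N in atTop, ∀ k ∈ F.erase 0, k ∈ S N :=
    (Finset.eventually_all _).mpr fun k hk => h.eventually_mem k (Finset.ne_of_mem_erase hk)
  filter_upwards [hU hsubset] with N hN
  refine (Finset.sum_le_sum_of_subset_of_nonneg hN fun k _ _ => ?_).trans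
    (hclose (S N) (c N) (h.zero_notMem N) ((h.isGalerkinSol N).mono (by simp)) (hinit N) t
      ⟨ht.le, htδ⟩)
  have := freqNorm_nonneg k
  positivity

theorem exists_solution_of_coeff (hd₁ : 1 ≤ d) (hd : d ≤ 3) (hν : 0 < ν) (ha : ConjSymm a)
    (ha₀ : a 0 = 0) (hsum : Summable fun k => (1 + freqNorm k ^ d) * ‖a k‖ ^ 2) :
    ∃ C : ℝ → Freq d → ℂ, (∀ t, 0 < t → RapidDecay (C t) ∧ ConjSymm (C t) ∧
        ∀ x, HasDerivAt (fun s => realSeries (C s) x)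
          (slopeDiv (realSeries (C t)) x - ν * lapl (lapl (realSeries (C t))) x) t) ∧
      ∀ ε, 0 < ε → ∀ᶠ t in nhdsWithin 0 (Ioi 0), ∀ F : Finset (Freq d),
        ∑ k ∈ F, (1 + freqNorm k ^ d) * ‖C t k - a k‖ ^ 2 ≤ ε := by
  have hl2 : Summable fun k => ‖a k‖ ^ 2 := hsum.of_nonneg_of_le (fun k => by positivity)
    fun k => le_mul_of_one_le_left (by positivity)
      (le_add_of_nonneg_right (pow_nonneg (freqNorm_nonneg k) d))
  have hsobolev : Summable fun k => freqNorm k ^ d * ‖a k‖ ^ 2 :=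
    (hsum.sub hl2).congr fun k => by ring
  obtain ⟨c, hseq, hinit⟩ := exists_galerkinSequence hν ha hl2
  have hU : (hyperfilter ℕ : Filter ℕ) ≤ atTop := Nat.hyperfilter_le_atTop
  exact ⟨fun t => limitCoeff (hyperfilter ℕ) fun N => c N t,
    fun t ht => ⟨hseq.rapidDecay_limitCoeff hd hν hU ht, hseq.conjSymm_limitCoeff hd hν hU ht,
      hseq.hasDerivAt_realSeries_limitCoeff hd hν hU ht⟩,
    fun ε hε => hseq.eventually_sum_sobolev_limitCoeff_sub_le hd₁ hd hν hU ha₀ hsobolev hinit hε⟩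

end Existence

/-! ### Fourier coefficients of the initial datum -/

/-- The coefficients of the Fourier series of `f`: unlike `fcoefR`, they include the factor
`(2π)⁻ᵈ`. -/
def seriesCoeff {d : ℕ} (f : Ed d → ℝ) (k : Freq d) : ℂ := ((2 * π) ^ d : ℝ)⁻¹ * fcoefR f k

section InitialDatum

variable {d : ℕ} {f g : Ed d → ℝ}

lemma integrableOn_mul_fourierMode {u : Ed d → ℂ} (hu : IntegrableOn u (Qd d)) (k : Freq d) :
    IntegrableOn (fun x => u x * fourierMode k x) (Qd d) :=
  Integrable.mul_bdd (c := 1) hu (continuous_fourierMode k).aestronglyMeasurable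
    (.of_forall fun x => (norm_fourierMode k x).le)

lemma fcoefR_of_not_integrableOn (hf : ¬IntegrableOn f (Qd d)) (k : Freq d) : fcoefR f k = 0 := by
  rw [fcoefR_eq_integral]
  refine integral_undef fun h => hf ?_
  have hcancel (x : Ed d) : (f x : ℂ) * fourierMode (-k) x * fourierMode k x = f x := by
    rw [mul_assoc, ← fourierMode_add, neg_add_cancel, fourierMode_zero, mul_one]
  simpa only [hcancel, RCLike.re_eq_complex_re, Complex.ofReal_re, IntegrableOn] using
    (integrableOn_mul_fourierMode h k).re

lemma fcoefR_sub (hf : IntegrableOn f (Qd d)) (hg : IntegrableOn g (Qd d)) (k : Freq d) :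
    fcoefR (fun x => f x - g x) k = fcoefR f k - fcoefR g k := by
  simp only [fcoefR_eq_integral, Complex.ofReal_sub, sub_mul]
  exact integral_sub (integrableOn_mul_fourierMode hf.ofReal _)
    (integrableOn_mul_fourierMode hg.ofReal _)

lemma fcoefR_zero (f : Ed d → ℝ) : fcoefR f 0 = ((∫ x in Qd d, f x : ℝ) : ℂ) := by
  simp [fcoefR_eq_integral, ← integral_complex_ofReal, fourierMode_zero]

lemma conjSymm_seriesCoeff (f : Ed d → ℝ) : ConjSymm (seriesCoeff f) := fun k => by
  simp only [seriesCoeff, fcoefR_eq_integral, map_mul, ← integral_conj, Complex.conj_ofReal,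
    fourierMode_neg]

lemma fcoefR_eq_mul_seriesCoeff (f : Ed d → ℝ) (k : Freq d) :
    fcoefR f k = ((2 * π) ^ d : ℝ) * seriesCoeff f k := by
  have hne : (((2 * π) ^ d : ℝ) : ℂ) ≠ 0 := Complex.ofReal_ne_zero.mpr (by positivity)
  rw [seriesCoeff, Complex.ofReal_inv, mul_inv_cancel_left₀ hne]

lemma summable_sobolev_seriesCoeff (h : Summable fun k => sobWeight k * ‖fcoefR f k‖ ^ 2) :
    Summable fun k => (1 + freqNorm k ^ d) * ‖seriesCoeff f k‖ ^ 2 := by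
  refine (h.mul_left (((2 * π) ^ d)⁻¹ ^ 2)).congr fun k => ?_
  rw [seriesCoeff, norm_mul, Complex.norm_real, Real.norm_of_nonneg (by positivity), sobWeight_eq]
  ring

end InitialDatum

section Attainment

variable {d : ℕ} {h₀ : Ed d → ℝ} {c : Freq d → ℂ}

lemma RapidDecay.integrableOn_realSeries (hd : d ≤ 3) (h : RapidDecay c) :
    IntegrableOn (realSeries c) (Qd d) :=
  integrableOn_Qd_of_continuous (h.contDiff_realSeries hd).continuous

lemma RapidDecay.integral_realSeries (hd : d ≤ 3) (h : RapidDecay c) (hc : ConjSymm c) :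
    ∫ x in Qd d, realSeries c x = 0 := by
  have hcoeff := fcoefR_realSeries hd h hc 0
  rw [fcoefR_zero, h.apply_zero, mul_zero] at hcoeff
  exact_mod_cast hcoeff

-- If `h₀` is not integrable then neither is the difference, whose coefficients are then all `0`.
lemma RapidDecay.norm_fcoefR_realSeries_sub_le (hd : d ≤ 3) (h : RapidDecay c) (hc : ConjSymm c)
    (h₀ : Ed d → ℝ) (k : Freq d) :
    ‖fcoefR (fun x => realSeries c x - h₀ x) k‖ ≤ (2 * π) ^ d * ‖c k - seriesCoeff h₀ k‖ := by
  have hinteg := h.integrableOn_realSeries hd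
  by_cases hh₀ : IntegrableOn h₀ (Qd d)
  · rw [fcoefR_sub hinteg hh₀, fcoefR_realSeries hd h hc, fcoefR_eq_mul_seriesCoeff, ← mul_sub,
      norm_mul, Complex.norm_real, Real.norm_of_nonneg (by positivity)]
  · have hdiff : ¬IntegrableOn (fun x => realSeries c x - h₀ x) (Qd d) := fun hsub =>
      hh₀ ((hinteg.sub hsub).congr_fun (fun x _ => sub_sub_cancel _ _) isCompact_Qd.measurableSet)
    rw [fcoefR_of_not_integrableOn hdiff, norm_zero]
    positivity

lemma hnormR_nonneg (f : Ed d → ℝ) : 0 ≤ hnormR f := Real.sqrt_nonneg _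

lemma hnormR_le {f : Ed d → ℝ} {η : ℝ} (hη : 0 ≤ η)
    (h : ∀ F : Finset (Freq d), ∑ k ∈ F, sobWeight k * ‖fcoefR f k‖ ^ 2 ≤ η ^ 2) :
    hnormR f ≤ η := by
  refine Real.sqrt_le_iff.mpr ⟨hη, Real.tsum_le_of_sum_le (fun k => ?_) h⟩
  rw [sobWeight_eq]
  have := freqNorm_nonneg k
  positivity

lemma RapidDecay.hnormR_realSeries_sub_le (hd : d ≤ 3) (h : RapidDecay c) (hc : ConjSymm c)
    {η : ℝ} (hη : 0 ≤ η)
    (hclose : ∀ F : Finset (Freq d),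
      ∑ k ∈ F, (1 + freqNorm k ^ d) * ‖c k - seriesCoeff h₀ k‖ ^ 2 ≤ (η / (2 * π) ^ d) ^ 2) :
    hnormR (fun x => realSeries c x - h₀ x) ≤ η := by
  refine hnormR_le hη fun F => ?_
  calc ∑ k ∈ F, sobWeight k * ‖fcoefR (fun x => realSeries c x - h₀ x) k‖ ^ 2
      ≤ ∑ k ∈ F, (1 + freqNorm k ^ d) * ((2 * π) ^ d * ‖c k - seriesCoeff h₀ k‖) ^ 2 := by
        simp only [sobWeight_eq]
        gcongr with k
        · exact add_nonneg zero_le_one (pow_nonneg (freqNorm_nonneg k) d)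
        · exact h.norm_fcoefR_realSeries_sub_le hd hc h₀ k
    _ = ((2 * π) ^ d) ^ 2 * ∑ k ∈ F, (1 + freqNorm k ^ d) * ‖c k - seriesCoeff h₀ k‖ ^ 2 := by
        rw [Finset.mul_sum]
        exact Finset.sum_congr rfl fun k _ => by ring
    _ ≤ ((2 * π) ^ d) ^ 2 * (η / (2 * π) ^ d) ^ 2 := by gcongr; exact hclose F
    _ = η ^ 2 := by field_simp

lemma tendsto_hnormR_realSeries_sub (hd : d ≤ 3) {C : ℝ → Freq d → ℂ}
    (hdecay : ∀ t, 0 < t → RapidDecay (C t)) (hsymm : ∀ t, 0 < t → ConjSymm (C t))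
    (hclose : ∀ ε, 0 < ε → ∀ᶠ t in nhdsWithin 0 (Ioi 0), ∀ F : Finset (Freq d),
      ∑ k ∈ F, (1 + freqNorm k ^ d) * ‖C t k - seriesCoeff h₀ k‖ ^ 2 ≤ ε) :
    Tendsto (fun t => hnormR fun x => realSeries (C t) x - h₀ x)
      (nhdsWithin 0 (Ioi 0)) (nhds 0) := by
  rw [Metric.tendsto_nhds]
  intro η hη
  filter_upwards [hclose ((η / 2 / (2 * π) ^ d) ^ 2) (by positivity), self_mem_nhdsWithin]
    with t htclose ht
  rw [Real.dist_0_eq_abs, abs_of_nonneg (hnormR_nonneg _)]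
  exact ((hdecay t ht).hnormR_realSeries_sub_le hd (hsymm t ht) (half_pos hη).le
    htclose).trans_lt (half_lt_self hη)

end Attainment

/-- Global wellposedness for `d ≤ 3`, Corollary 1.3: for mean-zero
initial data `h₀ ∈ H^{d/2}(𝕋^d)` with `d ∈ {1,2,3}`, there is a global-in-time solution of
`∂_t h = ∇·((|∇h|²−1)∇h) − νΔ²h` which is `C^∞` for every `t > 0`, attains the data in
`H^{d/2}` as `t → 0⁺`, and has mean zero for every `t > 0`. -/
theorem stmt3 (d : ℕ) (hd : d = 1 ∨ d = 2 ∨ d = 3) (ν : ℝ) (hν : 0 < ν)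
    (h₀ : Ed d → ℝ) (hper : PeriodicSpace h₀)
    (hmean : (∫ x in Qd d, h₀ x) = 0)
    (hsob : Summable fun k : Fin d → ℤ => sobWeight k * ‖fcoefR h₀ k‖ ^ 2) :
    ∃ h : ℝ → Ed d → ℝ,
      (∀ t : ℝ, 0 < t → PeriodicSpace (h t)) ∧
      (∀ t : ℝ, 0 < t → ContDiff ℝ (⊤ : ℕ∞) (h t)) ∧
      (∀ (t : ℝ) (x : Ed d), 0 < t →
        HasDerivAt (fun s => h s x)
          (slopeDiv (h t) x - ν * lapl (lapl (h t)) x) t) ∧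
      Tendsto (fun t : ℝ => hnormR fun x => h t x - h₀ x)
        (nhdsWithin 0 (Ioi 0)) (nhds 0) ∧
      (∀ t : ℝ, 0 < t → (∫ x in Qd d, h t x) = 0) := by
  have hd₁ : 1 ≤ d := by omega
  have hd₃ : d ≤ 3 := by omega
  have hcoeff₀ : seriesCoeff h₀ 0 = 0 := by simp [seriesCoeff, fcoefR_zero, hmean]
  obtain ⟨C, hC, hclose⟩ := exists_solution_of_coeff hd₁ hd₃ hν (conjSymm_seriesCoeff h₀) hcoeff₀
    (summable_sobolev_seriesCoeff hsob)
  have hdecay (t : ℝ) (ht : 0 < t) : RapidDecay (C t) := (hC t ht).1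
  have hsymm (t : ℝ) (ht : 0 < t) : ConjSymm (C t) := (hC t ht).2.1
  exact ⟨fun t => realSeries (C t), fun t _ => periodicSpace_realSeries (C t),
    fun t ht => (hdecay t ht).contDiff_realSeries hd₃, fun t x ht => (hC t ht).2.2 x,
    tendsto_hnormR_realSeries_sub hd₃ hdecay hsymm hclose,
    fun t ht => (hdecay t ht).integral_realSeries hd₃ (hsymm t ht)⟩
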